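/- arXiv:math-ph/0511024 — 2 statements merged into one kernel-verified Lean document; each statement's English description precedes it below -/
import Mathlib

section
/- Let N ≥ 1 and p, q ≥ 1 be integers, and let p', q' ≥ 0 be integers with p' ≤ p + N and q' ≤ q + N. Let ψ_1, …, ψ_{p+q} be complex numbers with e^{iψ_1}, …, e^{iψ_{p+q}} pairwise distinct, and let φ_1, …, φ_{p'+q'} be complex numbers with Re φ_{j'} < 0 for 1 ≤ j' ≤ p' and Re φ_{l'} > 0 for p'+1 ≤ l' ≤ p'+q'. Then ∫_{U(N)} [∏_{j=1}^{p} det(1_N − e^{iψ_j} u) · ∏_{l=p+1}^{p+q} det(1_N − e^{−iψ_l} ū)] / [∏_{j'=1}^{p'} det(1_N − e^{φ_{j'}} u) · ∏_{l'=p'+1}^{p'+q'} det(1_N − e^{−φ_{l'}} ū)] du = (1/(p!·q!)) · ∑_{w ∈ S_{p+q}} ∏_{k=p+1}^{p+q} e^{N·i(ψ_{w(k)} − ψ_k)} · [∏_{j'=1}^{p'} ∏_{l=p+1}^{p+q} (1 − e^{φ_{j'} − iψ_{w(l)}}) · ∏_{j=1}^{p} ∏_{l'=p'+1}^{p'+q'}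 (1 − e^{iψ_{w(j)} − φ_{l'}})] / [∏_{j=1}^{p} ∏_{l=p+1}^{p+q} (1 − e^{iψ_{w(j)} − iψ_{w(l)}}) · ∏_{j'=1}^{p'} ∏_{l'=p'+1}^{p'+q'} (1 − e^{φ_{j'} − φ_{l'}})]. -/
open MeasureTheory Matrix

noncomputable instance (N : ℕ) : MeasurableSpace (Matrix.unitaryGroup (Fin N) ℂ) := borel _
instance (N : ℕ) : BorelSpace (Matrix.unitaryGroup (Fin N) ℂ) := ⟨rfl⟩

lemma gauss_one (c : ℂ) (hc : 0 < c.re) :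
    ∫ z : ℂ, Complex.exp (-c * (‖z‖ : ℂ) ^ 2) = Real.pi / c := by
  rw [GaussianFourier.integral_cexp_neg_mul_sq_norm hc]
  simp

lemma gauss_diag {N : ℕ} (c : Fin N → ℂ) (hc : ∀ k, 0 < (c k).re) :
    ∫ y : Fin N → ℂ, Complex.exp (-∑ k, c k * (‖y k‖ : ℂ) ^ 2) = ∏ k, (Real.pi / c k : ℂ) := by
  simp_rw [← gauss_one _ (hc _)]
  rw [← integral_fintype_prod_volume_eq_prod]
  congr 1; ext y
  rw [← Complex.exp_sum]
  simp

lemma star_dot_diag {N : ℕ} (c : Fin N → ℂ) (y : Fin N → ℂ) :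
    star y ⬝ᵥ (diagonal c *ᵥ y) = ∑ k, c k * (‖y k‖ : ℂ) ^ 2 := by
  simp only [dotProduct, mulVec_diagonal, Pi.star_apply]
  refine Finset.sum_congr rfl fun k _ => ?_
  rw [← Complex.mul_conj' (y k)]
  simp only [RCLike.star_def]; ring

lemma gauss_S {N : ℕ} (c : Fin N → ℂ) (hc : ∀ k, 0 < (c k).re)
    (S : Matrix (Fin N) (Fin N) ℂ) (hS : S.det ≠ 0) :
    ∫ x : Fin N → ℂ, Complex.exp (-(star x ⬝ᵥ ((Sᴴ * diagonal c * S) *ᵥ x)))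
      = Real.pi ^ N / (Sᴴ * diagonal c * S).det := by
  set f : (Fin N → ℂ) →ₗ[ℝ] (Fin N → ℂ) := (Matrix.toLin' S).restrictScalars ℝ with hf
  have hdet : LinearMap.det f = Complex.normSq S.det := by
    rw [hf, LinearMap.det_restrictScalars, Algebra.norm_complex_apply, LinearMap.det_toLin']
  have hpos : 0 < Complex.normSq S.det := Complex.normSq_pos.2 hS
  have hd0 : LinearMap.det f ≠ 0 := by rw [hdet]; exact hpos.ne'
  have hmap := Measure.map_linearMap_addHaar_eq_smul_addHaar (volume : Measure (Fin N → ℂ)) hd0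
  have h1 : ∀ x : Fin N → ℂ, star x ⬝ᵥ ((Sᴴ * diagonal c * S) *ᵥ x)
      = ∑ k, c k * (‖(f x) k‖ : ℂ) ^ 2 := by
    intro x
    rw [← star_dot_diag]
    simp only [hf, LinearMap.coe_restrictScalars, Matrix.toLin'_apply]
    rw [star_mulVec, ← dotProduct_mulVec, mulVec_mulVec, mulVec_mulVec, Matrix.mul_assoc]
  simp_rw [h1]
  have h2 : ∫ y, Complex.exp (-∑ k, c k * (‖y k‖ : ℂ) ^ 2) ∂(Measure.map f volume)
      = ∫ x : Fin N → ℂ, Complex.exp (-∑ k, c k * (‖(f x) k‖ : ℂ) ^ 2) := by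
    have hfc : Continuous f := f.continuous_of_finiteDimensional
    rw [integral_map hfc.measurable.aemeasurable]
    exact Continuous.aestronglyMeasurable (by fun_prop)
  rw [← h2, hmap, integral_smul_measure, gauss_diag c hc, hdet, Finset.prod_div_distrib]
  simp only [Finset.prod_const, Finset.card_univ, Fintype.card_fin, det_mul, det_conjTranspose,
    det_diagonal, abs_inv, abs_of_pos hpos]
  rw [ENNReal.toReal_ofReal (by positivity)]
  have : (star S.det) * S.det = (Complex.normSq S.det : ℂ) := by
    rw [Complex.normSq_eq_conj_mul_self]; rfl
  have hc0 : ∏ k, c k ≠ 0 := Finset.prod_ne_zero_iff.2 fun k _ h => by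
    have := hc k; rw [h] at this; simp at this
  rw [show star S.det * (∏ k, c k) * S.det = (Complex.normSq S.det : ℂ) * ∏ k, c k by
    rw [← this]; ring]
  rw [Complex.real_smul]
  have : (Complex.normSq S.det : ℂ) ≠ 0 := by exact_mod_cast hpos.ne'
  push_cast
  field_simp

lemma herm_diag {N : ℕ} (L : Matrix (Fin N) (Fin N) ℂ) (hL : L.IsHermitian) :
    ∃ (g : Matrix (Fin N) (Fin N) ℂ), g * gᴴ = 1 ∧ gᴴ * g = 1 ∧
      L = g * diagonal (fun i => (hL.eigenvalues i : ℂ)) * gᴴ := by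
  refine ⟨hL.eigenvectorUnitary, ?_, ?_, ?_⟩
  · exact Unitary.mul_star_self_of_mem hL.eigenvectorUnitary.2
  · exact Unitary.star_mul_self_of_mem hL.eigenvectorUnitary.2
  · have := hL.spectral_theorem
    rw [Unitary.conjStarAlgAut_apply] at this
    exact this

open scoped ComplexOrder in
lemma simul_diag {N : ℕ} (K L : Matrix (Fin N) (Fin N) ℂ) (hK : K.PosDef) (hL : L.IsHermitian) :
    ∃ (S : Matrix (Fin N) (Fin N) ℂ) (l : Fin N → ℝ), S.det ≠ 0 ∧ K = Sᴴ * S ∧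
      L = Sᴴ * diagonal (fun i => (l i : ℂ)) * S := by
  obtain ⟨g, hg1, hg2, hKe⟩ := herm_diag K hK.1
  set k := hK.1.eigenvalues
  have hk : ∀ i, 0 < k i := hK.eigenvalues_pos
  set R : Matrix (Fin N) (Fin N) ℂ := diagonal (fun i => ((Real.sqrt (k i) : ℝ) : ℂ)) * gᴴ
  set R' : Matrix (Fin N) (Fin N) ℂ := g * diagonal (fun i => ((Real.sqrt (k i) : ℝ) : ℂ)⁻¹)
  have hs : ∀ i, ((Real.sqrt (k i) : ℝ) : ℂ) ≠ 0 := fun i => by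
    exact_mod_cast (Real.sqrt_pos.2 (hk i)).ne'
  have hRR' : R' * R = 1 := by
    simp only [R, R']
    rw [Matrix.mul_assoc, ← Matrix.mul_assoc (diagonal _), diagonal_mul_diagonal]
    simp [hs, hg1]
  have hR : Rᴴ * R = K := by
    rw [hKe]
    simp only [R, conjTranspose_mul, conjTranspose_conjTranspose, diagonal_conjTranspose]
    rw [Matrix.mul_assoc, ← Matrix.mul_assoc (diagonal _), diagonal_mul_diagonal, ← Matrix.mul_assoc]
    congr 3
    ext i
    simp only [Pi.star_apply, RCLike.star_def, Complex.conj_ofReal]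
    rw [← Complex.ofReal_mul, Real.mul_self_sqrt (hk i).le]
  have hL' : (R'ᴴ * L * R').IsHermitian := by
    have := Matrix.isHermitian_conjTranspose_mul_mul R' hL
    exact this
  obtain ⟨h, hh1, hh2, hLe⟩ := herm_diag _ hL'
  refine ⟨hᴴ * R, hL'.eigenvalues, ?_, ?_, ?_⟩
  · intro h0
    rw [det_mul] at h0
    have e1 := congrArg det hh1
    have e2 := congrArg det hRR'
    rw [det_mul, det_one] at e1 e2
    rcases mul_eq_zero.1 h0 with h0 | h0
    · rw [h0] at e1; simp at e1
    · rw [h0] at e2; simp at e2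
  · rw [conjTranspose_mul, conjTranspose_conjTranspose, Matrix.mul_assoc, ← Matrix.mul_assoc h, hh1,
      Matrix.one_mul, hR]
  · have e : Rᴴ * R'ᴴ = 1 := by rw [← conjTranspose_mul, hRR', conjTranspose_one]
    have : L = Rᴴ * (R'ᴴ * L * R') * R := by
      calc L = (Rᴴ * R'ᴴ) * L * (R' * R) := by rw [e, hRR']; simp
        _ = _ := by simp only [Matrix.mul_assoc]
    conv_lhs => rw [this, hLe]
    simp only [conjTranspose_mul, conjTranspose_conjTranspose, Matrix.mul_assoc]

open scoped ComplexOrder in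
lemma gauss_KL {N : ℕ} (K L : Matrix (Fin N) (Fin N) ℂ) (hK : K.PosDef) (hL : L.IsHermitian) :
    ∫ x : Fin N → ℂ, Complex.exp (-(star x ⬝ᵥ ((K + Complex.I • L) *ᵥ x)))
      = Real.pi ^ N / (K + Complex.I • L).det := by
  obtain ⟨S, l, hS, h1, h2⟩ := simul_diag K L hK hL
  have : K + Complex.I • L = Sᴴ * diagonal (fun i => 1 + Complex.I * (l i : ℂ)) * S := by
    rw [← diagonal_add, Matrix.mul_add, Matrix.add_mul]
    rw [show (diagonal fun _ => (1:ℂ) : Matrix (Fin N) (Fin N) ℂ) = 1 from diagonal_one]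
    rw [Matrix.mul_one, ← h1]
    congr 1
    rw [show (diagonal fun i => Complex.I * (l i : ℂ) : Matrix (Fin N) (Fin N) ℂ)
      = Complex.I • diagonal (fun i => (l i : ℂ)) by rw [← diagonal_smul]; rfl]
    rw [Matrix.mul_smul, Matrix.smul_mul, ← h2]
  rw [this]
  exact gauss_S _ (by simp) S hS

lemma star_dot_self {N : ℕ} (x : Fin N → ℂ) :
    star x ⬝ᵥ x = ((∑ k, ‖x k‖ ^ 2 : ℝ) : ℂ) := by
  have := star_dot_diag (fun _ => 1) x
  rw [diagonal_one, one_mulVec] at this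
  rw [this]; push_cast; simp

lemma sqn_unitary {N : ℕ} (u : Matrix.unitaryGroup (Fin N) ℂ) (x : Fin N → ℂ) :
    ∑ k, ‖((u : Matrix (Fin N) (Fin N) ℂ) *ᵥ x) k‖ ^ 2 = ∑ k, ‖x k‖ ^ 2 := by
  have h : star ((u : Matrix (Fin N) (Fin N) ℂ) *ᵥ x) ⬝ᵥ ((u : Matrix (Fin N) (Fin N) ℂ) *ᵥ x)
      = star x ⬝ᵥ x := by
    have hu : (u : Matrix (Fin N) (Fin N) ℂ)ᴴ * (u : Matrix (Fin N) (Fin N) ℂ) = 1 :=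
      Unitary.star_mul_self_of_mem u.2
    rw [star_mulVec, ← dotProduct_mulVec, mulVec_mulVec, hu, one_mulVec]
  rw [star_dot_self, star_dot_self] at h
  exact_mod_cast h

lemma quad_le {N : ℕ} (u : Matrix.unitaryGroup (Fin N) ℂ) (x : Fin N → ℂ) :
    ‖star x ⬝ᵥ ((u : Matrix (Fin N) (Fin N) ℂ) *ᵥ x)‖ ≤ ∑ k, ‖x k‖ ^ 2 := by
  have h := sqn_unitary u x
  set y := (u : Matrix (Fin N) (Fin N) ℂ) *ᵥ x
  calc ‖star x ⬝ᵥ y‖ ≤ ∑ k, ‖star x k * y k‖ := norm_sum_le _ _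
    _ ≤ ∑ k, (‖x k‖ ^ 2 + ‖y k‖ ^ 2) / 2 := by
        refine Finset.sum_le_sum fun k _ => ?_
        rw [norm_mul, Pi.star_apply, norm_star]
        nlinarith [sq_nonneg (‖x k‖ - ‖y k‖)]
    _ = ∑ k, ‖x k‖ ^ 2 := by
        rw [← Finset.sum_div, Finset.sum_add_distrib, h]; ring

open scoped ComplexOrder in
lemma gauss_unitary {N : ℕ} (u : Matrix.unitaryGroup (Fin N) ℂ) (a : ℂ) (ha : ‖a‖ < 1) :
    ∫ x : Fin N → ℂ, Complex.exp (-((∑ k, ‖x k‖ ^ 2 : ℝ) : ℂ) +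
        a * (star x ⬝ᵥ ((u : Matrix (Fin N) (Fin N) ℂ) *ᵥ x)))
      = Real.pi ^ N / (1 - a • (u : Matrix (Fin N) (Fin N) ℂ)).det := by
  set H : Matrix (Fin N) (Fin N) ℂ := 1 - a • (u : Matrix (Fin N) (Fin N) ℂ) with hH
  have hq : ∀ x : Fin N → ℂ, star x ⬝ᵥ (H *ᵥ x) = ((∑ k, ‖x k‖ ^ 2 : ℝ) : ℂ) -
        a * (star x ⬝ᵥ ((u : Matrix (Fin N) (Fin N) ℂ) *ᵥ x)) := by
    intro x
    rw [hH, sub_mulVec, one_mulVec, smul_mulVec, dotProduct_sub, dotProduct_smul, star_dot_self,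
      smul_eq_mul]
  have hconj : ∀ x : Fin N → ℂ, star x ⬝ᵥ (Hᴴ *ᵥ x) = star (star x ⬝ᵥ (H *ᵥ x)) := by
    intro x
    rw [star_dotProduct, star_mulVec, conjTranspose_conjTranspose, ← dotProduct_mulVec]
  set K : Matrix (Fin N) (Fin N) ℂ := (1 / 2 : ℂ) • (H + Hᴴ) with hKdef
  set L : Matrix (Fin N) (Fin N) ℂ := (-Complex.I / 2 : ℂ) • (H - Hᴴ) with hLdef
  have hKL : K + Complex.I • L = H := by
    ext i j
    simp only [hKdef, hLdef, Matrix.add_apply, Matrix.smul_apply, Matrix.sub_apply, smul_eq_mul]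
    linear_combination (-1/2 : ℂ) * (H i j - Hᴴ i j) * Complex.I_sq
  have hL : L.IsHermitian := by
    ext i j
    simp only [hLdef, conjTranspose_apply, Matrix.smul_apply, Matrix.sub_apply, smul_eq_mul,
      star_mul', star_sub, RCLike.star_def]
    simp [show (starRingEnd ℂ) 2 = 2 from Complex.conj_ofNat 2]
    ring
  have hKh : K.IsHermitian := by
    ext i j
    simp only [hKdef, conjTranspose_apply, Matrix.smul_apply, Matrix.add_apply, smul_eq_mul,
      star_mul', star_add, RCLike.star_def]
    simp [show (starRingEnd ℂ) 2 = 2 from Complex.conj_ofNat 2]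
    ring
  have hK : K.PosDef := by
    refine Matrix.PosDef.of_dotProduct_mulVec_pos hKh fun x hx => ?_
    have e : star x ⬝ᵥ (K *ᵥ x) = (((star x ⬝ᵥ (H *ᵥ x)).re : ℝ) : ℂ) := by
      rw [hKdef, smul_mulVec, add_mulVec, dotProduct_smul, dotProduct_add, hconj, smul_eq_mul,
        RCLike.star_def, Complex.re_eq_add_conj]
      ring
    rw [e]
    have hx2 : 0 < ∑ k, ‖x k‖ ^ 2 := by
      obtain ⟨i, hi⟩ := Function.ne_iff.1 hx
      exact Finset.sum_pos' (fun _ _ => by positivity)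
        ⟨i, Finset.mem_univ _, by have : x i ≠ 0 := hi
                                  positivity⟩
    have : 0 < (star x ⬝ᵥ (H *ᵥ x)).re := by
      rw [hq, Complex.sub_re, Complex.ofReal_re]
      have h1 := (Complex.re_le_norm (a * (star x ⬝ᵥ ((u : Matrix (Fin N) (Fin N) ℂ) *ᵥ x))))
      rw [norm_mul] at h1
      nlinarith [quad_le u x, norm_nonneg a]
    exact_mod_cast this
  have := gauss_KL K L hK hL
  rw [hKL] at this
  rw [← this]
  congr 1; ext x
  rw [hq]; congr 1; ring


instance unitary_secondCountable (N : ℕ) : SecondCountableTopology (Matrix.unitaryGroup (Fin N) ℂ) := by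
  have : SecondCountableTopology (Matrix (Fin N) (Fin N) ℂ) :=
    inferInstanceAs (SecondCountableTopology (Fin N → Fin N → ℂ))
  exact Topology.IsInducing.secondCountableTopology
    (f := fun u : Matrix.unitaryGroup (Fin N) ℂ => (u : Matrix (Fin N) (Fin N) ℂ)) ⟨rfl⟩

instance unitary_compact (N : ℕ) : CompactSpace (Matrix.unitaryGroup (Fin N) ℂ) := by
  have hK : IsCompact (Set.pi Set.univ fun _ : Fin N => Set.pi Set.univ fun _ : Fin N =>
      Metric.closedBall (0 : ℂ) 1) :=
    isCompact_univ_pi fun _ => isCompact_univ_pi fun _ => isCompact_closedBall _ _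
  have hc : IsClosed {x : Matrix (Fin N) (Fin N) ℂ | x ∈ Matrix.unitaryGroup (Fin N) ℂ} := by
    have : {x : Matrix (Fin N) (Fin N) ℂ | x ∈ Matrix.unitaryGroup (Fin N) ℂ}
        = {x | x * star x = 1} := by
      ext x; exact Matrix.mem_unitaryGroup_iff
    rw [this]
    exact isClosed_eq (by fun_prop) continuous_const
  have : IsCompact {x : Matrix (Fin N) (Fin N) ℂ | x ∈ Matrix.unitaryGroup (Fin N) ℂ} := by
    refine IsCompact.of_isClosed_subset hK hc ?_
    intro x hx i _ j _
    simpa using entry_norm_bound_of_unitary hx i j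
  exact isCompact_iff_compactSpace.1 this

/-- `det (1 - x u)`. -/
noncomputable def dD {N : ℕ} (x : ℂ) (u : Matrix.unitaryGroup (Fin N) ℂ) : ℂ :=
  Matrix.det (1 - x • (u : Matrix (Fin N) (Fin N) ℂ))

/-- `det (1 - y ū)`. -/
noncomputable def dB {N : ℕ} (y : ℂ) (u : Matrix.unitaryGroup (Fin N) ℂ) : ℂ :=
  Matrix.det (1 - y • ((u : Matrix (Fin N) (Fin N) ℂ).map (starRingEnd ℂ)))

lemma dB_eq {N : ℕ} (y : ℂ) (u : Matrix.unitaryGroup (Fin N) ℂ) :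
    dB y u = Matrix.det (1 - y • (u : Matrix (Fin N) (Fin N) ℂ)ᴴ) := by
  rw [dB, ← det_transpose]
  congr 1
  ext i j
  simp [Matrix.one_apply, eq_comm]

@[fun_prop]
lemma continuous_dD {N : ℕ} {X : Type*} [TopologicalSpace X] {f : X → ℂ}
    {g : X → Matrix.unitaryGroup (Fin N) ℂ}
    (hf : Continuous f) (hg : Continuous g) : Continuous fun t => dD (f t) (g t) := by
  unfold dD
  have : Continuous fun t => (g t : Matrix (Fin N) (Fin N) ℂ) := continuous_subtype_val.comp hg
  fun_prop

@[fun_prop]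
lemma continuous_dB {N : ℕ} {X : Type*} [TopologicalSpace X] {f : X → ℂ}
    {g : X → Matrix.unitaryGroup (Fin N) ℂ}
    (hf : Continuous f) (hg : Continuous g) : Continuous fun t => dB (f t) (g t) := by
  simp_rw [dB_eq]
  have : Continuous fun t => (g t : Matrix (Fin N) (Fin N) ℂ) := continuous_subtype_val.comp hg
  fun_prop

section norm
open scoped Matrix.Norms.L2Operator

lemma det_ne_of_norm {N : ℕ} (M : Matrix (Fin N) (Fin N) ℂ) (hM : ‖M‖ ≤ 1) (y : ℂ) (hy : ‖y‖ < 1) :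
    Matrix.det (1 - y • M) ≠ 0 := by
  have h : IsUnit (1 - y • M) := by
    apply isUnit_one_sub_of_norm_lt_one
    rw [norm_smul]
    nlinarith [norm_nonneg y, norm_nonneg M]
  exact ((Matrix.isUnit_iff_isUnit_det _).1 h).ne_zero

lemma norm_unitary_le {N : ℕ} (u : Matrix.unitaryGroup (Fin N) ℂ) :
    ‖(u : Matrix (Fin N) (Fin N) ℂ)‖ ≤ 1 := by
  rcases subsingleton_or_nontrivial (Matrix (Fin N) (Fin N) ℂ) with h | h
  · rw [Subsingleton.elim (u : Matrix (Fin N) (Fin N) ℂ) 0]; simp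
  · exact (CStarRing.norm_of_mem_unitary u.2).le

end norm

lemma dD_ne {N : ℕ} {y : ℂ} (hy : ‖y‖ < 1) (u : Matrix.unitaryGroup (Fin N) ℂ) : dD y u ≠ 0 :=
  det_ne_of_norm _ (norm_unitary_le u) y hy

lemma dB_ne {N : ℕ} {y : ℂ} (hy : ‖y‖ < 1) (u : Matrix.unitaryGroup (Fin N) ℂ) : dB y u ≠ 0 := by
  rw [dB_eq]
  exact det_ne_of_norm _ (norm_unitary_le (star u)) y hy

lemma det_star_mul {N : ℕ} (u : Matrix.unitaryGroup (Fin N) ℂ) :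
    star (u : Matrix (Fin N) (Fin N) ℂ).det * (u : Matrix (Fin N) (Fin N) ℂ).det = 1 := by
  have hu : (u : Matrix (Fin N) (Fin N) ℂ)ᴴ * (u : Matrix (Fin N) (Fin N) ℂ) = 1 :=
    Unitary.star_mul_self_of_mem u.2
  rw [← det_conjTranspose, ← det_mul, hu, det_one]

lemma dB_dD {N : ℕ} {y : ℂ} (hy : y ≠ 0) (u : Matrix.unitaryGroup (Fin N) ℂ) :
    dB y u = (-y) ^ N * star (u : Matrix (Fin N) (Fin N) ℂ).det * dD y⁻¹ u := by
  have hu : (u : Matrix (Fin N) (Fin N) ℂ)ᴴ * (u : Matrix (Fin N) (Fin N) ℂ) = 1 :=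
    Unitary.star_mul_self_of_mem u.2
  have : (1 : Matrix (Fin N) (Fin N) ℂ) - y • (u : Matrix (Fin N) (Fin N) ℂ)ᴴ
      = (-y) • ((u : Matrix (Fin N) (Fin N) ℂ)ᴴ * (1 - y⁻¹ • (u : Matrix (Fin N) (Fin N) ℂ))) := by
    rw [Matrix.mul_sub, Matrix.mul_smul, hu, smul_sub, smul_smul, Matrix.mul_one]
    rw [show -y * y⁻¹ = -1 by field_simp]
    simp only [neg_smul, one_smul]; abel
  rw [dB_eq, this, det_smul, det_mul, det_conjTranspose, dD]
  simp [mul_assoc]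

lemma dD_dB {N : ℕ} {x : ℂ} (hx : x ≠ 0) (u : Matrix.unitaryGroup (Fin N) ℂ) :
    dD x u = (-x) ^ N * (u : Matrix (Fin N) (Fin N) ℂ).det * dB x⁻¹ u := by
  rw [dB_dD (inv_ne_zero hx), inv_inv]
  have h := det_star_mul u
  have h2 : (-x) ^ N * (-x⁻¹) ^ N = 1 := by
    rw [← mul_pow]; field_simp; simp
  linear_combination (-dD x u) * h + (-dD x u) * (star (u : Matrix (Fin N) (Fin N) ℂ).det * (u : Matrix (Fin N) (Fin N) ℂ).det) * h2

/-- Mean value lemma. -/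
lemma mean_value {N : ℕ} (μ : Measure (Matrix.unitaryGroup (Fin N) ℂ)) [IsProbabilityMeasure μ]
    (Φ : ℂ → Matrix.unitaryGroup (Fin N) ℂ → ℂ)
    (hc : ContinuousOn (Function.uncurry Φ) (Metric.closedBall 0 1 ×ˢ Set.univ))
    (hd : ∀ u, DifferentiableOn ℂ (fun z => Φ z u) (Metric.ball 0 1)) (J : ℂ)
    (hJ : ∀ z : ℂ, ‖z‖ = 1 → ∫ u, Φ z u ∂μ = J) : J = ∫ u, Φ 0 u ∂μ := by
  have h1 : Real.circleAverage (fun z => ∫ u, Φ z u ∂μ) 0 1 = J :=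
    Real.circleAverage_const_on_circle fun z hz => hJ z (by simpa using hz)
  have h2 : ∀ u, Real.circleAverage (fun z => Φ z u) 0 1 = Φ 0 u := by
    intro u
    apply DiffContOnCl.circleAverage
    refine ⟨by simpa using hd u, ?_⟩
    rw [abs_one, closure_ball _ one_ne_zero]
    exact hc.comp (f := fun z => (z, u)) (by fun_prop) (fun z hz => ⟨hz, trivial⟩)
  have hcont : Continuous fun p : ℝ × Matrix.unitaryGroup (Fin N) ℂ => Φ (circleMap 0 1 p.1) p.2 := by
    refine hc.comp_continuous (f := fun p : ℝ × Matrix.unitaryGroup (Fin N) ℂ =>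
      (circleMap 0 1 p.1, p.2)) (by fun_prop) fun p => ⟨?_, trivial⟩
    simp
  rw [← h1]
  simp_rw [← h2]
  simp only [Real.circleAverage_def]
  rw [integral_smul]
  congr 1
  simp_rw [intervalIntegral.integral_of_le Real.two_pi_pos.le]
  rw [integral_integral_swap]
  obtain ⟨C, hC⟩ := ((isCompact_closedBall (0 : ℂ) 1).prod (isCompact_univ
    (X := Matrix.unitaryGroup (Fin N) ℂ))).exists_bound_of_continuousOn hc
  refine Integrable.of_bound hcont.aestronglyMeasurable C (ae_of_all _ fun p => ?_)
  exact hC (circleMap 0 1 p.1, p.2) ⟨by simp, trivial⟩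

lemma int_cont {N : ℕ} (μ : Measure (Matrix.unitaryGroup (Fin N) ℂ)) [IsProbabilityMeasure μ]
    {f : Matrix.unitaryGroup (Fin N) ℂ → ℂ} (hf : Continuous f) : Integrable f μ := by
  obtain ⟨C, hC⟩ := (isCompact_univ
    (X := Matrix.unitaryGroup (Fin N) ℂ)).exists_bound_of_continuousOn hf.continuousOn
  exact Integrable.of_bound hf.aestronglyMeasurable C (ae_of_all _ fun p => hC p trivial)


lemma differentiable_det {N : ℕ} {M : ℂ → Matrix (Fin N) (Fin N) ℂ}
    (h : ∀ i j, Differentiable ℂ fun z => M z i j) : Differentiable ℂ fun z => (M z).det := by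
  simp_rw [det_apply]
  refine Differentiable.fun_sum fun σ _ => ?_
  refine Differentiable.const_smul ?_ _
  exact Differentiable.fun_finsetProd fun i _ => h _ _

lemma exp_fA {N : ℕ} (μ : Measure (Matrix.unitaryGroup (Fin N) ℂ)) [μ.IsHaarMeasure]
    [IsProbabilityMeasure μ] (A : Finset ℂ) (hA : ∀ a ∈ A, ‖a‖ < 1) :
    ∫ u, ∏ a ∈ A, (dD a u)⁻¹ ∂μ = 1 := by
  have hne : ∀ z : ℂ, ‖z‖ ≤ 1 → ∀ a ∈ A, ∀ u : Matrix.unitaryGroup (Fin N) ℂ, dD (z * a) u ≠ 0 := by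
    intro z hz a ha u
    apply dD_ne
    rw [norm_mul]
    nlinarith [hA a ha, norm_nonneg z, norm_nonneg a]
  have := mean_value μ (fun z u => ∏ a ∈ A, (dD (z * a) u)⁻¹) ?_ ?_
    (∫ u, ∏ a ∈ A, (dD a u)⁻¹ ∂μ) ?_
  · rw [this]
    simp [dD]
  · refine continuousOn_finsetProd _ fun a ha => ?_
    refine ContinuousOn.inv₀ ?_ ?_
    · exact Continuous.continuousOn (by fun_prop)
    · rintro ⟨z, u⟩ ⟨hz, -⟩
      exact hne z (by simpa using hz) a ha u
  · intro u
    refine DifferentiableOn.fun_finsetProd fun a ha => ?_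
    refine DifferentiableOn.inv ?_ ?_
    · refine Differentiable.differentiableOn ?_
      unfold dD
      refine differentiable_det fun i j => ?_
      simp only [Matrix.sub_apply, Matrix.smul_apply]
      fun_prop
    · intro z hz
      exact hne z (by simpa using (mem_ball_zero_iff.1 hz).le) a ha u
  · intro z hz
    have hz' : star z * z = 1 := by
      rw [RCLike.star_def, Complex.conj_mul', hz]; simp
    let g : Matrix.unitaryGroup (Fin N) ℂ := ⟨z • 1, by
      rw [Matrix.mem_unitaryGroup_iff']
      rw [star_eq_conjTranspose, conjTranspose_smul, conjTranspose_one, smul_mul_smul_comm, hz',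
        one_smul, one_mul]⟩
    rw [← integral_mul_left_eq_self (fun u => ∏ a ∈ A, (dD a u)⁻¹) g]
    congr 1; ext u
    refine Finset.prod_congr rfl fun a _ => ?_
    congr 1
    unfold dD
    congr 2
    simp [g, smul_smul, mul_comm]

/-- rank one deformation of the identity -/
noncomputable def tT {N : ℕ} (w : Fin N → ℂ) (z : ℂ) : Matrix (Fin N) (Fin N) ℂ :=
  1 + (z - 1) • vecMulVec w (star w)

lemma tT_mul {N : ℕ} {w : Fin N → ℂ} (hw : star w ⬝ᵥ w = 1) (z z' : ℂ) :
    tT w z * tT w z' = tT w (z * z') := by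
  unfold tT
  have : vecMulVec w (star w) * vecMulVec w (star w) = vecMulVec w (star w) := by
    rw [vecMulVec_mul_vecMulVec, hw]; simp
  rw [Matrix.add_mul, Matrix.mul_add, Matrix.mul_add, smul_mul_smul_comm, this]
  simp only [Matrix.mul_one, Matrix.one_mul]
  module

lemma tT_conj {N : ℕ} (w : Fin N → ℂ) (z : ℂ) : (tT w z)ᴴ = tT w (star z) := by
  unfold tT
  rw [conjTranspose_add, conjTranspose_smul, conjTranspose_one, conjTranspose_vecMulVec]
  simp

lemma tT_one {N : ℕ} (w : Fin N → ℂ) : tT w 1 = 1 := by simp [tT]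

lemma tT_mem {N : ℕ} {w : Fin N → ℂ} (hw : star w ⬝ᵥ w = 1) {z : ℂ} (hz : ‖z‖ = 1) :
    tT w z ∈ Matrix.unitaryGroup (Fin N) ℂ := by
  rw [Matrix.mem_unitaryGroup_iff', star_eq_conjTranspose, tT_conj, tT_mul hw, RCLike.star_def,
    Complex.conj_mul', hz]
  simp [tT_one]

lemma tT_det {N : ℕ} {w : Fin N → ℂ} (hw : star w ⬝ᵥ w = 1) (z : ℂ) : (tT w z).det = z := by
  unfold tT
  rw [← smul_vecMulVec, vecMulVec_eq Unit, det_one_add_replicateCol_mul_replicateRow]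
  rw [dotProduct_smul, hw]; simp

lemma tT_mulVec {N : ℕ} {w x : Fin N → ℂ} (hx : star w ⬝ᵥ x = 0) (z : ℂ) : tT w z *ᵥ x = x := by
  unfold tT
  rw [add_mulVec, one_mulVec, smul_mulVec, vecMulVec_mulVec, hx]
  simp

section norm
open scoped Matrix.Norms.L2Operator

lemma tT_norm {N : ℕ} {w : Fin N → ℂ} (hw : star w ⬝ᵥ w = 1) {z : ℂ} (hz : ‖z‖ ≤ 1) :
    ‖tT w z‖ ≤ 1 := by
  obtain ⟨c, hc, hzc⟩ : ∃ c : ℂ, ‖c‖ = 1 ∧ z = ‖z‖ * c := by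
    by_cases h : z = 0
    · exact ⟨1, by simp, by simp [h]⟩
    · have : (‖z‖ : ℂ) ≠ 0 := by simpa using h
      refine ⟨z / ‖z‖, ?_, ?_⟩
      · rw [norm_div]; simp [h]
      · field_simp
  set r := ‖z‖ with hr
  have h0 : 0 ≤ r := norm_nonneg z
  have e : tT w z = (((1 + r) / 2 : ℝ) : ℂ) • tT w c + (((1 - r) / 2 : ℝ) : ℂ) • tT w (-c) := by
    rw [hzc]; unfold tT; push_cast; module
  rw [e]
  have h1 := norm_unitary_le ⟨tT w c, tT_mem hw hc⟩
  have h2 := norm_unitary_le ⟨tT w (-c), tT_mem hw (by simpa using hc)⟩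
  simp only at h1 h2
  refine (norm_add_le _ _).trans ?_
  rw [norm_smul, norm_smul, Complex.norm_real, Complex.norm_real, Real.norm_of_nonneg (by linarith),
    Real.norm_of_nonneg (by linarith)]
  nlinarith

lemma tT_det_ne {N : ℕ} {w : Fin N → ℂ} (hw : star w ⬝ᵥ w = 1) {z : ℂ} (hz : ‖z‖ ≤ 1)
    (u : Matrix.unitaryGroup (Fin N) ℂ) {b : ℂ} (hb : ‖b‖ < 1) :
    (1 - b • ((u : Matrix (Fin N) (Fin N) ℂ)ᴴ * tT w z)).det ≠ 0 := by
  apply det_ne_of_norm _ _ _ hb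
  refine (norm_mul_le _ _).trans ?_
  have h1 : ‖(u : Matrix (Fin N) (Fin N) ℂ)ᴴ‖ ≤ 1 := norm_unitary_le (star u)
  nlinarith [tT_norm hw hz, norm_nonneg ((u : Matrix (Fin N) (Fin N) ℂ)ᴴ), norm_nonneg (tT w z)]

end norm

lemma inner_zero {N : ℕ} (μ : Measure (Matrix.unitaryGroup (Fin N) ℂ)) [μ.IsHaarMeasure]
    [IsProbabilityMeasure μ] (B : Finset ℂ) (hB : ∀ b ∈ B, ‖b‖ < 1)
    {ι : Type*} [Fintype ι] (a : ι → ℂ) (X : ι → Fin N → ℂ) (w : Fin N → ℂ)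
    (hw : star w ⬝ᵥ w = 1) (hX : ∀ i, star w ⬝ᵥ X i = 0) :
    ∫ u : Matrix.unitaryGroup (Fin N) ℂ, star (u : Matrix (Fin N) (Fin N) ℂ).det *
      Complex.exp (∑ i, a i * (star (X i) ⬝ᵥ ((u : Matrix (Fin N) (Fin N) ℂ) *ᵥ X i))) *
      ∏ b ∈ B, (dB b u)⁻¹ ∂μ = 0 := by
  set f : Matrix.unitaryGroup (Fin N) ℂ → ℂ := fun u => star (u : Matrix (Fin N) (Fin N) ℂ).det *
      Complex.exp (∑ i, a i * (star (X i) ⬝ᵥ ((u : Matrix (Fin N) (Fin N) ℂ) *ᵥ X i))) *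
      ∏ b ∈ B, (dB b u)⁻¹ with hf
  set e : Matrix.unitaryGroup (Fin N) ℂ → ℂ := fun u => star (u : Matrix (Fin N) (Fin N) ℂ).det *
      Complex.exp (∑ i, a i * (star (X i) ⬝ᵥ ((u : Matrix (Fin N) (Fin N) ℂ) *ᵥ X i))) with he
  have hval : Continuous fun u : Matrix.unitaryGroup (Fin N) ℂ => (u : Matrix (Fin N) (Fin N) ℂ) :=
    continuous_subtype_val
  have hec : Continuous e := by
    have h1 : Continuous fun u : Matrix.unitaryGroup (Fin N) ℂ =>
        (u : Matrix (Fin N) (Fin N) ℂ).det := hval.matrix_det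
    have h2 : ∀ i, Continuous fun u : Matrix.unitaryGroup (Fin N) ℂ =>
        star (X i) ⬝ᵥ ((u : Matrix (Fin N) (Fin N) ℂ) *ᵥ X i) := fun i =>
      Continuous.dotProduct continuous_const (hval.matrix_mulVec continuous_const)
    fun_prop
  have := mean_value μ (fun z u => z * e u *
    ∏ b ∈ B, (1 - b • ((u : Matrix (Fin N) (Fin N) ℂ)ᴴ * tT w z)).det⁻¹) ?_ ?_ (∫ u, f u ∂μ) ?_
  · rw [this]; simp
  · refine ContinuousOn.mul (Continuous.continuousOn (by fun_prop)) ?_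
    refine continuousOn_finsetProd _ fun b hb => ?_
    refine ContinuousOn.inv₀ ?_ ?_
    · refine Continuous.continuousOn (Continuous.matrix_det ?_)
      have h3 : Continuous fun p : ℂ × Matrix.unitaryGroup (Fin N) ℂ =>
          (p.2 : Matrix (Fin N) (Fin N) ℂ) := hval.comp continuous_snd
      unfold tT
      fun_prop
    · rintro ⟨z, u⟩ ⟨hz, -⟩
      exact tT_det_ne hw (by simpa using hz) u (hB b hb)
  · intro u
    refine DifferentiableOn.fun_mul (Differentiable.differentiableOn (by fun_prop)) ?_
    refine DifferentiableOn.fun_finsetProd fun b hb => ?_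
    refine DifferentiableOn.inv ?_ ?_
    · refine Differentiable.differentiableOn (differentiable_det fun i j => ?_)
      simp only [Matrix.sub_apply, Matrix.smul_apply, Matrix.mul_apply, tT, Matrix.add_apply]
      fun_prop
    · intro z hz
      exact tT_det_ne hw (by simpa using (mem_ball_zero_iff.1 hz).le) u (hB b hb)
  · intro z hz
    have hz' : ‖star z‖ = 1 := by simpa using hz
    let g : Matrix.unitaryGroup (Fin N) ℂ := ⟨tT w (star z), tT_mem hw hz'⟩
    rw [← integral_mul_left_eq_self f g]
    congr 1; ext u
    have hg : ((g * u : Matrix.unitaryGroup (Fin N) ℂ) : Matrix (Fin N) (Fin N) ℂ)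
      = tT w (star z) * (u : Matrix (Fin N) (Fin N) ℂ) := rfl
    simp only [hf, he, dB_eq, hg, det_mul, tT_det hw, conjTranspose_mul, tT_conj, star_star,
      star_mul', ← mulVec_mulVec]
    have hh : ∀ i, star (X i) ⬝ᵥ (tT w (star z) *ᵥ ((u : Matrix (Fin N) (Fin N) ℂ) *ᵥ X i))
        = star (X i) ⬝ᵥ ((u : Matrix (Fin N) (Fin N) ℂ) *ᵥ X i) := by
      intro i
      rw [dotProduct_mulVec, ← tT_conj, ← star_mulVec, tT_mulVec (hX i)]
    simp only [hh]
    ring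

lemma exists_perp {N : ℕ} {ι : Type*} [Fintype ι] (hι : Fintype.card ι < N) (X : ι → Fin N → ℂ) :
    ∃ w : Fin N → ℂ, star w ⬝ᵥ w = 1 ∧ ∀ i, star w ⬝ᵥ X i = 0 := by
  let f : (Fin N → ℂ) →ₗ[ℂ] (ι → ℂ) := Matrix.toLin' (Matrix.of fun i k => star (X i k))
  have hk : LinearMap.ker f ≠ ⊥ := LinearMap.ker_ne_bot_of_finrank_lt (by simpa using hι)
  obtain ⟨w, hw, hw0⟩ := Submodule.exists_mem_ne_zero_of_ne_bot hk
  have hp : ∀ i, star w ⬝ᵥ X i = 0 := by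
    intro i
    have h1 := congrFun (LinearMap.mem_ker.1 hw) i
    have h2 := congrArg star h1
    simp only [f, Matrix.toLin'_apply, mulVec, dotProduct, Matrix.of_apply, star_sum, star_mul',
      star_star, Pi.zero_apply, star_zero] at h2
    rw [← h2]
    simp [dotProduct, mul_comm]
  have hs : 0 < ∑ k, ‖w k‖ ^ 2 := by
    obtain ⟨i, hi⟩ := Function.ne_iff.1 hw0
    exact Finset.sum_pos' (fun _ _ => by positivity)
      ⟨i, Finset.mem_univ _, by have : w i ≠ 0 := hi
                                positivity⟩
  refine ⟨(((Real.sqrt (∑ k, ‖w k‖ ^ 2))⁻¹ : ℝ) : ℂ) • w, ?_, fun i => ?_⟩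
  · rw [star_smul, smul_dotProduct, dotProduct_smul, star_dot_self]
    simp only [RCLike.star_def, Complex.conj_ofReal, smul_eq_mul]
    rw [← Complex.ofReal_mul, ← Complex.ofReal_mul]
    norm_cast
    have := Real.mul_self_sqrt hs.le
    have h2 := Real.sqrt_pos.2 hs
    field_simp
    nlinarith
  · rw [star_smul, smul_dotProduct, hp i, smul_zero]


lemma vprime {N : ℕ} (μ : Measure (Matrix.unitaryGroup (Fin N) ℂ)) [μ.IsHaarMeasure]
    [IsProbabilityMeasure μ] (A B : Finset ℂ) (hA : ∀ a ∈ A, ‖a‖ < 1) (hB : ∀ b ∈ B, ‖b‖ < 1)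
    (hc : A.card < N) :
    ∫ u : Matrix.unitaryGroup (Fin N) ℂ, star (u : Matrix (Fin N) (Fin N) ℂ).det *
      (∏ a ∈ A, (dD a u)⁻¹) * ∏ b ∈ B, (dB b u)⁻¹ ∂μ = 0 := by
  have hpi : (Real.pi : ℂ) ^ N ≠ 0 := pow_ne_zero _ (by exact_mod_cast Real.pi_ne_zero)
  have hval : Continuous fun u : Matrix.unitaryGroup (Fin N) ℂ => (u : Matrix (Fin N) (Fin N) ℂ) :=
    continuous_subtype_val
  have hdc : Continuous fun u : Matrix.unitaryGroup (Fin N) ℂ =>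
        (u : Matrix (Fin N) (Fin N) ℂ).det := hval.matrix_det
  have hBc : Continuous fun u : Matrix.unitaryGroup (Fin N) ℂ => ∏ b ∈ B, (dB b u)⁻¹ := by
    refine continuous_finsetProd _ fun b hb => Continuous.inv₀ (by fun_prop) fun u => dB_ne (hB b hb) u
  set G : Matrix.unitaryGroup (Fin N) ℂ → ({a // a ∈ A} → Fin N → ℂ) → ℂ := fun u X =>
    star (u : Matrix (Fin N) (Fin N) ℂ).det * (∏ i : {a // a ∈ A},
      Complex.exp (-((∑ k, ‖X i k‖ ^ 2 : ℝ) : ℂ) + (i : ℂ) *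
        (star (X i) ⬝ᵥ ((u : Matrix (Fin N) (Fin N) ℂ) *ᵥ X i)))) * ∏ b ∈ B, (dB b u)⁻¹ with hG
  have h1 : ∀ u : Matrix.unitaryGroup (Fin N) ℂ, star (u : Matrix (Fin N) (Fin N) ℂ).det *
      (∏ a ∈ A, (dD a u)⁻¹) * ∏ b ∈ B, (dB b u)⁻¹
      = ((Real.pi : ℂ) ^ N)⁻¹ ^ A.card * ∫ X, G u X := by
    intro u
    simp only [hG]
    rw [integral_mul_const, integral_const_mul]
    rw [integral_fintype_prod_volume_eq_prod (fun (i : {a // a ∈ A}) (x : Fin N → ℂ) =>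
      Complex.exp (-((∑ k, ‖x k‖ ^ 2 : ℝ) : ℂ) + (i : ℂ) *
        (star x ⬝ᵥ ((u : Matrix (Fin N) (Fin N) ℂ) *ᵥ x))))]
    have : ∀ i : {a // a ∈ A}, ∫ x : Fin N → ℂ,
        Complex.exp (-((∑ k, ‖x k‖ ^ 2 : ℝ) : ℂ) + (i : ℂ) *
        (star x ⬝ᵥ ((u : Matrix (Fin N) (Fin N) ℂ) *ᵥ x))) = Real.pi ^ N * (dD i u)⁻¹ := by
      intro i
      rw [gauss_unitary u i (hA i i.2)]; rfl
    simp_rw [this]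
    rw [Finset.prod_mul_distrib, Finset.prod_coe_sort A (fun a => (dD a u)⁻¹)]
    simp only [Finset.prod_const, Finset.card_univ, Fintype.card_coe]
    have : ((Real.pi : ℂ) ^ N)⁻¹ ^ A.card * ((Real.pi : ℂ) ^ N) ^ A.card = 1 := by
      rw [← mul_pow, inv_mul_cancel₀ hpi, one_pow]
    linear_combination (- star (u : Matrix (Fin N) (Fin N) ℂ).det *
      (∏ a ∈ A, (dD a u)⁻¹) * ∏ b ∈ B, (dB b u)⁻¹) * this
  simp_rw [h1]
  rw [integral_const_mul, integral_integral_swap]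
  · have : ∀ X, ∫ u, G u X ∂μ = 0 := by
      intro X
      obtain ⟨w, hw, hX⟩ := exists_perp (ι := {a // a ∈ A}) (by simpa using hc) X
      have h0 := inner_zero μ B hB (fun i : {a // a ∈ A} => (i : ℂ)) X w hw hX
      have : ∀ u, G u X = (∏ i : {a // a ∈ A}, Complex.exp (-((∑ k, ‖X i k‖ ^ 2 : ℝ) : ℂ))) *
        (star (u : Matrix (Fin N) (Fin N) ℂ).det *
      Complex.exp (∑ i : {a // a ∈ A}, (i : ℂ) * (star (X i) ⬝ᵥ ((u : Matrix (Fin N) (Fin N) ℂ) *ᵥ X i))) *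
      ∏ b ∈ B, (dB b u)⁻¹) := by
        intro u
        simp only [hG]
        rw [Complex.exp_sum]
        simp_rw [Complex.exp_add]
        rw [Finset.prod_mul_distrib]
        ring
      simp_rw [this]
      rw [integral_const_mul, h0, mul_zero]
    simp [this]
  · obtain ⟨C, hC⟩ := (isCompact_univ
      (X := Matrix.unitaryGroup (Fin N) ℂ)).exists_bound_of_continuousOn
        (f := fun u => star (u : Matrix (Fin N) (Fin N) ℂ).det * ∏ b ∈ B, (dB b u)⁻¹)
        (Continuous.continuousOn (by fun_prop))
    have hI : ∀ i : {a // a ∈ A}, Integrable fun x : Fin N → ℂ =>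
        Real.exp (-((1 - ‖(i : ℂ)‖) * ∑ k, ‖x k‖ ^ 2)) := by
      intro i
      have hi : 0 < 1 - ‖(i : ℂ)‖ := by linarith [hA i i.2]
      have h2 := gauss_diag (N := N) (fun _ => ((1 - ‖(i : ℂ)‖ : ℝ) : ℂ)) (fun _ => by simpa using hi)
      have h3 : Integrable fun y : Fin N → ℂ =>
          Complex.exp (-∑ k, ((1 - ‖(i : ℂ)‖ : ℝ) : ℂ) * (‖y k‖ : ℂ) ^ 2) := by
        by_contra h
        rw [integral_undef h] at h2
        refine Finset.prod_ne_zero_iff.2 (fun k _ => ?_) h2.symm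
        have : (Real.pi : ℂ) ≠ 0 := by exact_mod_cast Real.pi_ne_zero
        have h5 : (((1 - ‖(i : ℂ)‖ : ℝ) : ℂ)) ≠ 0 := by exact_mod_cast hi.ne'
        exact div_ne_zero this h5
      refine h3.norm.congr (ae_of_all _ fun x => ?_)
      simp only [Complex.norm_exp]
      congr 1
      rw [← Finset.mul_sum]
      have : ∑ k, ((‖x k‖ : ℝ) : ℂ) ^ 2 = ((∑ k, ‖x k‖ ^ 2 : ℝ) : ℂ) := by push_cast; rfl
      rw [this, ← Complex.ofReal_mul, ← Complex.ofReal_neg, Complex.ofReal_re]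
    have hI2 : Integrable fun X : {a // a ∈ A} → Fin N → ℂ =>
        ∏ i : {a // a ∈ A}, Real.exp (-((1 - ‖(i : ℂ)‖) * ∑ k, ‖X i k‖ ^ 2)) :=
      Integrable.fintype_prod hI
    have hI3 := (hI2.const_mul C).comp_snd μ
    refine hI3.mono' ?_ (ae_of_all _ ?_)
    · apply Continuous.aestronglyMeasurable
      simp only [hG, Function.uncurry_def]
      have h4 : Continuous fun p : Matrix.unitaryGroup (Fin N) ℂ × ({a // a ∈ A} → Fin N → ℂ) =>
          ∏ b ∈ B, (dB b p.1)⁻¹ := hBc.comp continuous_fst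
      have h5 : Continuous fun p : Matrix.unitaryGroup (Fin N) ℂ × ({a // a ∈ A} → Fin N → ℂ) =>
          (p.1 : Matrix (Fin N) (Fin N) ℂ) := hval.comp continuous_fst
      have h6 : ∀ i : {a // a ∈ A}, Continuous fun p : Matrix.unitaryGroup (Fin N) ℂ × ({a // a ∈ A} → Fin N → ℂ) =>
          star (p.2 i) ⬝ᵥ ((p.1 : Matrix (Fin N) (Fin N) ℂ) *ᵥ p.2 i) := fun i =>
        Continuous.dotProduct (by fun_prop) (h5.matrix_mulVec (by fun_prop))
      have h7 : Continuous fun p : Matrix.unitaryGroup (Fin N) ℂ × ({a // a ∈ A} → Fin N → ℂ) =>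
          (p.1 : Matrix (Fin N) (Fin N) ℂ).det := hdc.comp continuous_fst
      fun_prop
    · rintro ⟨u, X⟩
      simp only [hG, Function.uncurry_apply_pair]
      have e : ∀ s t v : ℂ, s * t * v = (s * v) * t := fun _ _ _ => by ring
      rw [e, norm_mul]
      have hC0 := hC u trivial
      refine mul_le_mul hC0 ?_ (norm_nonneg _) ((norm_nonneg _).trans hC0)
      rw [norm_prod]
      refine Finset.prod_le_prod (fun _ _ => norm_nonneg _) fun i _ => ?_
      rw [Complex.norm_exp]
      apply Real.exp_le_exp.2
      rw [Complex.add_re, Complex.neg_re, Complex.ofReal_re]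
      have h8 : ((i : ℂ) * (star (X i) ⬝ᵥ ((u : Matrix (Fin N) (Fin N) ℂ) *ᵥ X i))).re
        ≤ ‖(i : ℂ)‖ * ∑ k, ‖X i k‖ ^ 2 := by
        refine (Complex.re_le_norm _).trans ?_
        rw [norm_mul]
        exact mul_le_mul_of_nonneg_left (quad_le u (X i)) (norm_nonneg _)
      linarith


lemma det_poly {N : ℕ} (M : Matrix (Fin N) (Fin N) ℂ) :
    ∃ P : Polynomial ℂ, P.degree < ((N + 1 : ℕ) : WithBot ℕ) ∧ ∀ z, P.eval z = (1 - z • M).det := by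
  refine ⟨det ((Polynomial.X : Polynomial ℂ) • (-M).map Polynomial.C + (1 : Matrix (Fin N) (Fin N) ℂ).map Polynomial.C), ?_, fun z => ?_⟩
  · refine lt_of_le_of_lt Polynomial.degree_le_natDegree ?_
    have := Polynomial.natDegree_det_X_add_C_le (-M) (1 : Matrix (Fin N) (Fin N) ℂ)
    rw [Fintype.card_fin] at this
    exact_mod_cast Nat.lt_succ_of_le this
  · rw [← Polynomial.coe_evalRingHom, RingHom.map_det]
    congr 1
    ext i j
    by_cases hij : i = j <;> simp [Matrix.one_apply, hij] <;> ring

lemma int_poly {N : ℕ} (μ : Measure (Matrix.unitaryGroup (Fin N) ℂ)) [IsProbabilityMeasure μ]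
    (D : ℂ → Matrix.unitaryGroup (Fin N) ℂ → ℂ) (hD : ∀ z, Continuous (D z))
    (hP : ∀ u, ∃ P : Polynomial ℂ, P.degree < ((N + 1 : ℕ) : WithBot ℕ) ∧ ∀ z, P.eval z = D z u)
    (g : Matrix.unitaryGroup (Fin N) ℂ → ℂ) (hg : Continuous g) :
    ∃ P : Polynomial ℂ, P.degree < ((N + 1 : ℕ) : WithBot ℕ) ∧ ∀ z, P.eval z = ∫ u, D z u * g u ∂μ := by
  have hv : Set.InjOn (fun i : ℕ => (i : ℂ)) (Finset.range (N + 1)) := fun i _ j _ h => by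
    have h' : (i : ℂ) = (j : ℂ) := h
    exact_mod_cast h'
  refine ⟨Lagrange.interpolate (Finset.range (N + 1)) (fun i : ℕ => (i : ℂ))
    (fun i => ∫ u, D i u * g u ∂μ), ?_, fun z => ?_⟩
  · simpa using Lagrange.degree_interpolate_lt (fun i : ℕ => ∫ u, D (i : ℂ) u * g u ∂μ) hv
  · rw [Lagrange.interpolate_apply]
    simp only [Polynomial.eval_finsetSum, Polynomial.eval_mul, Polynomial.eval_C]
    simp_rw [← integral_mul_const]
    rw [← integral_finsetSum]
    · congr 1; ext u
      obtain ⟨P, hd, he⟩ := hP u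
      rw [← he]
      conv_rhs => rw [Lagrange.eq_interpolate (s := Finset.range (N + 1)) (f := P) hv (by simpa using hd)]
      rw [Lagrange.interpolate_apply]
      simp only [Polynomial.eval_finsetSum, Polynomial.eval_mul, Polynomial.eval_C, he, Finset.sum_mul]
      exact Finset.sum_congr rfl fun i _ => by ring
    · intro i _
      refine int_cont μ ?_
      have := hD i
      fun_prop

lemma int_poly_dD {N : ℕ} (μ : Measure (Matrix.unitaryGroup (Fin N) ℂ)) [IsProbabilityMeasure μ]
    (g : Matrix.unitaryGroup (Fin N) ℂ → ℂ) (hg : Continuous g) :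
    ∃ P : Polynomial ℂ, P.degree < ((N + 1 : ℕ) : WithBot ℕ) ∧ ∀ z, P.eval z = ∫ u, dD z u * g u ∂μ :=
  int_poly μ dD (fun z => by fun_prop) (fun u => det_poly _) g hg

lemma int_poly_dB {N : ℕ} (μ : Measure (Matrix.unitaryGroup (Fin N) ℂ)) [IsProbabilityMeasure μ]
    (g : Matrix.unitaryGroup (Fin N) ℂ → ℂ) (hg : Continuous g) :
    ∃ P : Polynomial ℂ, P.degree < ((N + 1 : ℕ) : WithBot ℕ) ∧ ∀ z, P.eval z = ∫ u, dB z u * g u ∂μ :=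
  int_poly μ dB (fun z => by fun_prop) (fun u => det_poly _) g hg

lemma poly_eq {P Q : Polynomial ℂ} {n : ℕ} (hP : P.degree < (n : WithBot ℕ))
    (hQ : Q.degree < (n : WithBot ℕ)) (s : Finset ℂ) (hs : n ≤ s.card)
    (h : ∀ z ∈ s, P.eval z = Q.eval z) : P = Q :=
  Polynomial.eq_of_degrees_lt_of_eval_finset_eq s
    (hP.trans_le (by exact_mod_cast hs)) (hQ.trans_le (by exact_mod_cast hs)) h

@[fun_prop]
lemma cont_A {N : ℕ} (A : Finset ℂ) (hA : ∀ a ∈ A, ‖a‖ < 1) :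
    Continuous fun u : Matrix.unitaryGroup (Fin N) ℂ => ∏ a ∈ A, (dD a u)⁻¹ :=
  continuous_finsetProd _ fun b hb => Continuous.inv₀ (by fun_prop) fun u => dD_ne (hA b hb) u

@[fun_prop]
lemma cont_B {N : ℕ} (B : Finset ℂ) (hB : ∀ b ∈ B, ‖b‖ < 1) :
    Continuous fun u : Matrix.unitaryGroup (Fin N) ℂ => ∏ b ∈ B, (dB b u)⁻¹ :=
  continuous_finsetProd _ fun b hb => Continuous.inv₀ (by fun_prop) fun u => dB_ne (hB b hb) u

lemma one_sub_ne {a b : ℂ} (ha : ‖a‖ < 1) (hb : ‖b‖ < 1) : 1 - a * b ≠ 0 := by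
  intro h
  have h1 : a * b = 1 := by linear_combination -h
  have h2 : ‖a‖ * ‖b‖ = 1 := by rw [← norm_mul, h1, norm_one]
  nlinarith [norm_nonneg a, norm_nonneg b]

lemma baseK {N : ℕ} (μ : Measure (Matrix.unitaryGroup (Fin N) ℂ)) [μ.IsHaarMeasure]
    [IsProbabilityMeasure μ] (A B : Finset ℂ) (hA : ∀ a ∈ A, ‖a‖ < 1) (hA0 : ∀ a ∈ A, a ≠ 0)
    (hB : ∀ b ∈ B, ‖b‖ < 1) (hc : A.card = N) :
    ∫ u : Matrix.unitaryGroup (Fin N) ℂ,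
      (∏ a ∈ A, (dD a u)⁻¹) * ∏ b ∈ B, (dB b u)⁻¹ ∂μ = ∏ a ∈ A, ∏ b ∈ B, (1 - a * b)⁻¹ := by
  induction B using Finset.induction_on with
  | empty => simpa using exp_fA μ A hA
  | insert b B hb ih =>
    have hB' : ∀ b ∈ B, ‖b‖ < 1 := fun c h => hB c (Finset.mem_insert_of_mem h)
    have hb1 := hB b (Finset.mem_insert_self _ _)
    have ih := ih hB'
    obtain ⟨P, hP, hPe⟩ := int_poly_dB μ (fun u => (∏ a ∈ A, (dD a u)⁻¹) * ∏ b ∈ insert b B, (dB b u)⁻¹)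
      ((cont_A A hA).mul (cont_B _ hB))
    set Q : Polynomial ℂ := Polynomial.C (P.eval 0) *
      ∏ a ∈ A, (Polynomial.C (-a) * Polynomial.X + Polynomial.C 1) with hQ
    have hQe : ∀ z, Q.eval z = P.eval 0 * ∏ a ∈ A, (1 - a * z) := by
      intro z
      simp only [hQ, Polynomial.eval_mul, Polynomial.eval_prod, Polynomial.eval_C, Polynomial.eval_add, Polynomial.eval_X]
      congr 1
      exact Finset.prod_congr rfl fun a _ => by ring
    have hPQ : P = Q := by
      refine poly_eq (n := N + 1) hP ?_ (insert 0 (A.image fun a => a⁻¹)) ?_ ?_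
      · rw [← hc, hQ]
        refine lt_of_le_of_lt Polynomial.degree_le_natDegree ?_
        have h1 : (∏ a ∈ A, (Polynomial.C (-a) * Polynomial.X + Polynomial.C 1)).natDegree ≤ A.card := by
          refine (Polynomial.natDegree_prod_le _ _).trans ?_
          refine (Finset.sum_le_card_nsmul _ _ 1 fun a _ => Polynomial.natDegree_linear_le).trans ?_
          simp
        have := (Polynomial.natDegree_C_mul_le (P.eval 0) _).trans h1
        exact_mod_cast Nat.lt_succ_of_le this
      · rw [Finset.card_insert_of_notMem, Finset.card_image_of_injective _ inv_injective, hc]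
        simp only [Finset.mem_image, not_exists, not_and]
        intro a ha h
        exact hA0 a ha (by simpa using h)
      · intro z hz
        rw [hQe]
        rcases Finset.mem_insert.1 hz with rfl | hz
        · simp
        · obtain ⟨a, ha, rfl⟩ := Finset.mem_image.1 hz
          rw [Finset.prod_eq_zero ha (by rw [mul_inv_cancel₀ (hA0 a ha), sub_self]), mul_zero, hPe]
          have h1 := vprime μ (A.erase a) (insert b B) (fun c h => hA c (Finset.mem_of_mem_erase h)) hB
            (by rw [← hc]; exact Finset.card_erase_lt_of_mem ha)
          have : ∀ u : Matrix.unitaryGroup (Fin N) ℂ, dB a⁻¹ u * ((∏ a ∈ A, (dD a u)⁻¹) * ∏ b ∈ insert b B, (dB b u)⁻¹)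
            = (-a⁻¹) ^ N * (star (u : Matrix (Fin N) (Fin N) ℂ).det *
      (∏ a ∈ A.erase a, (dD a u)⁻¹) * ∏ b ∈ insert b B, (dB b u)⁻¹) := by
            intro u
            rw [dB_dD (inv_ne_zero (hA0 a ha)), inv_inv, ← Finset.mul_prod_erase A _ ha]
            have := mul_inv_cancel₀ (dD_ne (hA a ha) u)
            linear_combination ((-a⁻¹) ^ N * (star (u : Matrix (Fin N) (Fin N) ℂ).det *
      (∏ a ∈ A.erase a, (dD a u)⁻¹) * ∏ b ∈ insert b B, (dB b u)⁻¹)) * this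
          simp_rw [this]
          rw [integral_const_mul, h1, mul_zero]
    have e0 : P.eval 0 = ∫ u : Matrix.unitaryGroup (Fin N) ℂ,
      (∏ a ∈ A, (dD a u)⁻¹) * ∏ b ∈ insert b B, (dB b u)⁻¹ ∂μ := by
      rw [hPe]; simp [dB]
    have eb : P.eval b = ∫ u : Matrix.unitaryGroup (Fin N) ℂ,
      (∏ a ∈ A, (dD a u)⁻¹) * ∏ b ∈ B, (dB b u)⁻¹ ∂μ := by
      rw [hPe]; congr 1; ext u
      rw [Finset.prod_insert hb]
      have := mul_inv_cancel₀ (dB_ne hb1 u)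
      linear_combination ((∏ a ∈ A, (dD a u)⁻¹) * ∏ b ∈ B, (dB b u)⁻¹) * this
    rw [← e0]
    rw [hPQ, hQe, ih] at eb
    have h3 : ∏ a ∈ A, (1 - a * b) ≠ 0 :=
      Finset.prod_ne_zero_iff.2 fun a ha => one_sub_ne (hA a ha) hb1
    simp_rw [Finset.prod_insert hb]
    rw [Finset.prod_mul_distrib, ← eb, Finset.prod_inv_distrib]
    field_simp
    exact congrArg _ (Finset.prod_congr rfl fun a _ => by ring)


noncomputable def TT (A B X S : Finset ℂ) : ℂ :=
  (∏ l ∈ S, ∏ a ∈ A, (l - a)) * (∏ j ∈ X \ S, ∏ b ∈ B, (1 - j * b)) *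
    ∏ j ∈ X \ S, ∏ l ∈ S, (l - j)⁻¹

noncomputable def KK (A B : Finset ℂ) : ℂ := ∏ a ∈ A, ∏ b ∈ B, (1 - a * b)⁻¹

noncomputable def FF {N : ℕ} (μ : Measure (Matrix.unitaryGroup (Fin N) ℂ)) (q : ℕ)
    (X A B : Finset ℂ) : ℂ :=
  ∫ u : Matrix.unitaryGroup (Fin N) ℂ, star (u : Matrix (Fin N) (Fin N) ℂ).det ^ q *
    (∏ x ∈ X, dD x u) * ((∏ a ∈ A, (dD a u)⁻¹) * ∏ b ∈ B, (dB b u)⁻¹) ∂μ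

lemma TT_insert_out {A B X S : Finset ℂ} {z : ℂ} (hz : z ∉ X) (hS : S ⊆ X) :
    TT A B (insert z X) S = TT A B X S * (∏ b ∈ B, (1 - z * b)) * ∏ l ∈ S, (l - z)⁻¹ := by
  have h1 : z ∉ S := fun h => hz (hS h)
  unfold TT
  rw [Finset.insert_sdiff_of_notMem _ h1, Finset.prod_insert (by simp [hz]),
    Finset.prod_insert (by simp [hz])]
  ring

lemma TT_insert_in {A B X S : Finset ℂ} {z : ℂ} (hz : z ∉ X) (hS : S ⊆ X) :
    TT A B (insert z X) (insert z S) =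
      TT A B X S * (∏ a ∈ A, (z - a)) * ∏ j ∈ X \ S, (z - j)⁻¹ := by
  have h1 : z ∉ S := fun h => hz (hS h)
  unfold TT
  rw [Finset.insert_sdiff_insert, Finset.sdiff_insert_of_notMem hz, Finset.prod_insert h1]
  simp_rw [Finset.prod_insert h1]
  rw [Finset.prod_mul_distrib]
  ring

lemma TT_eraseA {A B X S : Finset ℂ} {a : ℂ} (ha : a ∈ A) :
    TT A B X S = TT (A.erase a) B X S * ∏ l ∈ S, (l - a) := by
  unfold TT
  simp_rw [← Finset.mul_prod_erase A _ ha]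
  rw [Finset.prod_mul_distrib]
  ring

lemma TT_eraseB {A B X S : Finset ℂ} {b : ℂ} (hb : b ∈ B) :
    TT A B X S = TT A (B.erase b) X S * ∏ j ∈ X \ S, (1 - j * b) := by
  unfold TT
  simp_rw [← Finset.mul_prod_erase B _ hb]
  rw [Finset.prod_mul_distrib]
  ring

lemma KK_eraseA {A B : Finset ℂ} {a : ℂ} (ha : a ∈ A) :
    KK A B = KK (A.erase a) B * ∏ b ∈ B, (1 - a * b)⁻¹ := by
  unfold KK
  rw [← Finset.mul_prod_erase A _ ha]; ring

lemma KK_eraseB {A B : Finset ℂ} {b : ℂ} (hb : b ∈ B) :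
    KK A B = KK A (B.erase b) * ∏ a ∈ A, (1 - a * b)⁻¹ := by
  unfold KK
  simp_rw [← Finset.mul_prod_erase B _ hb]
  rw [Finset.prod_mul_distrib]; ring

lemma FF_A {N : ℕ} (μ : Measure (Matrix.unitaryGroup (Fin N) ℂ)) (q : ℕ)
    (X A B : Finset ℂ) {a : ℂ} (ha : a ∈ A) (ha1 : ‖a‖ < 1) :
    ∫ u : Matrix.unitaryGroup (Fin N) ℂ, dD a u * (star (u : Matrix (Fin N) (Fin N) ℂ).det ^ q *
    (∏ x ∈ X, dD x u) * ((∏ a ∈ A, (dD a u)⁻¹) * ∏ b ∈ B, (dB b u)⁻¹)) ∂μ = FF μ q X (A.erase a) B := by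
  unfold FF
  congr 1; ext u
  rw [← Finset.mul_prod_erase A _ ha]
  have := mul_inv_cancel₀ (dD_ne ha1 u)
  linear_combination (star (u : Matrix (Fin N) (Fin N) ℂ).det ^ q *
    (∏ x ∈ X, dD x u) * ((∏ a ∈ A.erase a, (dD a u)⁻¹) * ∏ b ∈ B, (dB b u)⁻¹)) * this

lemma FF_B {N : ℕ} (μ : Measure (Matrix.unitaryGroup (Fin N) ℂ)) (q : ℕ)
    (X A B : Finset ℂ) {b : ℂ} (hb : b ∈ B) (hb1 : ‖b‖ < 1) (hb0 : b ≠ 0) :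
    ∫ u : Matrix.unitaryGroup (Fin N) ℂ, dD b⁻¹ u * (star (u : Matrix (Fin N) (Fin N) ℂ).det ^ (q + 1) *
    (∏ x ∈ X, dD x u) * ((∏ a ∈ A, (dD a u)⁻¹) * ∏ b ∈ B, (dB b u)⁻¹)) ∂μ
      = (-b⁻¹) ^ N * FF μ q X A (B.erase b) := by
  unfold FF
  rw [← integral_const_mul]
  congr 1; ext u
  rw [← Finset.mul_prod_erase B _ hb, dD_dB (inv_ne_zero hb0), inv_inv]
  have h1 := mul_inv_cancel₀ (dB_ne hb1 u)
  have h2 := det_star_mul u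
  rw [pow_succ]
  generalize ∏ b ∈ B.erase b, (dB b u)⁻¹ = t
  generalize ∏ a ∈ A, (dD a u)⁻¹ = t'
  generalize ∏ x ∈ X, dD x u = t''
  linear_combination ((-b⁻¹) ^ N * star (u : Matrix (Fin N) (Fin N) ℂ).det ^ q * t'' * t' * t) *
    (star (u : Matrix (Fin N) (Fin N) ℂ).det * (u : Matrix (Fin N) (Fin N) ℂ).det * h1 + h2)

lemma deg_prod_le (s : Finset ℂ) (f : ℂ → Polynomial ℂ) (hf : ∀ a ∈ s, (f a).natDegree ≤ 1) :
    (∏ a ∈ s, f a).natDegree ≤ s.card := by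
  refine (Polynomial.natDegree_prod_le _ _).trans ?_
  refine (Finset.sum_le_card_nsmul _ _ 1 hf).trans ?_
  simp

lemma prod_sub_split {X S : Finset ℂ} (hS : S ⊆ X) (z : ℂ) :
    ∏ k ∈ X, (z - k) = (∏ j ∈ X \ S, (z - j)) * ∏ l ∈ S, (z - l) :=
  (Finset.prod_sdiff hS).symm

lemma prod_neg_sub (S : Finset ℂ) (z : ℂ) :
    ∏ l ∈ S, (l - z) = (-1) ^ S.card * ∏ l ∈ S, (z - l) := by
  rw [← Finset.prod_const, ← Finset.prod_mul_distrib]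
  exact Finset.prod_congr rfl fun l _ => by ring

/-- The sum on the right-hand side. -/
noncomputable def SS (q : ℕ) (X A B : Finset ℂ) : ℂ :=
  ∑ S ∈ X.powerset, if S.card = q then TT A B X S else 0

open Polynomial in
/-- The right-hand side polynomial. -/
noncomputable def RR (q : ℕ) (X A B : Finset ℂ) : Polynomial ℂ :=
  (∑ S ∈ X.powerset, if S.card = q then
      C (TT A B X S * (-1) ^ S.card) * ((∏ b ∈ B, (C (-b) * Polynomial.X + C 1)) * ∏ j ∈ X \ S, (Polynomial.X - C j)) else 0) +
  ∑ S ∈ X.powerset, if S.card + 1 = q then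
      C (TT A B X S) * ((∏ a ∈ A, (Polynomial.X - C a)) * ∏ l ∈ S, (Polynomial.X - C l)) else 0

lemma RR_eval (q : ℕ) (X A B : Finset ℂ) (z : ℂ) : (RR q X A B).eval z =
    (∑ S ∈ X.powerset, if S.card = q then
      TT A B X S * (-1) ^ S.card * ((∏ b ∈ B, (1 - z * b)) * ∏ j ∈ X \ S, (z - j)) else 0) +
  ∑ S ∈ X.powerset, if S.card + 1 = q then
      TT A B X S * ((∏ a ∈ A, (z - a)) * ∏ l ∈ S, (z - l)) else 0 := by
  unfold RR
  rw [Polynomial.eval_add, Polynomial.eval_finsetSum, Polynomial.eval_finsetSum]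
  congr 1
  · refine Finset.sum_congr rfl fun S _ => ?_
    split_ifs
    · simp only [Polynomial.eval_mul, Polynomial.eval_prod, Polynomial.eval_C, Polynomial.eval_add,
        Polynomial.eval_X, Polynomial.eval_sub]
      congr 2
      exact Finset.prod_congr rfl fun b _ => by ring
    · simp
  · refine Finset.sum_congr rfl fun S _ => ?_
    split_ifs
    · simp only [Polynomial.eval_mul, Polynomial.eval_prod, Polynomial.eval_C, 
        Polynomial.eval_X, Polynomial.eval_sub]
    · simp

lemma RR_deg {N p q m : ℕ} {X A B : Finset ℂ} (hX : X.card = m) (hpq : p + q = m + 1)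
    (hA : A.card = p + N) (hB : B.card = q + N) : (RR q X A B).natDegree ≤ N + m := by
  unfold RR
  refine Polynomial.natDegree_add_le_of_degree_le ?_ ?_
  · refine Polynomial.natDegree_sum_le_of_forall_le _ _ fun S hS => ?_
    have hS := Finset.mem_powerset.1 hS
    split_ifs with h
    · refine (Polynomial.natDegree_C_mul_le _ _).trans ?_
      refine Polynomial.natDegree_mul_le.trans ?_
      have h1 := deg_prod_le B (fun b => Polynomial.C (-b) * Polynomial.X + Polynomial.C 1)
        (fun b _ => Polynomial.natDegree_linear_le)
      have h2 := deg_prod_le (X \ S) (fun b => Polynomial.X - Polynomial.C b)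
        (fun b _ => Polynomial.natDegree_X_sub_C_le b)
      have h3 := Finset.card_sdiff_add_card_eq_card hS
      omega
    · simp
  · refine Polynomial.natDegree_sum_le_of_forall_le _ _ fun S hS => ?_
    have hS := Finset.mem_powerset.1 hS
    split_ifs with h
    · refine (Polynomial.natDegree_C_mul_le _ _).trans ?_
      refine Polynomial.natDegree_mul_le.trans ?_
      have h1 := deg_prod_le A (fun b => Polynomial.X - Polynomial.C b)
        (fun b _ => Polynomial.natDegree_X_sub_C_le b)
      have h2 := deg_prod_le S (fun b => Polynomial.X - Polynomial.C b)
        (fun b _ => Polynomial.natDegree_X_sub_C_le b)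
      omega
    · simp

lemma RR_SS {q : ℕ} {X A B : Finset ℂ} {z : ℂ} (hz : z ∉ X) :
    SS q (insert z X) A B * ∏ k ∈ X, (z - k) = (RR q X A B).eval z := by
  have hne : ∀ k ∈ X, z - k ≠ 0 := fun k hk h => hz (by rw [sub_eq_zero.1 h]; exact hk)
  unfold SS
  rw [RR_eval, Finset.sum_powerset_insert hz, add_mul, Finset.sum_mul, Finset.sum_mul]
  congr 1
  · refine Finset.sum_congr rfl fun S hS => ?_
    have hS := Finset.mem_powerset.1 hS
    split_ifs
    · rw [TT_insert_out hz hS, prod_sub_split hS, Finset.prod_inv_distrib, prod_neg_sub]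
      have : ∏ l ∈ S, (z - l) ≠ 0 := Finset.prod_ne_zero_iff.2 fun k hk => hne k (hS hk)
      rcases neg_one_pow_eq_or ℂ S.card with h | h <;> rw [h] <;> field_simp
    · simp
  · refine Finset.sum_congr rfl fun S hS => ?_
    have hS := Finset.mem_powerset.1 hS
    rw [Finset.card_insert_of_notMem (fun h => hz (hS h))]
    split_ifs
    · rw [TT_insert_in hz hS, prod_sub_split hS, Finset.prod_inv_distrib]
      have : ∏ l ∈ X \ S, (z - l) ≠ 0 :=
        Finset.prod_ne_zero_iff.2 fun k hk => hne k (Finset.sdiff_subset hk)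
      field_simp
    · simp

lemma RR_A {q : ℕ} {X A B : Finset ℂ} {a : ℂ} (ha : a ∈ A) (hA : ∀ a ∈ A, ‖a‖ < 1)
    (hB : ∀ b ∈ B, ‖b‖ < 1) :
    KK A B * (RR q X A B).eval a = KK (A.erase a) B * SS q X (A.erase a) B * ∏ k ∈ X, (a - k) := by
  rw [RR_eval, KK_eraseA ha]
  have h0 : (∑ S ∈ X.powerset, if S.card + 1 = q then
      TT A B X S * ((∏ c ∈ A, (a - c)) * ∏ l ∈ S, (a - l)) else 0) = 0 := by
    refine Finset.sum_eq_zero fun S _ => ?_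
    rw [Finset.prod_eq_zero ha (sub_self a)]; simp
  have h1 : ∏ b ∈ B, (1 - a * b) ≠ 0 :=
    Finset.prod_ne_zero_iff.2 fun b hb => one_sub_ne (hA a ha) (hB b hb)
  rw [h0, add_zero, SS, mul_assoc, mul_assoc, Finset.mul_sum, Finset.sum_mul]
  congr 1
  refine Finset.sum_congr rfl fun S hS => ?_
  have hS := Finset.mem_powerset.1 hS
  split_ifs
  · rw [TT_eraseA ha, prod_sub_split hS, prod_neg_sub, Finset.prod_inv_distrib]
    have : ((-1 : ℂ) ^ S.card) * (-1) ^ S.card = 1 := by rw [← mul_pow]; simp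
    field_simp
    linear_combination (TT (A.erase a) B X S * (∏ x ∈ S, (a - x))  * ∏ x ∈ X \ S, (a - x)) * this
  · simp

lemma RR_B {N p q : ℕ} {X A B : Finset ℂ} {b : ℂ} (hb : b ∈ B) (hb0 : b ≠ 0) (hA : ∀ a ∈ A, ‖a‖ < 1)
    (hB : ∀ b ∈ B, ‖b‖ < 1) (hX : X.card = p + q) (hc : A.card = p + N) :
    KK A B * (RR (q + 1) X A B).eval b⁻¹ =
      b⁻¹ ^ N * (KK A (B.erase b) * SS q X A (B.erase b)) * ∏ k ∈ X, (b⁻¹ - k) := by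
  rw [RR_eval, KK_eraseB hb]
  have h0 : (∑ S ∈ X.powerset, if S.card = q + 1 then
      TT A B X S * (-1) ^ S.card * ((∏ c ∈ B, (1 - b⁻¹ * c)) * ∏ j ∈ X \ S, (b⁻¹ - j)) else 0) = 0 := by
    refine Finset.sum_eq_zero fun S _ => ?_
    rw [Finset.prod_eq_zero hb (by rw [inv_mul_cancel₀ hb0, sub_self])]; simp
  have h1 : ∏ a ∈ A, (1 - a * b) ≠ 0 :=
    Finset.prod_ne_zero_iff.2 fun a ha => one_sub_ne (hA a ha) (hB b hb)
  have h2 : ∏ a ∈ A, (b⁻¹ - a) = b⁻¹ ^ (p + N) * ∏ a ∈ A, (1 - a * b) := by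
    rw [← hc, ← Finset.prod_const, ← Finset.prod_mul_distrib]
    exact Finset.prod_congr rfl fun a _ => by field_simp
  have e : ∀ s t u v : ℂ, s * (t * u) * v = t * (s * (u * v)) := fun _ _ _ _ => by ring
  rw [h0, zero_add, SS, mul_assoc, e]
  congr 1
  rw [Finset.mul_sum, Finset.sum_mul, Finset.mul_sum]
  refine Finset.sum_congr rfl fun S hS => ?_
  have hS := Finset.mem_powerset.1 hS
  simp only [add_left_inj]
  split_ifs with hq
  · have h3 : ∏ j ∈ X \ S, (1 - j * b) = b ^ p * ∏ j ∈ X \ S, (b⁻¹ - j) := by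
      have : (X \ S).card = p := by
        have h3 := Finset.card_sdiff_add_card_eq_card hS
        omega
      rw [← this, ← Finset.prod_const, ← Finset.prod_mul_distrib]
      exact Finset.prod_congr rfl fun a _ => by field_simp
    rw [TT_eraseB hb, h3, prod_sub_split hS, h2, Finset.prod_inv_distrib, pow_add]
    have h4 : b⁻¹ ^ p * b ^ p = 1 := by rw [← mul_pow, inv_mul_cancel₀ hb0, one_pow]
    have h5 := inv_mul_cancel₀ h1
    generalize (∏ a ∈ A, (1 - a * b)) = t at *
    generalize ∏ j ∈ X \ S, (b⁻¹ - j) = t1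
    generalize ∏ j ∈ S, (b⁻¹ - j) = t2
    linear_combination (b⁻¹ ^ N * TT A (B.erase b) X S * t1 * t2) * (b⁻¹ ^ p * b ^ p * h5 + h4)
  · simp

lemma generic {N : ℕ} (μ : Measure (Matrix.unitaryGroup (Fin N) ℂ)) [μ.IsHaarMeasure]
    [IsProbabilityMeasure μ] (X : Finset ℂ) : ∀ (p q : ℕ) (A B : Finset ℂ) (hX : X.card = p + q)
    (hAc : A.card = p + N) (hBc : B.card = q + N)
    (hA : ∀ a ∈ A, ‖a‖ < 1) (hA0 : ∀ a ∈ A, a ≠ 0)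
    (hB : ∀ b ∈ B, ‖b‖ < 1) (hB0 : ∀ b ∈ B, b ≠ 0)
    (hAX : ∀ a ∈ A, a ∉ X) (hBX : ∀ b ∈ B, b⁻¹ ∉ X),
    FF μ q X A B = (-1) ^ (N * q) * (KK A B * SS q X A B) := by
  induction X using Finset.induction_on with
  | empty =>
    intro p q A B hX hAc hBc hA hA0 hB hB0 hAX hBX
    have hp : p = 0 := by simp at hX; omega
    have hq : q = 0 := by simp at hX; omega
    subst hp hq
    have := baseK μ A B hA hA0 hB (by omega)
    simp only [FF, KK, SS, TT]
    simpa using this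
  | insert x X hx ih =>
    intro p q A B hX hAc hBc hA hA0 hB hB0 hAX hBX
    rw [Finset.card_insert_of_notMem hx] at hX
    have hdc : Continuous fun u : Matrix.unitaryGroup (Fin N) ℂ =>
        (u : Matrix (Fin N) (Fin N) ℂ).det := Continuous.matrix_det continuous_subtype_val
    obtain ⟨P, hP, hPe⟩ := int_poly_dD μ (fun u : Matrix.unitaryGroup (Fin N) ℂ => star (u : Matrix (Fin N) (Fin N) ℂ).det ^ q *
      (∏ x ∈ X, dD x u) * ((∏ a ∈ A, (dD a u)⁻¹) * ∏ b ∈ B, (dB b u)⁻¹)) (by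
        have := cont_A (N := N) A hA
        have := cont_B (N := N) B hB
        fun_prop)
    have key : P * ∏ k ∈ X, (Polynomial.X - Polynomial.C k)
        = Polynomial.C ((-1) ^ (N * q) * KK A B) * RR q X A B := by
      refine poly_eq (n := N + X.card + 1) ?_ ?_ ((if p = 0 then ∅ else A) ∪
        (if q = 0 then ∅ else B.image fun b => b⁻¹)) ?_ ?_
      · have h1 := deg_prod_le X (fun b => Polynomial.X - Polynomial.C b)
          (fun b _ => Polynomial.natDegree_X_sub_C_le b)
        have h2 : P.natDegree ≤ N := by
          rcases eq_or_ne P 0 with rfl | h0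
          · simp
          · exact Nat.lt_succ_iff.1 ((Polynomial.natDegree_lt_iff_degree_lt h0).2 hP)
        refine lt_of_le_of_lt Polynomial.degree_le_natDegree ?_
        have := Polynomial.natDegree_mul_le (p := P) (q := ∏ k ∈ X, (Polynomial.X - Polynomial.C k))
        exact_mod_cast (by omega : _ < N + X.card + 1)
      · refine lt_of_le_of_lt Polynomial.degree_le_natDegree ?_
        have h1 := RR_deg (X := X) rfl hX.symm hAc hBc
        have := Polynomial.natDegree_C_mul_le ((-1) ^ (N * q) * KK A B) (RR q X A B)
        have h3 : (Polynomial.C ((-1) ^ (N * q) * KK A B) * RR q X A B).natDegree < N + X.card + 1 := by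
          omega
        exact WithBot.coe_lt_coe.2 h3
      · have hd : Disjoint (if p = 0 then ∅ else A)
            (if q = 0 then ∅ else B.image fun b => b⁻¹) := by
          split_ifs
          · simp
          · simp
          · simp
          · rw [Finset.disjoint_left]
            intro a ha hab
            obtain ⟨b, hb, rfl⟩ := Finset.mem_image.1 hab
            have h1 := hA _ ha
            have h2 := hB _ hb
            rw [norm_inv] at h1
            have h3 : 0 < ‖b‖ := norm_pos_iff.2 (hB0 b hb)
            have := (inv_lt_one₀ h3).1 h1
            linarith
        rw [Finset.card_union_of_disjoint hd]
        split_ifs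
        · omega
        · rw [Finset.card_image_of_injective _ inv_injective]; simp; omega
        · simp; omega
        · rw [Finset.card_image_of_injective _ inv_injective]; omega
      · intro z hz
        have hev : (∏ k ∈ X, (Polynomial.X - Polynomial.C k)).eval z = ∏ k ∈ X, (z - k) := by
          simp [Polynomial.eval_prod]
        rw [Polynomial.eval_mul, Polynomial.eval_mul, hev, Polynomial.eval_C, hPe]
        rcases Finset.mem_union.1 hz with hz' | hz' <;> clear hz <;> rename' hz' => hz
        · split_ifs at hz with h0
          · simp at hz
          obtain ⟨p, rfl⟩ := Nat.exists_eq_succ_of_ne_zero h0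
          rw [FF_A μ q X A B hz (hA z hz), mul_assoc, RR_A hz hA hB]
          have hc := Finset.card_erase_of_mem hz
          rw [ih p q (A.erase z) B (by omega) (by omega) hBc
            (fun a h => hA a (Finset.mem_of_mem_erase h))
            (fun a h => hA0 a (Finset.mem_of_mem_erase h)) hB hB0
            (fun a h h' => hAX a (Finset.mem_of_mem_erase h) (Finset.mem_insert_of_mem h'))
            (fun b h h' => hBX b h (Finset.mem_insert_of_mem h'))]
          ring
        · split_ifs at hz with h0
          · simp at hz
          obtain ⟨q, rfl⟩ := Nat.exists_eq_succ_of_ne_zero h0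
          obtain ⟨b, hb, rfl⟩ := Finset.mem_image.1 hz
          simp only [Nat.succ_eq_add_one] at *
          rw [FF_B μ q X A B hb (hB b hb) (hB0 b hb), mul_assoc ((-1) ^ _),
            RR_B hb (hB0 b hb) hA hB (by omega) hAc]
          have hc := Finset.card_erase_of_mem hb
          rw [ih p q A (B.erase b) (by omega) (by omega) (by omega) hA hA0
            (fun a h => hB a (Finset.mem_of_mem_erase h))
            (fun a h => hB0 a (Finset.mem_of_mem_erase h))
            (fun a h h' => hAX a h (Finset.mem_insert_of_mem h'))
            (fun b h h' => hBX b (Finset.mem_of_mem_erase h) (Finset.mem_insert_of_mem h'))]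
          rw [mul_add, pow_add, mul_one, neg_eq_neg_one_mul b⁻¹, mul_pow]
          ring
    have h1 := congrArg (Polynomial.eval x) key
    have hev : (∏ k ∈ X, (Polynomial.X - Polynomial.C k)).eval x = ∏ k ∈ X, (x - k) := by
      simp [Polynomial.eval_prod]
    rw [Polynomial.eval_mul, Polynomial.eval_mul, hev, Polynomial.eval_C, hPe, ← RR_SS hx] at h1
    have h2 : ∏ k ∈ X, (x - k) ≠ 0 :=
      Finset.prod_ne_zero_iff.2 fun k hk h => hx (by rw [sub_eq_zero.1 h]; exact hk)
    have h3 : FF μ q (insert x X) A B = ∫ u : Matrix.unitaryGroup (Fin N) ℂ, dD x u *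
      (star (u : Matrix (Fin N) (Fin N) ℂ).det ^ q *
      (∏ x ∈ X, dD x u) * ((∏ a ∈ A, (dD a u)⁻¹) * ∏ b ∈ B, (dB b u)⁻¹)) ∂μ := by
      unfold FF
      congr 1; ext u
      rw [Finset.prod_insert hx]; ring
    rw [h3]
    apply mul_right_cancel₀ h2
    rw [h1]; ring


lemma cont_int {N : ℕ} (μ : Measure (Matrix.unitaryGroup (Fin N) ℂ)) [IsProbabilityMeasure μ]
    (F : ℂ → Matrix.unitaryGroup (Fin N) ℂ → ℂ) {ε : ℝ} (hε : 0 < ε)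
    (hF : ContinuousOn (Function.uncurry F) (Metric.closedBall 0 ε ×ˢ Set.univ)) :
    ContinuousAt (fun t => ∫ u, F t u ∂μ) 0 := by
  obtain ⟨C, hC⟩ := ((isCompact_closedBall (0 : ℂ) ε).prod (isCompact_univ
    (X := Matrix.unitaryGroup (Fin N) ℂ))).exists_bound_of_continuousOn hF
  have hm : Metric.closedBall (0 : ℂ) ε ∈ nhds (0 : ℂ) := Metric.closedBall_mem_nhds _ hε
  refine continuousAt_of_dominated (bound := fun _ => C) ?_ ?_ (integrable_const _) ?_
  · filter_upwards [hm] with t ht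
    have : Continuous (F t) := hF.comp_continuous (f := fun u => (t, u)) (by fun_prop)
      fun u => ⟨ht, trivial⟩
    exact this.aestronglyMeasurable
  · filter_upwards [hm] with t ht
    exact ae_of_all _ fun u => hC (t, u) ⟨ht, trivial⟩
  · refine ae_of_all _ fun u => ?_
    have : ContinuousOn (fun t => F t u) (Metric.closedBall 0 ε) :=
      hF.comp (f := fun t => (t, u)) (by fun_prop) fun t ht => ⟨ht, trivial⟩
    exact this.continuousAt hm

lemma ev_ne (c : ℂ) {d : ℂ} (hd : d ≠ 0) : ∀ᶠ t in nhdsWithin (0 : ℂ) {0}ᶜ, c + t * d ≠ 0 := by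
  by_cases hc : c = 0
  · filter_upwards [self_mem_nhdsWithin] with t ht
    rw [hc, zero_add]
    exact mul_ne_zero ht hd
  · have : ContinuousAt (fun t : ℂ => c + t * d) 0 := by fun_prop
    exact (this.eventually_ne (by simpa using hc)).filter_mono nhdsWithin_le_nhds

lemma ev_inj {n : ℕ} (a : Fin n → ℂ) : ∀ᶠ t in nhdsWithin (0 : ℂ) {0}ᶜ,
    Function.Injective fun i : Fin n => a i + t * ((i : ℕ) + 1 : ℂ) := by
  have : ∀ i j : Fin n, i ≠ j → ∀ᶠ t in nhdsWithin (0 : ℂ) {0}ᶜ,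
      (a i - a j) + t * (((i : ℕ) : ℂ) - ((j : ℕ) : ℂ)) ≠ 0 := by
    intro i j hij
    apply ev_ne
    rw [sub_ne_zero]
    exact fun h => hij (Fin.ext (by exact_mod_cast h))
  have h2 : ∀ᶠ t in nhdsWithin (0 : ℂ) {0}ᶜ, ∀ i j : Fin n, i ≠ j →
      (a i - a j) + t * (((i : ℕ) : ℂ) - ((j : ℕ) : ℂ)) ≠ 0 := by
    simp only [Filter.eventually_all]
    exact this
  filter_upwards [h2] with t ht i j h
  by_contra hij
  apply ht i j hij
  simp only at h
  linear_combination h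

lemma ev_avoid {n : ℕ} (a : Fin n → ℂ) (Y : Finset ℂ) : ∀ᶠ t in nhdsWithin (0 : ℂ) {0}ᶜ,
    ∀ i : Fin n, a i + t * ((i : ℕ) + 1 : ℂ) ∉ Y := by
  rw [Filter.eventually_all]
  intro i
  have : ∀ᶠ t in nhdsWithin (0 : ℂ) {0}ᶜ, ∀ y ∈ Y, (a i - y) + t * ((i : ℕ) + 1 : ℂ) ≠ 0 := by
    rw [Filter.eventually_all_finset]
    intro y _
    apply ev_ne
    exact Nat.cast_add_one_ne_zero _
  filter_upwards [this] with t ht h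
  exact ht _ h (by ring)

lemma ev_norm {n : ℕ} (a : Fin n → ℂ) (ha : ∀ i, ‖a i‖ < 1) : ∀ᶠ t in nhds (0 : ℂ),
    ∀ i : Fin n, ‖a i + t * ((i : ℕ) + 1 : ℂ)‖ < 1 := by
  rw [Filter.eventually_all]
  intro i
  have : ContinuousAt (fun t : ℂ => ‖a i + t * ((i : ℕ) + 1 : ℂ)‖) 0 := by fun_prop
  exact this.eventually_lt continuousAt_const (by simpa using ha i)

/-- integrand for tuples -/
noncomputable def Fi {N m n : ℕ} (q : ℕ) (X : Finset ℂ) (a : Fin m → ℂ) (b : Fin n → ℂ)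
    (u : Matrix.unitaryGroup (Fin N) ℂ) : ℂ :=
  star (u : Matrix (Fin N) (Fin N) ℂ).det ^ q *
    (∏ x ∈ X, dD x u) * ((∏ i, (dD (a i) u)⁻¹) * ∏ j, (dB (b j) u)⁻¹)

noncomputable def Rh {m n : ℕ} (N q : ℕ) (X : Finset ℂ) (a : Fin m → ℂ) (b : Fin n → ℂ) : ℂ :=
  (-1) ^ (N * q) * ((∏ i, ∏ j, (1 - a i * b j)⁻¹) * ∑ S ∈ X.powerset, if S.card = q then
    (∏ l ∈ S, ∏ i, (l - a i)) * (∏ j ∈ X \ S, ∏ k, (1 - j * b k)) *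
    ∏ j ∈ X \ S, ∏ l ∈ S, (l - j)⁻¹ else 0)

lemma tuple_inj {N p q : ℕ} (μ : Measure (Matrix.unitaryGroup (Fin N) ℂ)) [μ.IsHaarMeasure]
    [IsProbabilityMeasure μ] (X : Finset ℂ) (hX : X.card = p + q)
    (a : Fin (p + N) → ℂ) (b : Fin (q + N) → ℂ)
    (ha : ∀ i, ‖a i‖ < 1) (hb : ∀ j, ‖b j‖ < 1)
    (hai : Function.Injective a) (hbi : Function.Injective b)
    (ha0 : ∀ i, a i ≠ 0) (hb0 : ∀ i, b i ≠ 0) (haX : ∀ i, a i ∉ X) (hbX : ∀ i, (b i)⁻¹ ∉ X) :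
    ∫ u, Fi q X a b u ∂μ = Rh N q X a b := by
  have h := generic μ X p q (Finset.univ.image a) (Finset.univ.image b) hX
    (by rw [Finset.card_image_of_injective _ hai]; simp)
    (by rw [Finset.card_image_of_injective _ hbi]; simp) (by simpa using ha) (by simpa using ha0)
    (by simpa using hb) (by simpa using hb0) (by simpa using haX) (by simpa using hbX)
  simp only [FF, KK, SS, TT, Finset.prod_image hai.injOn, Finset.prod_image hbi.injOn] at h
  exact h

lemma tuple_all {N p q : ℕ} (μ : Measure (Matrix.unitaryGroup (Fin N) ℂ)) [μ.IsHaarMeasure]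
    [IsProbabilityMeasure μ] (X : Finset ℂ) (hX : X.card = p + q)
    (a : Fin (p + N) → ℂ) (b : Fin (q + N) → ℂ)
    (ha : ∀ i, ‖a i‖ < 1) (hb : ∀ j, ‖b j‖ < 1) :
    ∫ u, Fi q X a b u ∂μ = Rh N q X a b := by
  set at' : ℂ → Fin (p + N) → ℂ := fun t i => a i + t * ((i : ℕ) + 1 : ℂ) with hat
  set bt' : ℂ → Fin (q + N) → ℂ := fun t i => b i + t * ((i : ℕ) + 1 : ℂ) with hbt
  have ea : at' 0 = a := by ext i; simp [hat]
  have eb : bt' 0 = b := by ext i; simp [hbt]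
  have hna := ev_norm a ha
  have hnb := ev_norm b hb
  have hL : ContinuousAt (fun t => ∫ u, Fi q X (at' t) (bt' t) u ∂μ) 0 := by
    obtain ⟨ε, hε, hball⟩ := Metric.eventually_nhds_iff_ball.1 (hna.and hnb)
    have hsub : ∀ t ∈ Metric.closedBall (0 : ℂ) (ε / 2), t ∈ Metric.ball (0 : ℂ) ε :=
      fun t ht => Metric.closedBall_subset_ball (by linarith) ht
    refine cont_int μ _ (half_pos hε) ?_
    have hdc : Continuous fun p : ℂ × Matrix.unitaryGroup (Fin N) ℂ =>
        (p.2 : Matrix (Fin N) (Fin N) ℂ).det :=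
      Continuous.matrix_det (continuous_subtype_val.comp continuous_snd)
    simp only [Function.uncurry_def, Fi]
    refine ContinuousOn.mul (Continuous.continuousOn (by fun_prop)) (ContinuousOn.mul ?_ ?_)
    · refine continuousOn_finsetProd _ fun i _ => ContinuousOn.inv₀ ?_ ?_
      · exact Continuous.continuousOn (by fun_prop)
      · rintro ⟨t, u⟩ ⟨ht, -⟩
        exact dD_ne ((hball t (hsub t ht)).1 i) u
    · refine continuousOn_finsetProd _ fun i _ => ContinuousOn.inv₀ ?_ ?_
      · exact Continuous.continuousOn (by fun_prop)
      · rintro ⟨t, u⟩ ⟨ht, -⟩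
        exact dB_ne ((hball t (hsub t ht)).2 i) u
  have hR : ContinuousAt (fun t => Rh N q X (at' t) (bt' t)) 0 := by
    unfold Rh
    refine ContinuousAt.mul continuousAt_const (ContinuousAt.mul ?_ ?_)
    · refine tendsto_finsetProd _ fun i _ => tendsto_finsetProd _ fun j _ => ?_
      refine ContinuousAt.inv₀ (Continuous.continuousAt (by fun_prop)) ?_
      rw [ea, eb]
      exact one_sub_ne (ha i) (hb j)
    · refine Continuous.continuousAt (continuous_finsetSum _ fun S _ => ?_)
      split_ifs
      · fun_prop
      · fun_prop
  have hev : ∀ᶠ t in nhdsWithin (0 : ℂ) {0}ᶜ,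
      ∫ u, Fi q X (at' t) (bt' t) u ∂μ = Rh N q X (at' t) (bt' t) := by
    filter_upwards [hna.filter_mono nhdsWithin_le_nhds, hnb.filter_mono nhdsWithin_le_nhds,
      ev_inj a, ev_inj b, ev_avoid a {0}, ev_avoid b {0}, ev_avoid a X,
      ev_avoid b (X.image fun x => x⁻¹)] with t h1 h2 h3 h4 h5 h6 h7 h8
    refine tuple_inj μ X hX _ _ h1 h2 h3 h4 (by simpa using h5) (by simpa using h6) h7 ?_
    intro i hi
    exact h8 i (Finset.mem_image.2 ⟨_, hi, inv_inv _⟩)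
  have h1 := (hL.tendsto.mono_left nhdsWithin_le_nhds).congr' hev
  have h2 := tendsto_nhds_unique h1 (hR.tendsto.mono_left nhdsWithin_le_nhds)
  rwa [ea, eb] at h2


lemma exists_perm_map {n : ℕ} {T T' : Finset (Fin n)} (h : T.card = T'.card) :
    ∃ σ : Equiv.Perm (Fin n), T.map σ.toEmbedding = T' := by
  let e : {x // x ∈ T} ≃ {x // x ∈ T'} := Finset.equivOfCardEq h
  refine ⟨e.extendSubtype, ?_⟩
  refine Finset.eq_of_subset_of_card_le ?_ (by simp [h])
  intro y hy
  obtain ⟨x, hx, rfl⟩ := Finset.mem_map.1 hy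
  exact e.extendSubtype_mem x hx

lemma sum_perm_gen {n q : ℕ} (g : Finset (Fin n) → ℂ) (T0 : Finset (Fin n)) (hT : T0.card = q) :
    (n.choose q : ℂ) * ∑ w : Equiv.Perm (Fin n), g (T0.map w.toEmbedding)
      = n.factorial * ∑ T ∈ Finset.powersetCard q Finset.univ, g T := by
  have h1 : ∀ T ∈ Finset.powersetCard q (Finset.univ : Finset (Fin n)),
      ∑ w : Equiv.Perm (Fin n), g (T.map w.toEmbedding)
        = ∑ w : Equiv.Perm (Fin n), g (T0.map w.toEmbedding) := by
    intro T hTq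
    obtain ⟨σ, rfl⟩ := exists_perm_map (hT.trans (Finset.mem_powersetCard.1 hTq).2.symm)
    refine Fintype.sum_equiv (Equiv.mulRight σ) _ _ fun w => ?_
    rw [Finset.map_map]
    rfl
  have h2 : ∀ w : Equiv.Perm (Fin n), ∑ T ∈ Finset.powersetCard q Finset.univ, g (T.map w.toEmbedding)
      = ∑ T ∈ Finset.powersetCard q Finset.univ, g T := by
    intro w
    refine Finset.sum_bij (fun T _ => T.map w.toEmbedding) ?_ ?_ ?_ ?_
    · intro T hT
      simpa [Finset.mem_powersetCard] using hT
    · intro T _ T' _ h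
      exact Finset.map_injective _ h
    · intro T hT
      refine ⟨T.map w.symm.toEmbedding, by simpa [Finset.mem_powersetCard] using hT, ?_⟩
      rw [Finset.map_map]
      ext y; simp
    · intros; rfl
  have h3 := Finset.sum_congr rfl h1
  rw [Finset.sum_comm, Finset.sum_congr rfl fun w _ => h2 w] at h3
  simp only [Finset.sum_const, Finset.card_powersetCard, Finset.card_univ, Fintype.card_perm,
    Fintype.card_fin, nsmul_eq_mul] at h3
  exact h3.symm

lemma sum_perm {p q : ℕ} (x : Fin (p + q) → ℂ) (hx : Function.Injective x) (g : Finset ℂ → ℂ) :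
    ∑ w : Equiv.Perm (Fin (p + q)), g (Finset.univ.image fun k : Fin q => x (w (Fin.natAdd p k)))
      = p.factorial * q.factorial *
        ∑ S ∈ (Finset.univ.image x).powerset, if S.card = q then g S else 0 := by
  have h := sum_perm_gen (fun T => g (T.map ⟨x, hx⟩))
    (Finset.univ.map (Fin.natAddEmb p : Fin q ↪ Fin (p + q))) (q := q) (by simp)
  have h1 : ∑ S ∈ (Finset.univ.image x).powerset, (if S.card = q then g S else 0)
      = ∑ T ∈ Finset.powersetCard q Finset.univ, g (T.map ⟨x, hx⟩) := by
    rw [← Finset.sum_filter, ← Finset.powersetCard_eq_filter,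
      show Finset.univ.image x = Finset.univ.map ⟨x, hx⟩ from (Finset.map_eq_image ⟨x, hx⟩ _).symm,
      Finset.powersetCard_map, Finset.sum_map]
    rfl
  have h2 : ∀ w : Equiv.Perm (Fin (p + q)),
      (Finset.univ.image fun k : Fin q => x (w (Fin.natAdd p k)))
      = ((Finset.univ.map (Fin.natAddEmb p : Fin q ↪ Fin (p + q))).map w.toEmbedding).map ⟨x, hx⟩ := by
    intro w
    simp only [Finset.map_eq_image, Finset.image_image]
    rfl
  simp_rw [h1, h2]
  have h3 : ((p + q).choose q : ℂ) * (p.factorial * q.factorial) = (p + q).factorial := by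
    have := Nat.add_choose_mul_factorial_mul_factorial p q
    rw [← this]; push_cast; ring
  have h4 : ((p + q).choose q : ℂ) ≠ 0 := by
    exact_mod_cast (Nat.choose_pos (Nat.le_add_left q p)).ne'
  apply mul_left_cancel₀ h4
  rw [h, ← h3]; ring

lemma prod_filter_lt {p q : ℕ} {M : Type*} [CommMonoid M] (f : Fin (p + q) → M) :
    ∏ j ∈ Finset.univ.filter (fun j : Fin (p + q) => (j : ℕ) < p), f j
      = ∏ j : Fin p, f (Fin.castAdd q j) := by
  rw [Finset.prod_filter, Fin.prod_univ_add]
  simp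

lemma prod_filter_ge {p q : ℕ} {M : Type*} [CommMonoid M] (f : Fin (p + q) → M) :
    ∏ j ∈ Finset.univ.filter (fun j : Fin (p + q) => p ≤ (j : ℕ)), f j
      = ∏ j : Fin q, f (Fin.natAdd p j) := by
  rw [Finset.prod_filter, Fin.prod_univ_add]
  have : ∀ i : Fin p, ¬ p ≤ (i : ℕ) := fun i => by omega
  simp [this]

lemma padded {N p q p' q' r s : ℕ} (μ : Measure (Matrix.unitaryGroup (Fin N) ℂ)) [μ.IsHaarMeasure]
    [IsProbabilityMeasure μ] (X : Finset ℂ) (hX : X.card = p + q)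
    (hr : p + N = p' + r) (hs : q + N = q' + s)
    (a : Fin p' → ℂ) (b : Fin q' → ℂ)
    (ha : ∀ i, ‖a i‖ < 1) (hb : ∀ j, ‖b j‖ < 1) :
    ∫ u, Fi q X a b u ∂μ = (-1) ^ (N * q) * ((∏ i, ∏ j, (1 - a i * b j)⁻¹) *
      ∑ S ∈ X.powerset, if S.card = q then
    (∏ l ∈ S, (∏ i, (l - a i)) * l ^ r) * (∏ j ∈ X \ S, ∏ k, (1 - j * b k)) *
    ∏ j ∈ X \ S, ∏ l ∈ S, (l - j)⁻¹ else 0) := by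
  have gen : ∀ (m n : ℕ) (hm : p + N = m) (hn : q + N = n) (a : Fin m → ℂ) (b : Fin n → ℂ)
    (ha : ∀ i, ‖a i‖ < 1) (hb : ∀ j, ‖b j‖ < 1), ∫ u, Fi q X a b u ∂μ = Rh N q X a b := by
    rintro m n rfl rfl a b ha hb
    exact tuple_all μ X hX a b ha hb
  have h := gen _ _ hr hs (Fin.append a fun _ => 0) (Fin.append b fun _ => 0) ?_ ?_
  · have d0 : ∀ u : Matrix.unitaryGroup (Fin N) ℂ, dD 0 u = 1 := fun u => by simp [dD]
    have b0 : ∀ u : Matrix.unitaryGroup (Fin N) ℂ, dB 0 u = 1 := fun u => by simp [dB]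
    simpa [Fi, Rh, Fin.prod_univ_add, d0, b0] using h
  · intro i
    refine Fin.addCases (fun i => ?_) (fun i => ?_) i <;> simp [ha]
  · intro i
    refine Fin.addCases (fun i => ?_) (fun i => ?_) i <;> simp [hb]


lemma term_eq {N p q p' q' r : ℕ} (hr : p + N = p' + r) (x yL : Fin q → ℂ) (yJ : Fin p → ℂ)
    (a : Fin p' → ℂ) (b : Fin q' → ℂ) (hx : ∀ l, x l ≠ 0) (hL : ∀ l, yL l ≠ 0) :
    (∏ l, (-(x l)⁻¹) ^ N) * ((-1) ^ (N * q) * ((∏ i, ∏ j, (1 - a i * b j)⁻¹) *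
      ((∏ l, (∏ i, (yL l - a i)) * yL l ^ r) * (∏ j, ∏ k, (1 - yJ j * b k)) *
        ∏ j, ∏ l, (yL l - yJ j)⁻¹)))
    = (∏ l, (yL l / x l) ^ N) * (((∏ i, ∏ l, (1 - a i / yL l)) * ∏ j, ∏ k, (1 - yJ j * b k)) /
      ((∏ j, ∏ l, (1 - yJ j / yL l)) * ∏ i, ∏ j, (1 - a i * b j))) := by
  have hY : ∏ l, yL l ≠ 0 := Finset.prod_ne_zero_iff.2 fun l _ => hL l
  have hZ : ∏ l, x l ≠ 0 := Finset.prod_ne_zero_iff.2 fun l _ => hx l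
  have h1 : ∏ l, (∏ i, (yL l - a i)) * yL l ^ r
      = (∏ l, yL l) ^ (p + N) * ∏ i, ∏ l, (1 - a i / yL l) := by
    rw [Finset.prod_comm, ← Finset.prod_pow, ← Finset.prod_mul_distrib]
    refine Finset.prod_congr rfl fun l _ => ?_
    have : ∏ i, (yL l - a i) = yL l ^ p' * ∏ i, (1 - a i / yL l) := by
      rw [show yL l ^ p' = ∏ _i : Fin p', yL l by simp, ← Finset.prod_mul_distrib]
      refine Finset.prod_congr rfl fun i _ => ?_
      have := hL l
      field_simp
    rw [this, hr, pow_add]; ring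
  have h2 : ∏ j, ∏ l, (yL l - yJ j)⁻¹ = ((∏ l, yL l) ^ p)⁻¹ * (∏ j, ∏ l, (1 - yJ j / yL l))⁻¹ := by
    rw [show (∏ l, yL l) ^ p = ∏ _j : Fin p, ∏ l, yL l by simp]
    simp only [← Finset.prod_inv_distrib]
    rw [← Finset.prod_mul_distrib]
    refine Finset.prod_congr rfl fun j _ => ?_
    rw [← Finset.prod_mul_distrib]
    refine Finset.prod_congr rfl fun l _ => ?_
    rw [← mul_inv]
    congr 1
    have := hL l
    field_simp
  have h3 : ∏ l, (-(x l)⁻¹) ^ N = (-1) ^ (N * q) * ((∏ l, x l) ^ N)⁻¹ := by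
    rw [Finset.prod_pow, mul_comm N q, pow_mul, ← inv_pow, ← mul_pow, ← Finset.prod_inv_distrib]
    congr 1
    rw [show (-1 : ℂ) ^ q = ∏ _j : Fin q, (-1 : ℂ) by simp, ← Finset.prod_mul_distrib]
    exact Finset.prod_congr rfl fun l _ => by ring
  have h4 : ∏ l, (yL l / x l) ^ N = (∏ l, yL l) ^ N * ((∏ l, x l) ^ N)⁻¹ := by
    rw [Finset.prod_pow, Finset.prod_div_distrib, div_pow, div_eq_mul_inv]
  have h5 : ((-1 : ℂ) ^ (N * q)) * (-1) ^ (N * q) = 1 := by rw [← mul_pow]; simp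
  rw [h1, h2, h3, h4, div_eq_mul_inv, mul_inv]
  simp only [Finset.prod_inv_distrib]
  rw [pow_add]
  have h6 : (∏ l, yL l) ^ p * ((∏ l, yL l) ^ p)⁻¹ = 1 := mul_inv_cancel₀ (pow_ne_zero _ hY)
  generalize ∏ j, ∏ l, (1 - yJ j / yL l) = t1
  generalize ∏ i, ∏ l, (1 - a i / yL l) = t2
  generalize ∏ i, ∏ j, (1 - a i * b j) = t3
  generalize ∏ j, ∏ k, (1 - yJ j * b k) = t4
  generalize ((∏ l, x l) ^ N)⁻¹ = t5
  generalize ((∏ l, yL l) ^ p)⁻¹ = t6 at *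
  generalize ((∏ l, yL l) ^ p) = t7 at *
  generalize ((∏ l, yL l) ^ N) = t8 at *
  generalize (-1 : ℂ) ^ (N * q) = t9 at *
  linear_combination t1⁻¹ * t2 * t3⁻¹ * t4 * t5 * t8 * (t6 * t7 * h5 + h6)

lemma main_aux {N p q p' q' : ℕ} (hp' : p' ≤ p + N) (hq' : q' ≤ q + N)
    (x : Fin (p + q) → ℂ) (hx : Function.Injective x) (hx0 : ∀ k, x k ≠ 0)
    (a : Fin p' → ℂ) (b : Fin q' → ℂ) (ha : ∀ i, ‖a i‖ < 1) (hb : ∀ j, ‖b j‖ < 1)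
    (μ : Measure (Matrix.unitaryGroup (Fin N) ℂ))
    [μ.IsHaarMeasure] [IsProbabilityMeasure μ] :
    ∫ u : Matrix.unitaryGroup (Fin N) ℂ,
      ((∏ j : Fin p, dD (x (Fin.castAdd q j)) u) * ∏ l : Fin q, dB (x (Fin.natAdd p l))⁻¹ u) /
      ((∏ i, dD (a i) u) * ∏ j, dB (b j) u) ∂μ
    = (1 / ((p.factorial : ℂ) * (q.factorial : ℂ))) * ∑ w : Equiv.Perm (Fin (p + q)),
      (∏ l : Fin q, (x (w (Fin.natAdd p l)) / x (Fin.natAdd p l)) ^ N) *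
      (((∏ i, ∏ l : Fin q, (1 - a i / x (w (Fin.natAdd p l)))) *
        ∏ j : Fin p, ∏ k, (1 - x (w (Fin.castAdd q j)) * b k)) /
      ((∏ j : Fin p, ∏ l : Fin q, (1 - x (w (Fin.castAdd q j)) / x (w (Fin.natAdd p l)))) *
        ∏ i, ∏ j, (1 - a i * b j))) := by
  obtain ⟨r, hr⟩ := Nat.exists_eq_add_of_le hp'
  obtain ⟨s, hs⟩ := Nat.exists_eq_add_of_le hq'
  set X : Finset ℂ := Finset.univ.image x with hXd
  have hX : X.card = p + q := by rw [hXd, Finset.card_image_of_injective _ hx]; simp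
  have h1 : ∀ u : Matrix.unitaryGroup (Fin N) ℂ,
      ((∏ j : Fin p, dD (x (Fin.castAdd q j)) u) * ∏ l : Fin q, dB (x (Fin.natAdd p l))⁻¹ u) /
      ((∏ i, dD (a i) u) * ∏ j, dB (b j) u)
      = (∏ l : Fin q, (-(x (Fin.natAdd p l))⁻¹) ^ N) * Fi q X a b u := by
    intro u
    simp only [Fi, hXd, Finset.prod_image hx.injOn, Fin.prod_univ_add]
    have : ∀ l : Fin q, dB (x (Fin.natAdd p l))⁻¹ u = (-(x (Fin.natAdd p l))⁻¹) ^ N *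
        star (u : Matrix (Fin N) (Fin N) ℂ).det * dD (x (Fin.natAdd p l)) u := fun l => by
      rw [dB_dD (inv_ne_zero (hx0 _)), inv_inv]
    simp_rw [this]
    rw [Finset.prod_mul_distrib, Finset.prod_mul_distrib, div_eq_mul_inv, mul_inv]
    simp only [Finset.prod_inv_distrib, Finset.prod_const, Finset.card_univ, Fintype.card_fin]
    ring
  simp_rw [h1]
  rw [integral_const_mul, padded μ X hX hr hs a b ha hb]
  have hf : ((p.factorial : ℂ) * (q.factorial : ℂ)) ≠ 0 := by
    exact_mod_cast mul_ne_zero p.factorial_ne_zero q.factorial_ne_zero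
  have h2 := sum_perm x hx (fun S => (∏ l ∈ S, (∏ i, (l - a i)) * l ^ r) *
    (∏ j ∈ X \ S, ∏ k, (1 - j * b k)) * ∏ j ∈ X \ S, ∏ l ∈ S, (l - j)⁻¹)
  rw [← hXd] at h2
  have h3 := (eq_div_iff hf).2 ((mul_comm _ _).trans h2.symm)
  rw [h3, div_eq_mul_one_div, mul_comm _ (1 / _)]
  have e : ∀ c1 c2 c3 c4 c5 : ℂ, c1 * (c2 * (c3 * (c4 * c5))) = c4 * (c1 * (c2 * (c3 * c5))) :=
    fun _ _ _ _ _ => by ring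
  rw [e]
  congr 1
  rw [Finset.mul_sum, Finset.mul_sum, Finset.mul_sum]
  refine Finset.sum_congr rfl fun w _ => ?_
  have iL : Function.Injective fun l : Fin q => x (w (Fin.natAdd p l)) :=
    hx.comp (w.injective.comp (Fin.natAdd_injective q p))
  have iJ : Function.Injective fun l : Fin p => x (w (Fin.castAdd q l)) :=
    hx.comp (w.injective.comp (Fin.castAdd_injective p q))
  have hsd : X \ (Finset.univ.image fun l : Fin q => x (w (Fin.natAdd p l)))
      = Finset.univ.image fun l : Fin p => x (w (Fin.castAdd q l)) := by
    ext y
    simp only [hXd, Finset.mem_sdiff, Finset.mem_image, Finset.mem_univ, true_and]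
    constructor
    · rintro ⟨⟨k, rfl⟩, hk⟩
      obtain ⟨k', rfl⟩ := w.surjective k
      induction k' using Fin.addCases with
      | left i => exact ⟨i, rfl⟩
      | right i => exact absurd ⟨i, rfl⟩ hk
    · rintro ⟨l, rfl⟩
      refine ⟨⟨_, rfl⟩, ?_⟩
      rintro ⟨k, hk⟩
      have := w.injective (hx hk)
      have := congrArg Fin.val this
      simp at this
      omega
  simp only [hsd, Finset.prod_image iL.injOn, Finset.prod_image iJ.injOn]
  exact term_eq hr _ _ _ a b (fun l => hx0 _) (fun l => hx0 _)

theorem autocorrelation_ratios_charpoly_unitary_unequal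
    (N p q p' q' : ℕ) (hN : 1 ≤ N) (hp : 1 ≤ p) (hq : 1 ≤ q)
    (hp' : p' ≤ p + N) (hq' : q' ≤ q + N)
    (ψ : Fin (p + q) → ℂ) (φ : Fin (p' + q') → ℂ)
    (hdist : Function.Injective fun k : Fin (p + q) => Complex.exp (Complex.I * ψ k))
    (hφneg : ∀ j' : Fin (p' + q'), (j' : ℕ) < p' → (φ j').re < 0)
    (hφpos : ∀ l' : Fin (p' + q'), p' ≤ (l' : ℕ) → 0 < (φ l').re)
    (μ : Measure (Matrix.unitaryGroup (Fin N) ℂ))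
    [μ.IsHaarMeasure] [IsProbabilityMeasure μ] :
    (∫ u : Matrix.unitaryGroup (Fin N) ℂ,
      ((∏ j ∈ Finset.univ.filter (fun j : Fin (p + q) => (j : ℕ) < p),
          Matrix.det (1 - Complex.exp (Complex.I * ψ j) • (u : Matrix (Fin N) (Fin N) ℂ))) *
        (∏ l ∈ Finset.univ.filter (fun l : Fin (p + q) => p ≤ (l : ℕ)),
          Matrix.det (1 - Complex.exp (-(Complex.I * ψ l)) •
            ((u : Matrix (Fin N) (Fin N) ℂ).map (starRingEnd ℂ))))) /
      ((∏ j' ∈ Finset.univ.filter (fun j' : Fin (p' + q') => (j' : ℕ) < p'),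
          Matrix.det (1 - Complex.exp (φ j') • (u : Matrix (Fin N) (Fin N) ℂ))) *
        (∏ l' ∈ Finset.univ.filter (fun l' : Fin (p' + q') => p' ≤ (l' : ℕ)),
          Matrix.det (1 - Complex.exp (-(φ l')) •
            ((u : Matrix (Fin N) (Fin N) ℂ).map (starRingEnd ℂ))))) ∂μ)
    = (1 / ((p.factorial : ℂ) * (q.factorial : ℂ))) *
        ∑ w : Equiv.Perm (Fin (p + q)),
          (∏ k ∈ Finset.univ.filter (fun k : Fin (p + q) => p ≤ (k : ℕ)),
              Complex.exp ((N : ℂ) * Complex.I * (ψ (w k) - ψ k))) *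
            (((∏ j' ∈ Finset.univ.filter (fun j' : Fin (p' + q') => (j' : ℕ) < p'),
                ∏ l ∈ Finset.univ.filter (fun l : Fin (p + q) => p ≤ (l : ℕ)),
                  (1 - Complex.exp (φ j' - Complex.I * ψ (w l)))) *
              (∏ j ∈ Finset.univ.filter (fun j : Fin (p + q) => (j : ℕ) < p),
                ∏ l' ∈ Finset.univ.filter (fun l' : Fin (p' + q') => p' ≤ (l' : ℕ)),
                  (1 - Complex.exp (Complex.I * ψ (w j) - φ l')))) /
             ((∏ j ∈ Finset.univ.filter (fun j : Fin (p + q) => (j : ℕ) < p),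
                ∏ l ∈ Finset.univ.filter (fun l : Fin (p + q) => p ≤ (l : ℕ)),
                  (1 - Complex.exp (Complex.I * ψ (w j) - Complex.I * ψ (w l)))) *
              (∏ j' ∈ Finset.univ.filter (fun j' : Fin (p' + q') => (j' : ℕ) < p'),
                ∏ l' ∈ Finset.univ.filter (fun l' : Fin (p' + q') => p' ≤ (l' : ℕ)),
                  (1 - Complex.exp (φ j' - φ l'))))) := by
  simp only [prod_filter_lt, prod_filter_ge]
  have h := main_aux hp' hq' (fun k => Complex.exp (Complex.I * ψ k)) hdist
    (fun k => Complex.exp_ne_zero _) (fun i : Fin p' => Complex.exp (φ (Fin.castAdd q' i)))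
    (fun i : Fin q' => Complex.exp (-φ (Fin.natAdd p' i))) ?_ ?_ μ
  · simp only [dD, dB, ← Complex.exp_neg] at h
    rw [h]
    congr 1
    refine Finset.sum_congr rfl fun w _ => ?_
    have e1 : ∀ s t : ℂ, Complex.exp ((N : ℂ) * Complex.I * (s - t))
        = (Complex.exp (Complex.I * s) / Complex.exp (Complex.I * t)) ^ N := by
      intro s t
      rw [← Complex.exp_sub, ← Complex.exp_nat_mul]; congr 1; ring
    have e2 : ∀ s t : ℂ, Complex.exp (Complex.I * s - t)
        = Complex.exp (Complex.I * s) * Complex.exp (-t) := by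
      intro s t
      rw [← Complex.exp_add, sub_eq_add_neg]
    have e3 : ∀ s t : ℂ, Complex.exp (s - Complex.I * t)
        = Complex.exp s / Complex.exp (Complex.I * t) := by
      intro s t
      rw [Complex.exp_sub]
    have e4 : ∀ j' l', Complex.exp (φ j' - φ l') = Complex.exp (φ j') * Complex.exp (-φ l') := by
      intro s t
      rw [← Complex.exp_add, sub_eq_add_neg]
    simp only [e1, e3, e4]
    simp only [e2]
  · intro i
    rw [Complex.norm_exp, Real.exp_lt_one_iff]
    exact hφneg _ (by simp)
  · intro i
    rw [Complex.norm_exp, Real.exp_lt_one_iff]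
    simpa using hφpos (Fin.natAdd p' i) (by simp)
end

section
/- Let N ≥ 1 and p, q ≥ 1 be integers, and let ψ_1, …, ψ_{p+q} be complex numbers such that e^{iψ_1}, …, e^{iψ_{p+q}} are pairwise distinct. Then ∫_{U(N)} ∏_{j=1}^{p} det(1_N − e^{iψ_j} u) · ∏_{l=p+1}^{p+q} det(e^{iψ_l}·1_N − ū) du = (1/(p!·q!)) · ∑_{w ∈ S_{p+q}} ∏_{l=p+1}^{p+q} e^{N·iψ_{w(l)}} · ∏_{j=1}^{p} ∏_{l=p+1}^{p+q} (1 − e^{iψ_{w(j)} − iψ_{w(l)}})^{-1}. -/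
open MeasureTheory Matrix

set_option linter.unusedSectionVars false
set_option linter.unusedSimpArgs false


namespace ACP

lemma det_add_rank_one {m : Type*} [Fintype m] [DecidableEq m] {R : Type*} [CommRing R]
    (M : Matrix m m R) (a b : m → R) :
    (M + vecMulVec a b).det = M.det + b ⬝ᵥ (M.adjugate *ᵥ a) := by
  have key : ∀ S : Finset m,
      (Matrix.of fun i j => M i j + if i ∈ S then a i * b j else 0).det
        = M.det + ∑ i ∈ S, a i * (M.updateRow i b).det := by
    intro S
    induction S using Finset.induction_on with
    | empty => simp; rfl
    | insert i S hi ih =>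
      rw [Finset.sum_insert hi]
      set MS : Matrix m m R := Matrix.of fun i j => M i j + if i ∈ S then a i * b j else 0 with hMS
      have h1 : (Matrix.of fun i' j => M i' j + if i' ∈ insert i S then a i' * b j else 0)
          = MS.updateRow i (MS i + a i • b) := by
        ext i' j
        by_cases h : i' = i
        · subst h; simp [hMS, hi]
        · simp [hMS, h]
      have h2 : (MS.updateRow i b).det = (M.updateRow i b).det := by
        apply Matrix.det_eq_of_forall_row_eq_smul_add_const
          (fun i' => if i' ∈ S then a i' else 0) i (by simp [hi])
        intro i' j
        by_cases h : i' = i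
        · subst h; simp [hi]
        · by_cases h' : i' ∈ S <;> simp [hMS, h, h']
      rw [h1, Matrix.det_updateRow_add, Matrix.det_updateRow_smul, Matrix.updateRow_eq_self, ih, h2]
      ring
  have h := key Finset.univ
  have e : (M + vecMulVec a b) = (Matrix.of fun i j => M i j + if i ∈ Finset.univ then a i * b j else 0) := by
    ext i j; simp [vecMulVec_apply]
  rw [e, h, dotProduct_mulVec, dotProduct_comm]
  congr 1
  simp only [dotProduct]
  refine Finset.sum_congr rfl fun i _ => ?_
  congr 1
  rw [← Matrix.cramer_transpose_apply, Matrix.cramer_eq_adjugate_mulVec, ← Matrix.adjugate_transpose,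
    Matrix.mulVec_transpose]

lemma deriv_prod {ι : Type*} [DecidableEq ι] {K R : Type*} [CommRing K] [CommRing R] [Algebra K R]
    (D : Derivation K R R) (s : Finset ι) (f : ι → R) :
    D (∏ i ∈ s, f i) = ∑ i ∈ s, (∏ j ∈ s.erase i, f j) * D (f i) := by
  induction s using Finset.induction_on with
  | empty => simp
  | insert a s ha ih =>
    rw [Finset.prod_insert ha, Derivation.leibniz, ih, Finset.sum_insert ha, Finset.erase_insert ha]
    simp only [smul_eq_mul]
    rw [add_comm, Finset.mul_sum]
    congr 1
    refine Finset.sum_congr rfl fun i hi => ?_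
    have : i ≠ a := fun h => ha (h ▸ hi)
    rw [Finset.erase_insert_of_ne this.symm, Finset.prod_insert (by simp [ha])]
    ring

lemma deriv_det {m : Type*} [Fintype m] [DecidableEq m] {K R : Type*} [CommRing K] [CommRing R]
    [Algebra K R] (D : Derivation K R R) (M : Matrix m m R) :
    D M.det = (M.adjugate * M.map D).trace := by
  have h1 : ∀ i, (M.adjugate * M.map D) i i = (M.updateCol i (fun j => D (M j i))).det := by
    intro i
    rw [← Matrix.cramer_apply, Matrix.cramer_eq_adjugate_mulVec]
    simp [Matrix.mul_apply, Matrix.mulVec, dotProduct]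
  simp only [Matrix.trace, Matrix.diag, h1]
  simp only [Matrix.det_apply, map_sum]
  rw [Finset.sum_comm]
  refine Finset.sum_congr rfl fun σ _ => ?_
  rw [← Finset.smul_sum]
  rw [show D ((Equiv.Perm.sign σ) • ∏ i, M (σ i) i) = (Equiv.Perm.sign σ) • D (∏ i, M (σ i) i) by
    simp only [Units.smul_def]; exact map_zsmul D _ _]
  rw [deriv_prod]
  congr 1
  refine Finset.sum_congr rfl fun i _ => ?_
  rw [← Finset.prod_erase_mul Finset.univ _ (Finset.mem_univ i)]
  congr 1
  · refine Finset.prod_congr rfl fun j hj => ?_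
    rw [Matrix.updateCol_ne (Finset.ne_of_mem_erase hj)]
  · simp

end ACP


namespace ACP
section gen
open MvPolynomial
variable {σ : Type*} [Fintype σ] [DecidableEq σ] {A : Type*} [CommRing A]

/-- Euler derivation. -/
noncomputable def th (k : σ) : Derivation A (MvPolynomial σ A) (MvPolynomial σ A) :=
  (X k : MvPolynomial σ A) • pderiv k

lemma th_apply (k : σ) (f : MvPolynomial σ A) : th k f = X k * pderiv k f := rfl

lemma th_monomial (k : σ) (m : σ →₀ ℕ) (a : A) :
    th k (monomial m a) = (m k : MvPolynomial σ A) * monomial m a := by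
  rw [th_apply, X_mul_pderiv_monomial, nsmul_eq_mul]

lemma coeff_th (k : σ) (f : MvPolynomial σ A) (m : σ →₀ ℕ) :
    coeff m (th k f) = (m k : A) * coeff m f := by
  induction f using MvPolynomial.induction_on' with
  | monomial m' a =>
    rw [th_monomial, ← map_natCast (C : A →+* MvPolynomial σ A), coeff_C_mul, coeff_monomial]
    split_ifs with h
    · rw [h]
    · simp
  | add p q hp hq => rw [map_add, coeff_add, hp, hq, coeff_add, mul_add]

variable [Algebra ℂ A]

/-- Coefficientwise application of a linear functional. -/
noncomputable def lft (L : A →ₗ[ℂ] ℂ) : MvPolynomial σ A →ₗ[ℂ] MvPolynomial σ ℂ where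
  toFun f := ∑ m ∈ f.support, monomial m (L (coeff m f))
  map_add' f g := by
    ext m
    simp only [coeff_sum, coeff_monomial, coeff_add, Finset.sum_ite_eq', mem_support_iff]
    split_ifs <;> simp_all [← map_add]
  map_smul' c f := by
    ext m
    simp only [coeff_sum, coeff_monomial, coeff_smul, Finset.sum_ite_eq', mem_support_iff,
      RingHom.id_apply, smul_eq_mul]
    split_ifs <;> simp_all [← map_smul]

lemma coeff_lft (L : A →ₗ[ℂ] ℂ) (f : MvPolynomial σ A) (m : σ →₀ ℕ) :
    coeff m (lft L f) = L (coeff m f) := by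
  simp only [lft, LinearMap.coe_mk, AddHom.coe_mk, coeff_sum, coeff_monomial, Finset.sum_ite_eq', mem_support_iff]
  split_ifs <;> simp_all

lemma lft_X_mul (L : A →ₗ[ℂ] ℂ) (k : σ) (f : MvPolynomial σ A) :
    lft L (X k * f) = X k * lft L f := by
  ext m
  rw [coeff_lft, coeff_X_mul', coeff_X_mul', coeff_lft]
  split_ifs <;> simp

lemma lft_th (L : A →ₗ[ℂ] ℂ) (k : σ) (f : MvPolynomial σ A) :
    lft L (th k f) = th k (lft L f) := by
  ext m
  rw [coeff_lft, coeff_th, coeff_th, coeff_lft, ← nsmul_eq_mul, map_nsmul, nsmul_eq_mul]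

lemma lft_eval (L : A →ₗ[ℂ] ℂ) (x : σ → ℂ) (f : MvPolynomial σ A) :
    eval x (lft L f) = L (eval (fun k => algebraMap ℂ A (x k)) f) := by
  induction f using MvPolynomial.induction_on' with
  | monomial m a =>
    have : lft L (monomial m a) = monomial m (L a) := by
      ext m'
      rw [coeff_lft, coeff_monomial, coeff_monomial]
      split_ifs <;> simp
    rw [this, eval_monomial, eval_monomial]
    simp only [← map_pow, Finsupp.prod]
    rw [← map_prod, mul_comm a, ← Algebra.smul_def, map_smul, smul_eq_mul, mul_comm]
  | add p q hp hq => simp only [map_add, hp, hq]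

variable {N : ℕ}

/-- The matrix `1 - X_k u`. -/
noncomputable def Mm (u : Matrix (Fin N) (Fin N) A) (k : σ) : Matrix (Fin N) (Fin N) (MvPolynomial σ A) :=
  1 - (X k : MvPolynomial σ A) • u.map C

/-- The matrix `X_k u adj(1 - X_k u)`. -/
noncomputable def Ww (u : Matrix (Fin N) (Fin N) A) (k : σ) : Matrix (Fin N) (Fin N) (MvPolynomial σ A) :=
  (X k : MvPolynomial σ A) • (u.map C * (Mm u k).adjugate)

/-- The characteristic polynomial in `X_k`. -/
noncomputable def fk (u : Matrix (Fin N) (Fin N) A) (k : σ) : MvPolynomial σ A := (Mm u k).det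

lemma fk_eq (u : Matrix (Fin N) (Fin N) A) (k : σ) :
    fk u k = Polynomial.aeval (X k) u.charpolyRev := by
  rw [fk, Matrix.charpolyRev, AlgHom.map_det]
  congr 1
  refine Matrix.ext fun i j => ?_
  by_cases h : i = j <;> simp [Mm, Matrix.one_apply, h, MvPolynomial.algebraMap_eq] <;> ring

lemma charpolyRev_natDegree (u : Matrix (Fin N) (Fin N) A) : u.charpolyRev.natDegree ≤ N := by
  nontriviality A
  rw [← Matrix.reverse_charpoly]
  refine (Polynomial.reverse_natDegree_le _).trans ?_
  rw [Matrix.charpoly_natDegree_eq_dim]; simp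

lemma charpolyRev_coeff_zero (u : Matrix (Fin N) (Fin N) A) : u.charpolyRev.coeff 0 = 1 := by
  rw [Polynomial.coeff_zero_eq_eval_zero, Matrix.eval_charpolyRev]

lemma charpolyRev_coeff_top [Nontrivial A] (u : Matrix (Fin N) (Fin N) A) :
    u.charpolyRev.coeff N = (-1) ^ N * u.det := by
  rw [← Matrix.reverse_charpoly, Polynomial.coeff_reverse, Matrix.charpoly_natDegree_eq_dim]
  simp only [Fintype.card_fin]
  rw [Polynomial.revAt_le le_rfl]
  simp only [Nat.sub_self]
  rw [Matrix.det_eq_sign_charpoly_coeff, ← mul_assoc, Fintype.card_fin, ← mul_pow]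
  simp

lemma coeff_f (u : Matrix (Fin N) (Fin N) A) (m : σ →₀ ℕ) :
    coeff m (∏ k, fk u k) = ∏ k, u.charpolyRev.coeff (m k) := by
  have h1 : ∀ k : σ, fk u k = ∑ a ∈ Finset.range (N + 1),
      monomial (Finsupp.single k a) (u.charpolyRev.coeff a) := by
    intro k
    rw [fk_eq, Polynomial.aeval_eq_sum_range' (Nat.lt_succ_of_le (charpolyRev_natDegree u))]
    refine Finset.sum_congr rfl fun a _ => ?_
    rw [X_pow_eq_monomial, smul_monomial, smul_eq_mul, mul_one]
  simp only [h1]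
  rw [Finset.prod_univ_sum, coeff_sum]
  have h2 : ∀ α : σ → ℕ, (∏ k, monomial (Finsupp.single k (α k)) (u.charpolyRev.coeff (α k)))
      = monomial (Finsupp.equivFunOnFinite.symm α) (∏ k, u.charpolyRev.coeff (α k)) := by
    intro α
    rw [← monomial_sum_prod]
    congr 2
    ext k
    simp [Finsupp.finsetSum_apply, Finsupp.single_apply]
  simp only [h2, coeff_monomial]
  by_cases hm : ∀ k, m k ∈ Finset.range (N + 1)
  · rw [Finset.sum_eq_single (fun k => m k)]
    · rw [if_pos]
      ext k; simp
    · intro α _ hα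
      rw [if_neg]
      rintro rfl
      exact hα (by ext k; simp)
    · intro h
      exact absurd (Fintype.mem_piFinset.2 hm) h
  · push Not at hm
    obtain ⟨k, hk⟩ := hm
    rw [Finset.sum_eq_zero, Finset.prod_eq_zero (Finset.mem_univ k)]
    · apply Polynomial.coeff_eq_zero_of_natDegree_lt
      have := charpolyRev_natDegree u
      simp at hk; omega
    · intro α hα
      rw [if_neg]
      rintro rfl
      exact hk (by simpa using Fintype.mem_piFinset.1 hα k)

lemma th_fk_self (u : Matrix (Fin N) (Fin N) A) (k : σ) :
    th k (fk u k) = - (Ww u k).trace := by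
  rw [fk, deriv_det]
  have : (Mm u k).map (th k) = - ((X k : MvPolynomial σ A) • u.map C) := by
    refine Matrix.ext fun i j => ?_
    have h1 : th k ((1 : Matrix (Fin N) (Fin N) (MvPolynomial σ A)) i j) = 0 := by
      by_cases h : i = j <;> simp [Matrix.one_apply, h]
    simp only [Mm, Matrix.map_apply, Matrix.sub_apply, map_sub, h1, Matrix.smul_apply, smul_eq_mul,
      Derivation.leibniz, Matrix.neg_apply]
    simp [th_apply]
    ring
  rw [this, Ww, Matrix.mul_neg, Matrix.trace_neg, Matrix.mul_smul, Matrix.trace_smul,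
    Matrix.trace_smul, Matrix.trace_mul_comm]

lemma th_fk_ne (u : Matrix (Fin N) (Fin N) A) {k l : σ} (h : l ≠ k) :
    th k (fk u l) = 0 := by
  rw [fk, deriv_det]
  have : (Mm u l).map (th k) = 0 := by
    refine Matrix.ext fun i j => ?_
    have h1 : th k ((1 : Matrix (Fin N) (Fin N) (MvPolynomial σ A)) i j) = 0 := by
      by_cases h : i = j <;> simp [Matrix.one_apply, h]
    simp only [Mm, Matrix.map_apply, Matrix.sub_apply, map_sub, h1, Matrix.smul_apply, smul_eq_mul,
      Derivation.leibniz]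
    simp [th_apply, pderiv_X, h]
  rw [this]; simp

lemma Ww_mul (u : Matrix (Fin N) (Fin N) A) (k l : σ) :
    (X k - X l) * (Ww u k * Ww u l).trace
      = X l * fk u l * (Ww u k).trace - X k * fk u k * (Ww u l).trace := by
  have h0 : (X k - X l : MvPolynomial σ A) • u.map C = Mm u l - Mm u k := by
    simp only [Mm, sub_smul]; abel
  have h1 : (X k - X l : MvPolynomial σ A) • (Ww u k * Ww u l)
      = (X l * fk u l) • Ww u k - (X k * fk u k) • Ww u l := by
    have e : (X k - X l : MvPolynomial σ A) • (Ww u k * Ww u l)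
        = (X k * X l : MvPolynomial σ A) • (u.map C * ((Mm u k).adjugate *
            ((X k - X l : MvPolynomial σ A) • u.map C) * (Mm u l).adjugate)) := by
      simp only [Ww, Matrix.smul_mul, Matrix.mul_smul, smul_smul, Matrix.mul_assoc]
      congr 1; ring
    rw [e, h0, Matrix.mul_sub, Matrix.sub_mul, Matrix.mul_assoc _ (Mm u l), Matrix.mul_adjugate,
      Matrix.adjugate_mul, Matrix.mul_sub, smul_sub]
    simp only [Ww, fk, Matrix.smul_mul, Matrix.mul_smul, smul_smul, Matrix.mul_one, Matrix.one_mul]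
    congr 2 <;> ring
  have := congrArg Matrix.trace h1
  simpa [Matrix.trace_sub, Matrix.trace_smul, mul_assoc] using this

end gen
end ACP


namespace ACP
section sec3

lemma coeff_one_prod {ι R : Type*} [DecidableEq ι] [CommRing R] (s : Finset ι) (f g : ι → R) :
    (∏ k ∈ s, (Polynomial.C (f k) + Polynomial.X * Polynomial.C (g k))).coeff 1
      = ∑ k ∈ s, (∏ l ∈ s.erase k, f l) * g k := by
  have h := Polynomial.coeff_derivative
    (∏ k ∈ s, (Polynomial.C (f k) + Polynomial.X * Polynomial.C (g k))) 0
  simp only [zero_add, Nat.cast_zero, mul_one] at h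
  rw [← h, Polynomial.derivative_prod_finset, Polynomial.coeff_zero_eq_eval_zero,
    Polynomial.eval_finsetSum]
  simp [Polynomial.eval_prod]

lemma coeff_two_prod {ι R : Type*} [DecidableEq ι] [CommRing R] (s : Finset ι) (f g : ι → R) :
    (∏ k ∈ s, (Polynomial.C (f k) + Polynomial.X * Polynomial.C (g k))).coeff 2 * 2
      = ∑ k ∈ s, ∑ l ∈ s.erase k, (∏ j ∈ (s.erase k).erase l, f j) * g l * g k := by
  have h := Polynomial.coeff_derivative
    (∏ k ∈ s, (Polynomial.C (f k) + Polynomial.X * Polynomial.C (g k))) 1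
  rw [show ((1 : ℕ) : R) + 1 = 2 by norm_num, show 1 + 1 = 2 from rfl] at h
  rw [← h, Polynomial.derivative_prod_finset, Polynomial.finsetSum_coeff]
  refine Finset.sum_congr rfl fun k _ => ?_
  simp only [Polynomial.derivative_add, Polynomial.derivative_C, Polynomial.derivative_mul,
    Polynomial.derivative_X, zero_add, one_mul, mul_zero, add_zero]
  rw [Polynomial.coeff_mul_C, coeff_one_prod, Finset.sum_mul]

lemma infinite_circle (c : ℂ) (hc : c ≠ 0) :
    {s : ℂ | ∃ t : ℂ, ‖t‖ = 1 ∧ s = (t - 1) / c}.Infinite := by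
  have h1 : (Metric.sphere (0 : ℂ) 1).Infinite := by
    refine (isPreconnected_sphere (by simp [Complex.rank_real_complex]) 0 1).infinite_of_nontrivial
      ⟨1, by simp, -1, by simp, by norm_num⟩
  have h2 : Set.InjOn (fun t : ℂ => (t - 1) / c) (Metric.sphere (0 : ℂ) 1) := by
    intro a _ b _ h
    simp only at h
    field_simp at h
    simpa using h
  refine (h1.image h2).mono ?_
  rintro _ ⟨t, ht, rfl⟩
  exact ⟨t, by simpa using ht, rfl⟩

open MvPolynomial
variable {σ : Type*} [Fintype σ] [DecidableEq σ] {A : Type*} [CommRing A] [Algebra ℂ A] {N : ℕ}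

/-- quadratic form -/
noncomputable def yy (u : Matrix (Fin N) (Fin N) A) (a : Fin N → ℂ) (k : σ) : MvPolynomial σ A :=
  (fun i => algebraMap ℂ (MvPolynomial σ A) (star (a i))) ⬝ᵥ
    (Ww u k *ᵥ fun i => algebraMap ℂ (MvPolynomial σ A) (a i))

/-- the transformation hypothesis -/
def Cov (u : Matrix (Fin N) (Fin N) A) (L : A →ₗ[ℂ] ℂ) (q : ℕ) : Prop :=
  ∀ h ∈ unitaryGroup (Fin N) ℂ, ∃ τ : A →ₐ[ℂ] A, u.map τ = h.map (algebraMap ℂ A) * u ∧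
    ∀ a, L (τ a) = h.det ^ q * L a

lemma fk_map (u : Matrix (Fin N) (Fin N) A) (τ : A →+* A) (k : σ) :
    MvPolynomial.map τ (fk u k) = fk (u.map τ) k := by
  rw [fk, fk, RingHom.map_det]
  congr 1
  refine Matrix.ext fun i j => ?_
  by_cases h : i = j <;> simp [Mm, Matrix.one_apply, h]

lemma lft_map (L : A →ₗ[ℂ] ℂ) (τ : A →+* A) (c : ℂ) (h : ∀ a, L (τ a) = c * L a)
    (f : MvPolynomial σ A) : lft L (MvPolynomial.map τ f) = c • lft L f := by
  ext m
  rw [coeff_lft, coeff_map, h, coeff_smul, coeff_lft, smul_eq_mul]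

lemma fk_rank_one (u : Matrix (Fin N) (Fin N) A) (a : Fin N → ℂ) (s : ℂ) (k : σ) :
    fk ((1 + s • vecMulVec a (star a)).map (algebraMap ℂ A) * u) k
      = fk u k + algebraMap ℂ (MvPolynomial σ A) s * (- yy u a k) := by
  have e : Mm ((1 + s • vecMulVec a (star a)).map (algebraMap ℂ A) * u) k
      = Mm u k + vecMulVec (fun i => algebraMap ℂ (MvPolynomial σ A) (- s * a i))
        ((fun i => algebraMap ℂ (MvPolynomial σ A) (star (a i))) ᵥ* ((X k : MvPolynomial σ A) • u.map C)) := by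
    have e1 : (1 + s • vecMulVec a (star a)).map (algebraMap ℂ A)
      = 1 + vecMulVec (fun i => algebraMap ℂ A (s * a i)) (fun i => algebraMap ℂ A (star (a i))) := by
      refine Matrix.ext fun i j => ?_
      by_cases h : i = j <;> simp [Matrix.one_apply, h, vecMulVec_apply, mul_assoc]
    rw [e1, add_mul, one_mul, Mm, Mm, vecMulVec_mul]
    refine Matrix.ext fun i j => ?_
    simp only [Matrix.sub_apply, Matrix.add_apply, Matrix.smul_apply, Matrix.map_apply, vecMulVec_apply,
      Matrix.vecMul, dotProduct, smul_eq_mul, map_add, map_mul, map_sum, map_neg,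
      MvPolynomial.algebraMap_apply]
    rw [show (∑ x, C (algebraMap ℂ A (star (a x))) * (X k * C (u x j)) : MvPolynomial σ A)
      = X k * ∑ x, C (algebraMap ℂ A (star (a x))) * C (u x j) by
        rw [Finset.mul_sum]; exact Finset.sum_congr rfl fun _ _ => by ring]
    ring
  rw [fk, e, det_add_rank_one, ← fk]
  congr 1
  have e2 : (fun i => algebraMap ℂ (MvPolynomial σ A) (- s * a i))
      = (- algebraMap ℂ (MvPolynomial σ A) s) • fun i => algebraMap ℂ (MvPolynomial σ A) (a i) := by
    funext i; simp
  rw [e2, Matrix.mulVec_smul, dotProduct_smul, ← Matrix.dotProduct_mulVec, Matrix.mulVec_mulVec, yy, Ww,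
    Matrix.smul_mul, smul_eq_mul]
  ring

lemma refl_mem (a : Fin N → ℂ) (ha : star a ⬝ᵥ a ≠ 0) (t : ℂ) (ht : ‖t‖ = 1) :
    (1 + ((t - 1) / (star a ⬝ᵥ a)) • vecMulVec a (star a)) ∈ unitaryGroup (Fin N) ℂ := by
  set c := star a ⬝ᵥ a with hc
  have hcs : star c = c := by
    simp [hc, dotProduct, mul_comm]
  have hts : t * star t = 1 := by
    rw [Complex.star_def, Complex.mul_conj, Complex.normSq_eq_norm_sq, ht]; simp
  rw [Matrix.mem_unitaryGroup_iff, star_eq_conjTranspose, conjTranspose_add, conjTranspose_one,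
    conjTranspose_smul, conjTranspose_vecMulVec, star_star]
  have hm : vecMulVec a (star a) * vecMulVec a (star a) = c • vecMulVec a (star a) := by
    rw [vecMulVec_mul_vecMulVec, ← hc]
    simp 
  rw [add_mul, mul_add, mul_add, one_mul, mul_one, one_mul, Matrix.smul_mul, Matrix.mul_smul, hm,
    smul_smul, smul_smul, add_assoc, ← add_smul, ← add_smul]
  have : star ((t - 1) / c) + ((t - 1) / c + (t - 1) / c * star ((t - 1) / c) * c) = 0 := by
    rw [star_div₀, hcs, star_sub, star_one]
    field_simp
    linear_combination hts
  rw [this, zero_smul, add_zero]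

lemma refl_det (a : Fin N → ℂ) (s : ℂ) :
    (1 + s • vecMulVec a (star a)).det = 1 + s * (star a ⬝ᵥ a) := by
  rw [← smul_vecMulVec, det_add_rank_one]
  simp [dotProduct_smul]

lemma expand (u : Matrix (Fin N) (Fin N) A) (L : A →ₗ[ℂ] ℂ) (q : ℕ) (hL : Cov u L q)
    (a : Fin N → ℂ) (ha : star a ⬝ᵥ a ≠ 0) (j : ℕ) :
    lft L ((∏ k : σ, (Polynomial.C (fk u k) + Polynomial.X * Polynomial.C (- yy u a k))).coeff j)
      = (((1 + Polynomial.C (star a ⬝ᵥ a) * Polynomial.X) ^ q : Polynomial ℂ).coeff j) •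
        lft L (∏ k : σ, fk u k) := by
  set Q := (∏ k : σ, (Polynomial.C (fk u k) + Polynomial.X * Polynomial.C (- yy u a k))) with hQ
  set c := star a ⬝ᵥ a with hc
  set P := lft L (∏ k : σ, fk u k) with hP
  set S : Polynomial (MvPolynomial σ ℂ) :=
    ∑ i ∈ Finset.range (Q.natDegree + 1), Polynomial.C (lft L (Q.coeff i)) * Polynomial.X ^ i with hS
  set S' : Polynomial (MvPolynomial σ ℂ) :=
    ((1 + Polynomial.C c * Polynomial.X) ^ q : Polynomial ℂ).map C * Polynomial.C P with hS'
  have hSc : ∀ i, S.coeff i = lft L (Q.coeff i) := by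
    intro i
    simp only [hS, Polynomial.finsetSum_coeff, Polynomial.coeff_C_mul_X_pow]
    rw [Finset.sum_ite_eq]
    split_ifs with h
    · rfl
    · rw [Polynomial.coeff_eq_zero_of_natDegree_lt (by simpa using h), map_zero]
  have hev : ∀ s : ℂ, S.eval (C s) = lft L (Q.eval (algebraMap ℂ _ s)) := by
    intro s
    rw [hS, Polynomial.eval_finsetSum, Polynomial.eval_eq_sum_range, map_sum]
    refine Finset.sum_congr rfl fun i _ => ?_
    rw [← map_pow, mul_comm (Q.coeff i), ← Algebra.smul_def, map_smul]
    rw [MvPolynomial.smul_eq_C_mul, mul_comm, map_pow]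
    simp
    ring
  have hSS : S = S' := by
    apply Polynomial.eq_of_infinite_eval_eq
    have hinf := (infinite_circle c ha).image (f := (C : ℂ →+* MvPolynomial σ ℂ))
      (MvPolynomial.C_injective σ ℂ).injOn
    refine hinf.mono ?_
    rintro _ ⟨s, ⟨t, ht, rfl⟩, rfl⟩
    simp only [Set.mem_ofPred_eq]
    rw [hev]
    obtain ⟨τ, hτ, hLτ⟩ := hL _ (refl_mem a ha t ht)
    rw [refl_det, ← hc] at hLτ
    have e1 : Q.eval (algebraMap ℂ _ ((t - 1) / c)) = MvPolynomial.map (τ : A →+* A) (∏ k, fk u k) := by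
      rw [hQ, Polynomial.eval_prod, map_prod]
      refine Finset.prod_congr rfl fun k _ => ?_
      rw [fk_map]
      have : u.map (τ : A →+* A) = u.map τ := rfl
      rw [this, hτ, fk_rank_one, ← hc]
      simp
    rw [e1, lft_map L (τ : A →+* A) _ hLτ, hS', Polynomial.eval_mul, Polynomial.eval_map,
      Polynomial.eval₂_hom]
    rw [MvPolynomial.smul_eq_C_mul, Polynomial.eval_C]
    congr 2
    simp only [Polynomial.eval_pow, Polynomial.eval_add, Polynomial.eval_one, Polynomial.eval_mul,
      Polynomial.eval_C, Polynomial.eval_X]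
    ring
  rw [← hSc, hSS, hS', Polynomial.coeff_mul_C, Polynomial.coeff_map, MvPolynomial.smul_eq_C_mul]

lemma coeff_bin_one (c : ℂ) (q : ℕ) :
    (((1 + Polynomial.C c * Polynomial.X) ^ q : Polynomial ℂ).coeff 1) = q * c := by
  have h := coeff_one_prod (Finset.range q) (fun _ => (1 : ℂ)) (fun _ => c)
  simp only [Finset.prod_const_one, one_mul, Finset.sum_const, nsmul_eq_mul, Polynomial.C_1,
    Finset.prod_const, Finset.card_range] at h
  rw [mul_comm (Polynomial.C c), h]

lemma coeff_bin_two (c : ℂ) (q : ℕ) :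
    (((1 + Polynomial.C c * Polynomial.X) ^ q : Polynomial ℂ).coeff 2) * 2 = q * (q - 1) * c ^ 2 := by
  have h := coeff_two_prod (Finset.range q) (fun _ => (1 : ℂ)) (fun _ => c)
  simp only [Finset.prod_const_one, one_mul, Finset.sum_const, nsmul_eq_mul, Polynomial.C_1,
    Finset.prod_const, Finset.card_range] at h
  rw [mul_comm (Polynomial.C c), h, Finset.sum_congr rfl (fun k hk => by
    rw [Finset.card_erase_of_mem hk])]
  rcases q with _ | q
  · simp
  · simp; ring

lemma order_one (u : Matrix (Fin N) (Fin N) A) (L : A →ₗ[ℂ] ℂ) (q : ℕ) (hL : Cov u L q)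
    (a : Fin N → ℂ) :
    lft L (∑ k : σ, (∏ l ∈ Finset.univ.erase k, fk u l) * yy u a k)
      = (-(q * (star a ⬝ᵥ a)) : ℂ) • lft L (∏ k : σ, fk u k) := by
  by_cases ha : star a ⬝ᵥ a = 0
  · have : a = 0 := by open scoped ComplexOrder in exact dotProduct_star_self_eq_zero.1 ha
    subst this
    have : ∀ k : σ, yy u 0 k = 0 := fun k => by simp [yy, dotProduct]
    simp [this]
  · have h := expand (σ := σ) u L q hL a ha 1
    rw [coeff_one_prod, coeff_bin_one] at h
    simp only [mul_neg, Finset.sum_neg_distrib, map_neg] at h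
    rw [neg_smul, ← h, neg_neg]

lemma order_two (u : Matrix (Fin N) (Fin N) A) (L : A →ₗ[ℂ] ℂ) (q : ℕ) (hL : Cov u L q)
    (a : Fin N → ℂ) :
    lft L (∑ k : σ, ∑ l ∈ Finset.univ.erase k, (∏ j ∈ (Finset.univ.erase k).erase l, fk u j)
        * yy u a l * yy u a k)
      = (q * (q - 1) * (star a ⬝ᵥ a) ^ 2 : ℂ) • lft L (∏ k : σ, fk u k) := by
  by_cases ha : star a ⬝ᵥ a = 0
  · have : a = 0 := by open scoped ComplexOrder in exact dotProduct_star_self_eq_zero.1 ha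
    subst this
    have : ∀ k : σ, yy u 0 k = 0 := fun k => by simp [yy, dotProduct]
    simp [this]
  · have h := expand (σ := σ) u L q hL a ha 2
    rw [← coeff_bin_two, mul_comm, mul_smul, ← h, ← map_smul]
    congr 1
    have h2 := coeff_two_prod Finset.univ (fk u) (fun k : σ => - yy u a k)
    simp only [mul_neg, neg_mul, neg_neg] at h2
    rw [← h2, mul_comm, Algebra.smul_def, map_ofNat]

end sec3
end ACP


namespace ACP
section sec4
open MvPolynomial
variable {σ : Type*} [Fintype σ] [DecidableEq σ] {A : Type*} [CommRing A] [Algebra ℂ A] {N : ℕ}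

lemma th_comm (k l : σ) (f : MvPolynomial σ A) : th k (th l f) = th l (th k f) := by
  ext m
  simp only [coeff_th]
  ring

lemma th_f (u : Matrix (Fin N) (Fin N) A) (k : σ) :
    th k (∏ l, fk u l) = - ((∏ l ∈ Finset.univ.erase k, fk u l) * (Ww u k).trace) := by
  rw [deriv_prod, Finset.sum_eq_single k]
  · rw [th_fk_self]; ring
  · intro l _ hl
    rw [th_fk_ne u hl, mul_zero]
  · simp

lemma th_th_f (u : Matrix (Fin N) (Fin N) A) {k l : σ} (h : l ≠ k) :
    th l (th k (∏ j, fk u j)) = (∏ j ∈ (Finset.univ.erase k).erase l, fk u j) *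
      ((Ww u l).trace * (Ww u k).trace) := by
  have h1 : th l (Ww u k).trace = 0 := by
    rw [← neg_neg (Ww u k).trace, ← th_fk_self, map_neg, th_comm, th_fk_ne u h.symm, map_zero, neg_zero]
  rw [th_f, map_neg, Derivation.leibniz, h1, smul_zero, zero_add, deriv_prod,
    Finset.sum_eq_single l]
  · rw [th_fk_self, smul_eq_mul]; ring
  · intro j _ hj
    rw [th_fk_ne u hj, mul_zero]
  · simp [h]

lemma yy_single (u : Matrix (Fin N) (Fin N) A) (i : Fin N) (k : σ) :
    yy u (Pi.single i 1) k = Ww u k i i := by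
  simp [yy, dotProduct, Matrix.mulVec, Pi.single_apply, apply_ite]

lemma yy_pair (u : Matrix (Fin N) (Fin N) A) (i j : Fin N) (z : ℂ) (k : σ) :
    yy u (Pi.single i 1 + Pi.single j z) k = Ww u k i i + algebraMap ℂ _ z * Ww u k i j
      + algebraMap ℂ _ (star z) * Ww u k j i + algebraMap ℂ _ (z * star z) * Ww u k j j := by
  have e1 : ∀ z : ℂ, (fun i' => algebraMap ℂ (MvPolynomial σ A) ((Pi.single i 1 + Pi.single j z : Fin N → ℂ) i'))
      = Pi.single i 1 + Pi.single j (algebraMap ℂ _ z) := by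
    intro z
    funext i'
    simp only [Pi.add_apply, map_add, Pi.single_apply]
    split_ifs <;> simp
  have e2 : (fun i' => algebraMap ℂ (MvPolynomial σ A) (star ((Pi.single i 1 + Pi.single j z : Fin N → ℂ) i')))
      = Pi.single i 1 + Pi.single j (algebraMap ℂ _ (star z)) := by
    rw [← e1]
    funext i'
    simp only [Pi.add_apply, star_add, Pi.single_apply]
    split_ifs <;> simp
  rw [yy, e1, e2]
  simp only [Matrix.mulVec_add, add_dotProduct, dotProduct_add, single_dotProduct, Matrix.mulVec_single,
    map_mul]
  simp
  ring

lemma nn_pair (i j : Fin N) (z : ℂ) :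
    star (Pi.single i 1 + Pi.single j z : Fin N → ℂ) ⬝ᵥ (Pi.single i 1 + Pi.single j z)
      = 1 + z * star z + if i = j then z + star z else 0 := by
  have e2 : star (Pi.single i 1 + Pi.single j z : Fin N → ℂ) = Pi.single i 1 + Pi.single j (star z) := by
    funext i'
    simp only [Pi.star_apply, Pi.add_apply, star_add, Pi.single_apply]
    split_ifs <;> simp
  rw [e2]
  simp only [add_dotProduct, dotProduct_add, single_dotProduct, Pi.single_apply]
  by_cases h : i = j
  · subst h; simp; ring
  · simp [h, Ne.symm h, mul_comm]

lemma polar (u : Matrix (Fin N) (Fin N) A) (k l : σ) :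
    8 * ((Ww u l).trace * (Ww u k).trace + (Ww u l * Ww u k).trace)
    = ∑ i, ∑ j, (yy u (Pi.single i 1 + Pi.single j 1) l * yy u (Pi.single i 1 + Pi.single j 1) k
        + yy u (Pi.single i 1 + Pi.single j Complex.I) l * yy u (Pi.single i 1 + Pi.single j Complex.I) k
        + yy u (Pi.single i 1 + Pi.single j (-1)) l * yy u (Pi.single i 1 + Pi.single j (-1)) k
        + yy u (Pi.single i 1 + Pi.single j (-Complex.I)) l * yy u (Pi.single i 1 + Pi.single j (-Complex.I)) k)
      - 8 * (N : MvPolynomial σ A) * ∑ i, yy u (Pi.single i 1) l * yy u (Pi.single i 1) k := by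
  set V := Ww u l with hV
  set W := Ww u k with hW
  have hI : (algebraMap ℂ (MvPolynomial σ A) Complex.I) ^ 2 = -1 := by
    rw [← map_pow, Complex.I_sq]; simp
  have e : ∀ i j : Fin N, (yy u (Pi.single i 1 + Pi.single j 1) l * yy u (Pi.single i 1 + Pi.single j 1) k
        + yy u (Pi.single i 1 + Pi.single j Complex.I) l * yy u (Pi.single i 1 + Pi.single j Complex.I) k
        + yy u (Pi.single i 1 + Pi.single j (-1)) l * yy u (Pi.single i 1 + Pi.single j (-1)) k
        + yy u (Pi.single i 1 + Pi.single j (-Complex.I)) l * yy u (Pi.single i 1 + Pi.single j (-Complex.I)) k)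
      = 4 * (V i i * W i i) + 4 * (V j j * W j j) + 4 * (V i i * W j j)
      + 4 * (V j j * W i i) + 4 * (V i j * W j i) + 4 * (V j i * W i j) := by
    intro i j
    simp only [yy_pair, ← hV, ← hW]
    simp only [star_neg, star_one, Complex.star_def, Complex.conj_I, map_neg, map_mul, map_one]
    generalize algebraMap ℂ (MvPolynomial σ A) Complex.I = z at hI
    linear_combination (2 * (V i j * W i j) + 2 * (V j i * W j i) - 2 * (V i j * W j i) - 2 * (V j i * W i j)
      - 2 * (V i i * W j j) - 2 * (V j j * W i i) + 2 * (z ^ 2 - 1) * (V j j * W j j)) * hI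
  simp only [e, yy_single, ← hV, ← hW]
  simp only [Finset.sum_add_distrib, ← Finset.mul_sum, Finset.sum_const, Finset.card_univ, Fintype.card_fin,
    nsmul_eq_mul, ← Finset.sum_mul]
  have t1 : ∑ i, ∑ j, V i j * W j i = (V * W).trace := by
    simp [Matrix.trace, Matrix.mul_apply]
  have t2 : ∑ i, ∑ j, V j i * W i j = (V * W).trace := by
    rw [Finset.sum_comm, t1]
  have t3 : ∑ x, V x x * (N : MvPolynomial σ A) * W x x = N * ∑ x, V x x * W x x := by
    rw [Finset.mul_sum]
    exact Finset.sum_congr rfl fun _ _ => by ring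
  rw [t1, t2]
  simp only [Matrix.trace, Matrix.diag]
  ring_nf
  rw [t3]
  ring

lemma swap3 {ι κ : Type*} [Fintype ι] {R : Type*} [AddCommMonoid R] (s : κ → Finset κ) (t : Finset κ)
    (g : ι → κ → κ → R) :
    ∑ i, ∑ k ∈ t, ∑ l ∈ s k, g i k l = ∑ k ∈ t, ∑ l ∈ s k, ∑ i, g i k l := by
  rw [Finset.sum_comm]
  refine Finset.sum_congr rfl fun k _ => ?_
  rw [Finset.sum_comm]

lemma cas1 (u : Matrix (Fin N) (Fin N) A) (L : A →ₗ[ℂ] ℂ) (q : ℕ) (hL : Cov u L q) :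
    ∑ k : σ, th k (lft L (∏ k : σ, fk u k)) = (q * N : ℂ) • lft L (∏ k : σ, fk u k) := by
  have h := fun i : Fin N => order_one (σ := σ) u L q hL (Pi.single i 1)
  have h' := Finset.sum_congr (rfl : (Finset.univ : Finset (Fin N)) = _) (fun i _ => h i)
  simp only [yy_single] at h'
  have e : ∀ k : σ, th k (lft L (∏ k : σ, fk u k)) =
    - lft L ((∏ l ∈ Finset.univ.erase k, fk u l) * (Ww u k).trace) := by
    intro k
    rw [← lft_th, th_f, map_neg]
  simp only [e]
  rw [Finset.sum_neg_distrib, ← map_sum]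
  rw [← map_sum, Finset.sum_comm] at h'
  simp only [← Finset.mul_sum] at h'
  change lft L (∑ k, (∏ l ∈ Finset.univ.erase k, fk u l) * (Ww u k).trace) = _ at h'
  rw [h']
  simp [← neg_smul, ← Nat.cast_smul_eq_nsmul ℂ, smul_smul, mul_comm]

/-- interaction term -/
noncomputable def Zz (u : Matrix (Fin N) (Fin N) A) (L : A →ₗ[ℂ] ℂ) (k l : σ) : MvPolynomial σ ℂ :=
  lft L ((∏ j ∈ (Finset.univ.erase k).erase l, fk u j) * (Ww u l * Ww u k).trace)

lemma Zz_eq (u : Matrix (Fin N) (Fin N) A) (L : A →ₗ[ℂ] ℂ) {k l : σ} (h : l ≠ k) :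
    (X l - X k) * Zz u L k l = X l * th k (lft L (∏ k : σ, fk u k))
      - X k * th l (lft L (∏ k : σ, fk u k)) := by
  rw [Zz, sub_mul, ← lft_X_mul, ← lft_X_mul, ← map_sub, ← lft_th, ← lft_th, ← lft_X_mul, ← lft_X_mul,
    ← map_sub, th_f, th_f]
  congr 1
  have h1 : ∏ j ∈ Finset.univ.erase k, fk u j = fk u l * ∏ j ∈ (Finset.univ.erase k).erase l, fk u j :=
    (Finset.mul_prod_erase _ _ (by simp [h])).symm
  have h2 : ∏ j ∈ Finset.univ.erase l, fk u j = fk u k * ∏ j ∈ (Finset.univ.erase k).erase l, fk u j := by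
    rw [Finset.erase_right_comm]
    exact (Finset.mul_prod_erase _ _ (by simp [h.symm])).symm
  rw [h1, h2]
  linear_combination (∏ j ∈ (Finset.univ.erase k).erase l, fk u j) * Ww_mul u l k

lemma cas2 (u : Matrix (Fin N) (Fin N) A) (L : A →ₗ[ℂ] ℂ) (q : ℕ) (hL : Cov u L q) :
    ∑ k : σ, ∑ l ∈ Finset.univ.erase k, (th l (th k (lft L (∏ k : σ, fk u k))) + Zz u L k l)
      = (N * (N + 1) * (q * (q - 1)) : ℂ) • lft L (∏ k : σ, fk u k) := by
  set P := lft L (∏ k : σ, fk u k) with hP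
  set B : (Fin N → ℂ) → MvPolynomial σ A := fun a =>
    ∑ k : σ, ∑ l ∈ Finset.univ.erase k, (∏ j ∈ (Finset.univ.erase k).erase l, fk u j)
        * yy u a l * yy u a k with hB
  have hLB : ∀ a, lft L (B a) = (q * (q - 1) * (star a ⬝ᵥ a) ^ 2 : ℂ) • P := fun a =>
    order_two (σ := σ) u L q hL a
  have e1 : ∑ k : σ, ∑ l ∈ Finset.univ.erase k, (th l (th k P) + Zz u L k l)
      = lft L (∑ k : σ, ∑ l ∈ Finset.univ.erase k, (∏ j ∈ (Finset.univ.erase k).erase l, fk u j) *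
        ((Ww u l).trace * (Ww u k).trace + (Ww u l * Ww u k).trace)) := by
    simp only [map_sum]
    refine Finset.sum_congr rfl fun k _ => Finset.sum_congr rfl fun l hl => ?_
    rw [hP, ← lft_th, ← lft_th, th_th_f u (Finset.ne_of_mem_erase hl), Zz, ← map_add, mul_add]
  have e2 : (8 : ℂ) • (∑ k : σ, ∑ l ∈ Finset.univ.erase k, (∏ j ∈ (Finset.univ.erase k).erase l, fk u j) *
        ((Ww u l).trace * (Ww u k).trace + (Ww u l * Ww u k).trace))
      = ∑ i : Fin N, ∑ j : Fin N, (B (Pi.single i 1 + Pi.single j 1) + B (Pi.single i 1 + Pi.single j Complex.I)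
        + B (Pi.single i 1 + Pi.single j (-1)) + B (Pi.single i 1 + Pi.single j (-Complex.I)))
        - (8 * N : ℂ) • ∑ i : Fin N, B (Pi.single i 1) := by
    have s8 : ∀ f : MvPolynomial σ A, (8 : ℂ) • f = 8 * f := fun f => by
      rw [Algebra.smul_def, map_ofNat]
    have sN : ∀ f : MvPolynomial σ A, (8 * N : ℂ) • f = (8 * N) * f := fun f => by
      rw [Algebra.smul_def, map_mul, map_ofNat, map_natCast]
    rw [s8, sN]
    simp only [hB, ← Finset.sum_add_distrib]
    simp only [swap3]
    rw [Finset.mul_sum, Finset.mul_sum, ← Finset.sum_sub_distrib]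
    refine Finset.sum_congr rfl fun k _ => ?_
    rw [Finset.mul_sum, Finset.mul_sum, ← Finset.sum_sub_distrib]
    refine Finset.sum_congr rfl fun l _ => ?_
    rw [mul_left_comm, polar, mul_sub, Finset.mul_sum]
    congr 1
    · refine Finset.sum_congr rfl fun i _ => ?_
      rw [Finset.mul_sum]
      refine Finset.sum_congr rfl fun j _ => ?_
      ring
    · rw [mul_left_comm, Finset.mul_sum]
      congr 1
      refine Finset.sum_congr rfl fun i _ => ?_
      ring
  have e3 := congrArg (lft L) e2
  rw [map_smul, ← e1] at e3
  simp only [map_sub, map_sum, map_add, map_smul, hLB, ← add_smul, ← Finset.sum_smul, smul_smul, ← sub_smul] at e3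
  have hc : (∑ i : Fin N, ∑ j : Fin N, ((q * (q - 1) * (star (Pi.single i 1 + Pi.single j 1 : Fin N → ℂ) ⬝ᵥ (Pi.single i 1 + Pi.single j 1)) ^ 2 : ℂ)
     + (q * (q - 1) * (star (Pi.single i 1 + Pi.single j Complex.I : Fin N → ℂ) ⬝ᵥ (Pi.single i 1 + Pi.single j Complex.I)) ^ 2 : ℂ)
     + (q * (q - 1) * (star (Pi.single i 1 + Pi.single j (-1) : Fin N → ℂ) ⬝ᵥ (Pi.single i 1 + Pi.single j (-1))) ^ 2 : ℂ)
     + (q * (q - 1) * (star (Pi.single i 1 + Pi.single j (-Complex.I) : Fin N → ℂ) ⬝ᵥ (Pi.single i 1 + Pi.single j (-Complex.I))) ^ 2 : ℂ))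
     - 8 * N * ∑ i : Fin N, (q * (q - 1) * (star (Pi.single i 1 : Fin N → ℂ) ⬝ᵥ (Pi.single i 1)) ^ 2 : ℂ))
     = 8 * (N * (N + 1) * (q * (q - 1))) := by
    have e : ∀ i j : Fin N, ((q * (q - 1) * (star (Pi.single i 1 + Pi.single j 1 : Fin N → ℂ) ⬝ᵥ (Pi.single i 1 + Pi.single j 1)) ^ 2 : ℂ)
     + (q * (q - 1) * (star (Pi.single i 1 + Pi.single j Complex.I : Fin N → ℂ) ⬝ᵥ (Pi.single i 1 + Pi.single j Complex.I)) ^ 2 : ℂ)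
     + (q * (q - 1) * (star (Pi.single i 1 + Pi.single j (-1) : Fin N → ℂ) ⬝ᵥ (Pi.single i 1 + Pi.single j (-1))) ^ 2 : ℂ)
     + (q * (q - 1) * (star (Pi.single i 1 + Pi.single j (-Complex.I) : Fin N → ℂ) ⬝ᵥ (Pi.single i 1 + Pi.single j (-Complex.I))) ^ 2 : ℂ))
     = (q * (q - 1)) * (16 + if i = j then 8 else 0) := by
      intro i j
      simp only [nn_pair]
      by_cases h : i = j <;> simp [h] <;> ring
    simp only [e]
    simp [← Finset.mul_sum, Finset.sum_add_distrib]
    ring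
  rw [hc, mul_smul] at e3
  exact smul_right_injective _ (by norm_num : (8 : ℂ) ≠ 0) e3

end sec4
end ACP


namespace ACP
section sec5
open MvPolynomial
variable {n : ℕ}

/-- Vandermonde -/
noncomputable def Dl (n : ℕ) : MvPolynomial (Fin n) ℂ :=
  (Matrix.vandermonde (fun k : Fin n => (X k : MvPolynomial (Fin n) ℂ))).det

/-- exponent of a permutation -/
noncomputable def ex (w : Fin n → ℕ) : Fin n →₀ ℕ := Finsupp.equivFunOnFinite.symm w

lemma ex_apply (w : Fin n → ℕ) (k : Fin n) : ex w k = w k := rfl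

lemma prod_X_pow (w : Fin n → ℕ) : (∏ k, (X k : MvPolynomial (Fin n) ℂ) ^ w k) = monomial (ex w) 1 := by
  rw [monomial_eq, C_1, one_mul, Finsupp.prod_fintype _ _ (by simp)]
  rfl

lemma Dl_eq : Dl n = ∑ w : Equiv.Perm (Fin n), monomial (ex fun k => (w k : ℕ)) ((Equiv.Perm.sign w : ℤ) : ℂ) := by
  rw [Dl, ← det_transpose, Matrix.det_apply']
  refine Finset.sum_congr rfl fun w _ => ?_
  simp only [transpose_apply, vandermonde_apply]
  rw [prod_X_pow (fun k => (w k : ℕ)), ← map_intCast (C : ℂ →+* MvPolynomial (Fin n) ℂ), C_mul_monomial, mul_one]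

lemma Dl_th1 : ∑ k, th k (Dl n) = (∑ j : Fin n, (j : ℂ)) • Dl n := by
  have : ∀ w : Equiv.Perm (Fin n), ∑ k, ((w k : ℕ) : ℂ) = ∑ j : Fin n, (j : ℂ) := fun w =>
    Equiv.sum_comp w (fun j : Fin n => (j : ℂ))
  rw [Dl_eq]
  simp only [map_sum]
  rw [Finset.sum_comm, Finset.smul_sum]
  refine Finset.sum_congr rfl fun w _ => ?_
  simp only [th_monomial, ex_apply, ← Finset.sum_mul]
  rw [smul_eq_C_mul, ← this w, map_sum]
  simp

lemma Dl_th2 : ∑ k, th k (th k (Dl n)) = (∑ j : Fin n, (j : ℂ) ^ 2) • Dl n := by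
  have : ∀ w : Equiv.Perm (Fin n), ∑ k, ((w k : ℕ) : ℂ) ^ 2 = ∑ j : Fin n, (j : ℂ) ^ 2 := fun w =>
    Equiv.sum_comp w (fun j : Fin n => (j : ℂ) ^ 2)
  ext m
  rw [coeff_sum, coeff_smul, smul_eq_mul]
  simp only [coeff_th, Dl_eq, coeff_sum, coeff_monomial, Finset.mul_sum]
  rw [Finset.sum_comm]
  refine Finset.sum_congr rfl fun w _ => ?_
  split_ifs with h
  · rw [← this w, Finset.sum_mul]
    refine Finset.sum_congr rfl fun k _ => ?_
    rw [← h, ex_apply]; ring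
  · simp

lemma Dl_d : ∃ d : Fin n → Fin n → MvPolynomial (Fin n) ℂ,
    (∀ k l, l ≠ k → (X k - X l) * d k l = Dl n) ∧
    (∀ k l, l ≠ k → d l k = - d k l) ∧
    ∀ k, th k (Dl n) = X k * ∑ l ∈ Finset.univ.erase k, d k l := by
  classical
  set s : Finset (Fin n × Fin n) := Finset.univ.filter (fun e => e.1 < e.2) with hs
  have hD : Dl n = ∏ e ∈ s, (X e.2 - X e.1 : MvPolynomial (Fin n) ℂ) := by
    rw [Dl, det_vandermonde, hs, Finset.prod_filter, Fintype.prod_prod_type]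
    refine Finset.prod_congr rfl fun i _ => ?_
    rw [← Finset.prod_filter]
    refine Finset.prod_congr ?_ fun _ _ => rfl
    ext j; simp
  set D : Fin n → Fin n → MvPolynomial (Fin n) ℂ := fun i j => ∏ e ∈ s.erase (i, j), (X e.2 - X e.1) with hDd
  have hDD : ∀ i j, i < j → (X j - X i) * D i j = Dl n := by
    intro i j h
    rw [hD, hDd]
    exact Finset.mul_prod_erase s (fun e => (X e.2 - X e.1 : MvPolynomial (Fin n) ℂ)) (a := (i, j)) (by simp [hs, h])
  refine ⟨fun k l => if l < k then D l k else - D k l, ?_, ?_, ?_⟩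
  · intro k l h
    rcases lt_or_gt_of_ne h with h | h
    · simp only [h, if_true]; exact hDD _ _ h
    · simp only [h.not_gt, if_false]; rw [← hDD _ _ h]; ring
  · intro k l h
    rcases lt_or_gt_of_ne h with h | h
    · simp [h, h.not_gt]
    · simp [h, h.not_gt]
  · intro k
    rw [hD, deriv_prod, hs, Finset.sum_filter, Fintype.sum_prod_type]
    have e1 : ∀ i j : Fin n, (if (i, j).1 < (i, j).2 then (∏ e ∈ (Finset.univ.filter (fun e : Fin n × Fin n => e.1 < e.2)).erase (i, j),
        (X e.2 - X e.1 : MvPolynomial (Fin n) ℂ)) * th k (X (i, j).2 - X (i, j).1) else 0)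
      = (if j = k then (if i < k then X k * D i k else 0) else 0)
        - (if i = k then (if k < j then X k * D k j else 0) else 0) := by
      intro i j
      simp only [map_sub, th_apply, pderiv_X, Pi.single_apply, hDd, hs]
      by_cases hij : i < j
      · by_cases hj : j = k
        · subst hj
          simp [hij, hij.ne, hij.ne']
          ring
        · by_cases hi : i = k
          · subst hi
            simp [hij, hij.ne, hij.ne']
            ring
          · simp [hij, hi, hj, Ne.symm hi, Ne.symm hj]
      · by_cases hj : j = k
        · subst hj
          simp [hij]
        · by_cases hi : i = k
          · subst hi
            simp [hij, hj]
          · simp [hij, hi, hj]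
    simp only [e1, Finset.sum_sub_distrib]
    rw [Finset.sum_comm (f := fun i j => if i = k then (if k < j then X k * D k j else 0) else 0)]
    simp only [Finset.sum_ite_eq', Finset.mem_univ, if_true]
    rw [← Finset.sum_sub_distrib, Finset.mul_sum, ← Finset.add_sum_erase _ _ (Finset.mem_univ k)]
    simp only [lt_irrefl, if_false, sub_zero, zero_add]
    refine Finset.sum_congr rfl fun l hl => ?_
    rcases lt_or_gt_of_ne (Finset.ne_of_mem_erase hl) with h | h
    · simp [h, h.not_gt]
    · simp [h, h.not_gt]

lemma conj1 (P : MvPolynomial (Fin n) ℂ) (c1 : ℂ) (h1 : ∑ k, th k P = c1 • P) :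
    ∑ k, th k (Dl n * P) = (c1 + ∑ j : Fin n, (j : ℂ)) • (Dl n * P) := by
  simp only [Derivation.leibniz, Finset.sum_add_distrib, smul_eq_mul, ← Finset.mul_sum, h1, Dl_th1]
  simp only [smul_eq_C_mul, map_add]
  ring

lemma conj2 (P : MvPolynomial (Fin n) ℂ) (Z : Fin n → Fin n → MvPolynomial (Fin n) ℂ) (c1 c2 : ℂ)
    (h1 : ∑ k, th k P = c1 • P)
    (h2 : ∑ k, ∑ l ∈ Finset.univ.erase k, (th l (th k P) + Z k l) = c2 • P)
    (h3 : ∀ k l, l ≠ k → (X l - X k) * Z k l = X l * th k P - X k * th l P) :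
    ∑ k, th k (th k (Dl n * P))
      = (c1 ^ 2 - c2 + 2 * (n - 1) * c1 + ∑ j : Fin n, (j : ℂ) ^ 2) • (Dl n * P) := by
  obtain ⟨d, hd1, hd2, hd3⟩ := Dl_d (n := n)
  have a1 : ∑ k, ∑ l, th l (th k P) = (c1 ^ 2) • P := by
    simp_rw [fun k => show ∑ l, th l (th k P) = th k (∑ l, th l P) by
      rw [map_sum]; exact Finset.sum_congr rfl fun l _ => th_comm _ _ _]
    simp only [h1, Derivation.map_smul, ← Finset.smul_sum, smul_smul, sq]
  have a2 : ∑ k, ∑ l ∈ Finset.univ.erase k, th l (th k P) = (c1 ^ 2) • P - ∑ k, th k (th k P) := by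
    rw [← a1, ← Finset.sum_sub_distrib]
    refine Finset.sum_congr rfl fun k _ => ?_
    rw [← Finset.add_sum_erase _ _ (Finset.mem_univ k)]; ring
  have a3 : Dl n * ∑ k, ∑ l ∈ Finset.univ.erase k, Z k l
      = - 2 * ∑ k, th k (Dl n) * th k P + 2 * (n - 1) * (Dl n * ∑ k, th k P) := by
    have b1 : Dl n * ∑ k, ∑ l ∈ Finset.univ.erase k, Z k l
      = ∑ k, ∑ l ∈ Finset.univ.erase k, d k l * X k * th l P
        - ∑ k, ∑ l ∈ Finset.univ.erase k, d k l * X l * th k P := by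
      rw [Finset.mul_sum, ← Finset.sum_sub_distrib]
      refine Finset.sum_congr rfl fun k _ => ?_
      rw [Finset.mul_sum, ← Finset.sum_sub_distrib]
      refine Finset.sum_congr rfl fun l hl => ?_
      have hl := Finset.ne_of_mem_erase hl
      rw [← hd1 k l hl]
      linear_combination (- d k l) * h3 k l hl
    have b2 : ∑ k, ∑ l ∈ Finset.univ.erase k, d k l * X k * th l P
        = - ∑ k, ∑ l ∈ Finset.univ.erase k, d k l * X l * th k P := by
      rw [Finset.sum_comm' (t' := Finset.univ) (s' := fun l => Finset.univ.erase l) (by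
        intro x y; simp [eq_comm])]
      rw [← Finset.sum_neg_distrib]
      refine Finset.sum_congr rfl fun k _ => ?_
      rw [← Finset.sum_neg_distrib]
      refine Finset.sum_congr rfl fun l hl => ?_
      rw [hd2 k l (Finset.ne_of_mem_erase hl)]; ring
    have b3 : ∑ k, ∑ l ∈ Finset.univ.erase k, d k l * X l * th k P
        = ∑ k, th k (Dl n) * th k P - (n - 1) * (Dl n * ∑ k, th k P) := by
      rw [Finset.mul_sum, Finset.mul_sum, ← Finset.sum_sub_distrib]
      refine Finset.sum_congr rfl fun k _ => ?_
      rw [hd3 k, Finset.mul_sum, Finset.sum_mul]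
      have : ((n : MvPolynomial (Fin n) ℂ) - 1) * (Dl n * th k P) = ∑ l ∈ Finset.univ.erase k, Dl n * th k P := by
        rw [Finset.sum_const, Finset.card_erase_of_mem (Finset.mem_univ k), Finset.card_univ, Fintype.card_fin,
          nsmul_eq_mul, Nat.cast_sub (by have := k.2; omega), Nat.cast_one]
      rw [this, ← Finset.sum_sub_distrib]
      refine Finset.sum_congr rfl fun l hl => ?_
      rw [← hd1 k l (Finset.ne_of_mem_erase hl)]; ring
    rw [b1, b2, b3]; ring
  have a4 : ∑ k, th k (th k (Dl n * P)) = Dl n * ∑ k, th k (th k P) + 2 * ∑ k, th k (Dl n) * th k P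
      + P * ∑ k, th k (th k (Dl n)) := by
    simp only [Finset.mul_sum, ← Finset.sum_add_distrib]
    refine Finset.sum_congr rfl fun k _ => ?_
    simp only [Derivation.leibniz, map_add, smul_eq_mul]
    ring
  simp only [Finset.sum_add_distrib] at h2
  rw [a2] at h2
  rw [h1] at a3
  rw [a4, Dl_th2]
  simp only [smul_eq_C_mul, map_add, map_sub, map_mul, map_pow, map_natCast, map_one, map_ofNat] at *
  linear_combination a3 - Dl n * h2

end sec5
end ACP


namespace ACP
section sec6
open MvPolynomial
variable {p q : ℕ}

/-- the extremal exponent -/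
def mu (N p q : ℕ) (j : Fin (p + q)) : ℕ := if (j : ℕ) < p then j else j + N

lemma mu_inj (N : ℕ) : Function.Injective (mu N p q) := by
  intro a b h
  simp only [mu] at h
  ext
  split_ifs at h <;> omega

lemma mu_sum1 (N : ℕ) : ∑ j, (mu N p q j : ℂ) = q * N + ∑ j : Fin (p + q), (j : ℂ) := by
  rw [Fin.sum_univ_add, Fin.sum_univ_add]
  simp [mu, Finset.sum_add_distrib]
  ring

lemma sum_fin (q : ℕ) : 2 * ∑ j : Fin q, (j : ℂ) = q * (q - 1) := by
  induction q with
  | zero => simp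
  | succ q ih => rw [Fin.sum_univ_castSucc, mul_add]; simp [ih]; ring

lemma mu_sum2 (N : ℕ) : ∑ j, (mu N p q j : ℂ) ^ 2 =
    (q * N) ^ 2 - N * (N + 1) * (q * (q - 1)) + 2 * ((p + q : ℕ) - 1) * (q * N) + ∑ j : Fin (p + q), (j : ℂ) ^ 2 := by
  rw [Fin.sum_univ_add, Fin.sum_univ_add]
  have := sum_fin q
  have h : ∀ i : Fin q, (mu N p q (Fin.natAdd p i) : ℂ) ^ 2 = ((Fin.natAdd p i : ℕ) : ℂ) ^ 2 + (2 * N * i + (2 * N * p + N ^ 2)) := by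
    intro i; simp [mu]; ring
  simp only [h, Finset.sum_add_distrib, ← Finset.mul_sum]
  simp [mu]
  linear_combination (N : ℂ) * this

lemma comb (N : ℕ) (m : Fin (p + q) → ℕ) (hm : Function.Injective m)
    (hb : ∀ k, m k < N + p + q) (h1 : ∑ k, (m k : ℤ) = ∑ k, (mu N p q k : ℤ))
    (h2 : ∑ k, (m k : ℤ) ^ 2 = ∑ k, (mu N p q k : ℤ) ^ 2) : ∃ w : Equiv.Perm (Fin (p + q)), m = mu N p q ∘ w := by
  classical
  set φ : ℕ → ℤ := fun t => (2 * t - 2 * p + 1) * (2 * t - 2 * N - 2 * p + 1) with hφ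
  set M := Finset.univ.image m
  set O := Finset.univ.image (mu N p q)
  have hO : ∀ t ∈ O, 0 < φ t := by
    intro t ht
    obtain ⟨j, -, rfl⟩ := Finset.mem_image.1 ht
    simp only [hφ, mu]
    split_ifs with h
    · apply mul_pos_of_neg_of_neg <;> omega
    · apply mul_pos <;> push_cast <;> omega
  have hO' : ∀ t ∉ O, t < N + p + q → φ t < 0 := by
    intro t ht hlt
    have a : p ≤ t := by
      by_contra h
      apply ht
      refine Finset.mem_image.2 ⟨⟨t, by omega⟩, Finset.mem_univ _, ?_⟩
      simp [mu]; omega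
    have b : t < N + p := by
      by_contra h
      apply ht
      refine Finset.mem_image.2 ⟨⟨t - N, by omega⟩, Finset.mem_univ _, ?_⟩
      simp only [mu]; split_ifs <;> omega
    simp only [hφ]
    apply mul_neg_of_pos_of_neg <;> omega
  have hsum : ∑ t ∈ M, φ t = ∑ t ∈ O, φ t := by
    rw [Finset.sum_image (fun _ _ _ _ h => hm h), Finset.sum_image (fun _ _ _ _ h => mu_inj N h)]
    have e : ∀ t : ℕ, φ t = 4 * (t : ℤ) ^ 2 + (2 - 4 * p - 2 * 2 * N - 0 + 2 - 4 * p + 4 * p) * t + (1 - 2 * p) * (1 - 2 * N - 2 * p) - 4 * p * t := by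
      intro t; simp only [hφ]; ring
    simp only [e, Finset.sum_add_distrib, Finset.sum_sub_distrib, ← Finset.mul_sum, h1, h2]
  have hsub : O ⊆ M := by
    rw [← Finset.sdiff_eq_empty_iff_subset]
    by_contra hne
    have hne := Finset.nonempty_iff_ne_empty.2 hne
    have s1 : 0 < ∑ t ∈ O \ M, φ t := Finset.sum_pos (fun t ht => hO t (Finset.mem_sdiff.1 ht).1) hne
    have s2 : ∑ t ∈ M \ O, φ t ≤ 0 := Finset.sum_nonpos (fun t ht => by
      obtain ⟨h, h'⟩ := Finset.mem_sdiff.1 ht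
      obtain ⟨k, -, rfl⟩ := Finset.mem_image.1 h
      exact (hO' _ h' (hb k)).le)
    have s3 := Finset.sum_inter_add_sum_sdiff M O φ
    have s4 := Finset.sum_inter_add_sum_sdiff O M φ
    rw [Finset.inter_comm] at s4
    linarith
  have hMO : O = M := Finset.eq_of_subset_of_card_le hsub (by
    rw [Finset.card_image_of_injective _ hm, Finset.card_image_of_injective _ (mu_inj N)])
  have : ∀ k, ∃ j, mu N p q j = m k := by
    intro k
    have : m k ∈ O := by rw [hMO]; exact Finset.mem_image_of_mem _ (Finset.mem_univ k)
    obtain ⟨j, -, h⟩ := Finset.mem_image.1 this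
    exact ⟨j, h⟩
  choose w hw using this
  have hwi : Function.Injective w := fun a b h => hm (by rw [← hw, ← hw, h])
  refine ⟨Equiv.ofBijective w (Finite.injective_iff_bijective.1 hwi), ?_⟩
  ext k; simp [hw]

lemma perm_one (w : Equiv.Perm (Fin (p + q))) (h1 : ∀ k : Fin (p + q), (k : ℕ) < p → (w k : ℕ) ≤ k)
    (h2 : ∀ k : Fin (p + q), p ≤ (k : ℕ) → (k : ℕ) ≤ w k) : w = 1 := by
  have e1 : ∑ k, ((w k : ℕ) : ℤ) = ∑ k : Fin (p + q), (k : ℤ) := Equiv.sum_comp w (fun k : Fin (p + q) => (k : ℤ))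
  have e2 : ∑ k, ((w k : ℕ) : ℤ) ^ 2 = ∑ k : Fin (p + q), (k : ℤ) ^ 2 := Equiv.sum_comp w (fun k : Fin (p + q) => (k : ℤ) ^ 2)
  have e3 : 0 ≤ ∑ k : Fin (p + q), (2 * (k : ℤ) - 2 * p + 1) * ((w k : ℕ) - (k : ℤ)) := by
    apply Finset.sum_nonneg
    intro k _
    rcases lt_or_ge (k : ℕ) p with h | h
    · have := h1 k h
      apply mul_nonneg_of_nonpos_of_nonpos <;> omega
    · have := h2 k h
      apply mul_nonneg <;> omega
  have e4 : ∑ k : Fin (p + q), (2 * (k : ℤ) - 2 * p + 1) * ((w k : ℕ) - (k : ℤ)) = - ∑ k : Fin (p + q), (((w k : ℕ) : ℤ) - (k : ℤ)) ^ 2 := by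
    have : ∀ k : Fin (p + q), (2 * (k : ℤ) - 2 * p + 1) * ((w k : ℕ) - (k : ℤ)) =
      - (((w k : ℕ) : ℤ) - (k : ℤ)) ^ 2 + (((w k : ℕ) : ℤ) ^ 2 - (k : ℤ) ^ 2) + (1 - 2 * p) * (((w k : ℕ) : ℤ) - k) := by
      intro k; ring
    simp only [this, Finset.sum_add_distrib, ← Finset.mul_sum, Finset.sum_sub_distrib, e1, e2, Finset.sum_neg_distrib]
    ring
  have e5 : ∑ k : Fin (p + q), (((w k : ℕ) : ℤ) - (k : ℤ)) ^ 2 = 0 :=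
    le_antisymm (by linarith) (Finset.sum_nonneg fun _ _ => sq_nonneg _)
  rw [Finset.sum_eq_zero_iff_of_nonneg (fun _ _ => sq_nonneg _)] at e5
  ext k
  have := e5 k (Finset.mem_univ k)
  have := pow_eq_zero_iff (two_ne_zero) |>.1 this
  simp; omega

lemma ex_inj {n : ℕ} {f g : Fin n → ℕ} (h : ex f = ex g) : f = g := by
  ext k; rw [← ex_apply f, h, ex_apply]

lemma ex_coe {n : ℕ} (m : Fin n →₀ ℕ) : ex (⇑m) = m := by ext; rfl

lemma mapDomain_ex {n : ℕ} (f : Fin n → ℕ) (v : Equiv.Perm (Fin n)) : Finsupp.mapDomain v (ex (f ∘ v)) = ex f := by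
  ext k
  obtain ⟨j, rfl⟩ := v.surjective k
  rw [Finsupp.mapDomain_apply v.injective, ex_apply, ex_apply]; rfl

lemma rename_Dl {n : ℕ} (v : Equiv.Perm (Fin n)) : rename v (Dl n) = C ((Equiv.Perm.sign v : ℤ) : ℂ) * Dl n := by
  have : (rename v : MvPolynomial (Fin n) ℂ →ₐ[ℂ] _) (Dl n) = 
    ((Matrix.vandermonde (fun k : Fin n => (X k : MvPolynomial (Fin n) ℂ))).submatrix v id).det := by
    rw [Dl, AlgHom.map_det]
    congr 1
    ext i j : 2
    simp [vandermonde_apply]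
  rw [this, Matrix.det_permute, map_intCast]; rfl

lemma anti {n : ℕ} (P : MvPolynomial (Fin n) ℂ) 
    (hs : ∀ f (v : Equiv.Perm (Fin n)), coeff (ex (f ∘ v)) P = coeff (ex f) P) (f : Fin n → ℕ) (v : Equiv.Perm (Fin n)) :
    coeff (ex (f ∘ v)) (Dl n * P) = ((Equiv.Perm.sign v : ℤ) : ℂ) * coeff (ex f) (Dl n * P) := by
  have h1 : rename v P = P := by
    ext m
    rw [← ex_coe m, ← mapDomain_ex _ v, coeff_rename_mapDomain _ v.injective, hs, mapDomain_ex]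
  rw [← coeff_rename_mapDomain v v.injective, mapDomain_ex, map_mul, h1, rename_Dl, mul_assoc, coeff_C_mul]

lemma coeff_Dl_mul {n : ℕ} (P : MvPolynomial (Fin n) ℂ) (m : Fin n →₀ ℕ) : coeff m (Dl n * P) = 
    ∑ w : Equiv.Perm (Fin n), if (ex fun k => (w k : ℕ)) ≤ m then ((Equiv.Perm.sign w : ℤ) : ℂ) * coeff (m - ex fun k => (w k : ℕ)) P else 0 := by
  rw [Dl_eq, Finset.sum_mul, coeff_sum]
  refine Finset.sum_congr rfl fun w _ => ?_
  rw [coeff_monomial_mul']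

lemma main6 (N : ℕ) (P : MvPolynomial (Fin (p + q)) ℂ)
    (hs : ∀ f (v : Equiv.Perm (Fin (p + q))), coeff (ex (f ∘ v)) P = coeff (ex f) P)
    (hb : ∀ m k, N < m k → coeff m P = 0)
    (hc : coeff (ex fun k : Fin (p + q) => if (k : ℕ) < p then 0 else N) P = 1)
    (h1 : ∑ k, th k (Dl (p + q) * P) = (q * N + ∑ j : Fin (p + q), (j : ℂ)) • (Dl (p + q) * P))
    (h2 : ∑ k, th k (th k (Dl (p + q) * P)) = 
      ((q * N) ^ 2 - N * (N + 1) * (q * (q - 1)) + 2 * ((p + q : ℕ) - 1) * (q * N) + ∑ j : Fin (p + q), (j : ℂ) ^ 2) • (Dl (p + q) * P)) :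
    Dl (p + q) * P = ∑ w : Equiv.Perm (Fin (p + q)), monomial (ex (mu N p q ∘ w)) ((Equiv.Perm.sign w : ℤ) : ℂ) := by
  classical
  have hc1 : coeff (ex (mu N p q)) (Dl (p + q) * P) = 1 := by
    rw [coeff_Dl_mul, Finset.sum_eq_single 1]
    · rw [if_pos]
      · simp only [Equiv.Perm.sign_one, Units.val_one, Int.cast_one, one_mul]
        rw [← hc]
        congr 1
        ext k
        simp only [Finsupp.tsub_apply, ex_apply, mu, Equiv.Perm.one_apply]
        split_ifs <;> omega
      · intro k
        simp only [ex_apply, mu, Equiv.Perm.one_apply]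
        split_ifs <;> omega
    · intro w _ hw
      split_ifs with h
      · by_contra hne
        apply hw
        have hne := right_ne_zero_of_mul hne
        have h3 : ∀ k, mu N p q k - (w k : ℕ) ≤ N := by
          intro k; by_contra h'; exact hne (hb _ k (by simp only [Finsupp.tsub_apply, ex_apply]; omega))
        have h4 : ∀ k, (w k : ℕ) ≤ mu N p q k := fun k => h k
        apply perm_one
        · intro k hk; have := h4 k; simpa [mu, hk] using this
        · intro k hk; have := h3 k; simp [mu, hk.not_gt] at this; omega
      · rfl
    · simp
  have key : ∀ f : Fin (p + q) → ℕ, coeff (ex f) (Dl (p + q) * P) ≠ 0 → ∃ w : Equiv.Perm (Fin (p + q)), f = mu N p q ∘ w := by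
    intro f hf
    apply comb
    · intro a b hab
      by_contra hne
      have := anti P hs f (Equiv.swap a b)
      rw [Equiv.Perm.sign_swap hne] at this
      have e : f ∘ (Equiv.swap a b) = f := by
        ext k
        simp only [Function.comp]
        rcases eq_or_ne k a with rfl | ha
        · simp [hab]
        · rcases eq_or_ne k b with rfl | hb
          · simp [hab]
          · rw [Equiv.swap_apply_of_ne_of_ne ha hb]
      rw [e] at this
      apply hf
      simp at this
      exact self_eq_neg.1 (by simpa using this)
    · intro k
      rw [coeff_Dl_mul] at hf
      obtain ⟨w, -, hw⟩ := Finset.exists_ne_zero_of_sum_ne_zero hf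
      split_ifs at hw with hle
      · have hne := right_ne_zero_of_mul hw
        have h3 : f k - (w k : ℕ) ≤ N := by
          by_contra h'; exact hne (hb _ k (by simp only [Finsupp.tsub_apply, ex_apply]; omega))
        have := (w k).2
        omega
      · exact absurd rfl hw
    · have := congrArg (coeff (ex f)) h1
      rw [coeff_sum, coeff_smul, smul_eq_mul] at this
      simp only [coeff_th, ← Finset.sum_mul, ex_apply] at this
      have := mul_right_cancel₀ hf this
      rw [← mu_sum1] at this
      exact_mod_cast this
    · have := congrArg (coeff (ex f)) h2
      rw [coeff_sum, coeff_smul, smul_eq_mul] at this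
      simp only [coeff_th, ← mul_assoc, ← Finset.sum_mul, ex_apply] at this
      have := mul_right_cancel₀ hf this
      simp only [← sq] at this
      have h5 := mu_sum2 (p := p) (q := q) N
      rw [← mul_assoc] at h5
      simp only [← mul_assoc] at h5 this
      rw [← h5] at this
      exact_mod_cast this
  ext m
  obtain ⟨f, rfl⟩ : ∃ f, m = ex f := ⟨m, (ex_coe m).symm⟩
  rw [coeff_sum]
  simp only [coeff_monomial]
  by_cases hw : ∃ w : Equiv.Perm (Fin (p + q)), f = mu N p q ∘ w
  · obtain ⟨w, rfl⟩ := hw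
    rw [anti P hs, hc1, mul_one, Finset.sum_eq_single w]
    · simp
    · intro v _ hv
      rw [if_neg]
      intro h
      apply hv
      ext k
      have := mu_inj N (congrFun (ex_inj h) k)
      rw [this]
    · simp
  · have : coeff (ex f) (Dl (p + q) * P) = 0 := by by_contra h; exact hw (key f h)
    rw [this, Finset.sum_eq_zero]
    intro v _
    rw [if_neg]
    intro h
    exact hw ⟨v, (ex_inj h).symm⟩

lemma eval6 (N : ℕ) (P : MvPolynomial (Fin (p + q)) ℂ) (x : Fin (p + q) → ℂ)
    (h : Dl (p + q) * P = ∑ w : Equiv.Perm (Fin (p + q)), monomial (ex (mu N p q ∘ w)) ((Equiv.Perm.sign w : ℤ) : ℂ)) :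
    (vandermonde x).det * eval x P = ∑ w : Equiv.Perm (Fin (p + q)), ((Equiv.Perm.sign w : ℤ) : ℂ) * ∏ k, x k ^ mu N p q (w k) := by
  have := congrArg (eval x) h
  rw [map_mul, map_sum] at this
  simp only [eval_monomial] at this
  rw [Dl, RingHom.map_det] at this
  convert this using 2
  · congr 1
    ext i j
    simp [vandermonde_apply]
  · rename_i w _
    rw [Finsupp.prod_fintype _ _ (by simp)]
    rfl

end sec6
end ACP


namespace ACP
section sec7
variable {p q : ℕ}

lemma filt1 {R : Type*} [CommMonoid R] (f : Fin (p + q) → R) : ∏ j ∈ Finset.univ.filter (fun j : Fin (p + q) => (j : ℕ) < p), f j = ∏ i : Fin p, f (Fin.castAdd q i) := by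
  rw [Finset.prod_filter, Fin.prod_univ_add]
  simp

lemma filt2 {R : Type*} [CommMonoid R] (f : Fin (p + q) → R) : ∏ j ∈ Finset.univ.filter (fun j : Fin (p + q) => p ≤ (j : ℕ)), f j = ∏ i : Fin q, f (Fin.natAdd p i) := by
  rw [Finset.prod_filter, Fin.prod_univ_add]
  have : ∀ i : Fin p, ¬ p ≤ (i : ℕ) := fun i => by omega
  simp [this]

lemma vdm_prod {n : ℕ} (y : Fin n → ℂ) : (vandermonde y).det = ∏ i, ∏ j, if i < j then y j - y i else 1 := by
  rw [det_vandermonde]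
  refine Finset.prod_congr rfl fun i _ => ?_
  rw [← Finset.prod_filter]
  refine Finset.prod_congr ?_ fun _ _ => rfl
  ext j; simp

lemma vdm_split (y : Fin (p + q) → ℂ) : (vandermonde y).det =
    (vandermonde fun i => y (Fin.castAdd q i)).det * (vandermonde fun i => y (Fin.natAdd p i)).det *
      ∏ i : Fin p, ∏ l : Fin q, (y (Fin.natAdd p l) - y (Fin.castAdd q i)) := by
  simp only [vdm_prod]
  rw [Fin.prod_univ_add]
  simp only [Fin.prod_univ_add]
  have h1 : ∀ (i : Fin p) (l : Fin q), Fin.castAdd q i < Fin.natAdd p l := by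
    intro i l; rw [Fin.lt_def]; simp; omega
  have h2 : ∀ (i : Fin p) (l : Fin q), ¬ Fin.natAdd p l < Fin.castAdd q i := by
    intro i l; exact (h1 i l).not_gt
  have h3 : ∀ (i l : Fin p), Fin.castAdd q i < Fin.castAdd q l ↔ i < l := by
    intro i l; rw [Fin.lt_def, Fin.lt_def]; simp
  have h4 : ∀ (i l : Fin q), Fin.natAdd p i < Fin.natAdd p l ↔ i < l := by
    intro i l; rw [Fin.lt_def, Fin.lt_def]; simp
  simp only [h1, h2, h3, h4, if_true, if_false, Finset.prod_const_one, one_mul, Finset.prod_mul_distrib]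
  ring

lemma vdm_sum {n : ℕ} (y : Fin n → ℂ) : (vandermonde y).det =
    ∑ w : Equiv.Perm (Fin n), ((Equiv.Perm.sign w : ℤ) : ℂ) * ∏ k, y k ^ (w k : ℕ) := by
  rw [← det_transpose, Matrix.det_apply']
  rfl

lemma vdm_perm {n : ℕ} (y : Fin n → ℂ) (w : Equiv.Perm (Fin n)) :
    (vandermonde y).det = ((Equiv.Perm.sign w : ℤ) : ℂ) * (vandermonde (y ∘ w)).det := by
  have : vandermonde (y ∘ w) = (vandermonde y).submatrix w id := by ext i j; rfl
  rw [this, Matrix.det_permute, ← mul_assoc]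
  rcases Int.units_eq_one_or (Equiv.Perm.sign w) with h | h <;> simp [h]

/-- block permutation -/
def rho (σ : Equiv.Perm (Fin p)) (τ : Equiv.Perm (Fin q)) : Equiv.Perm (Fin (p + q)) :=
  finSumFinEquiv.permCongr (Equiv.Perm.sumCongr σ τ)

lemma rho_sign (σ : Equiv.Perm (Fin p)) (τ : Equiv.Perm (Fin q)) :
    Equiv.Perm.sign (rho σ τ) = Equiv.Perm.sign σ * Equiv.Perm.sign τ := by
  rw [rho, Equiv.Perm.sign_permCongr, Equiv.Perm.sign_sumCongr]

lemma rho_left (σ : Equiv.Perm (Fin p)) (τ : Equiv.Perm (Fin q)) (i : Fin p) :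
    rho σ τ (Fin.castAdd q i) = Fin.castAdd q (σ i) := by
  simp [rho, Equiv.permCongr_apply]

lemma rho_right (σ : Equiv.Perm (Fin p)) (τ : Equiv.Perm (Fin q)) (i : Fin q) :
    rho σ τ (Fin.natAdd p i) = Fin.natAdd p (τ i) := by
  simp [rho, Equiv.permCongr_apply]

lemma term_eq (N : ℕ) (y : Fin (p + q) → ℂ) (hy : Function.Injective y) (h0 : ∀ k, y k ≠ 0) :
    (vandermonde y).det * ((∏ l : Fin q, y (Fin.natAdd p l) ^ N) *
      ∏ i : Fin p, ∏ l : Fin q, (1 - y (Fin.castAdd q i) / y (Fin.natAdd p l))⁻¹)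
    = ∑ σ : Equiv.Perm (Fin p), ∑ τ : Equiv.Perm (Fin q),
        ((Equiv.Perm.sign (rho σ τ) : ℤ) : ℂ) * ∏ k, y k ^ mu N p q (rho σ τ k) := by
  have e : (∏ i : Fin p, ∏ l : Fin q, (y (Fin.natAdd p l) - y (Fin.castAdd q i))) *
    (∏ i : Fin p, ∏ l : Fin q, (1 - y (Fin.castAdd q i) / y (Fin.natAdd p l))⁻¹)
     = ∏ l : Fin q, y (Fin.natAdd p l) ^ p := by
    simp only [← Finset.prod_mul_distrib]
    rw [Finset.prod_comm]
    refine Finset.prod_congr rfl fun l _ => ?_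
    rw [Finset.prod_eq_pow_card (b := y (Fin.natAdd p l))]
    · simp
    · intro i _
      have a := h0 (Fin.natAdd p l)
      have b : y (Fin.natAdd p l) - y (Fin.castAdd q i) ≠ 0 := by
        rw [sub_ne_zero]; intro h
        have := congrArg Fin.val (hy h)
        simp at this; omega
      have : 1 - y (Fin.castAdd q i) / y (Fin.natAdd p l) = (y (Fin.natAdd p l) - y (Fin.castAdd q i)) / y (Fin.natAdd p l) := by
        field_simp
      rw [this, inv_div, mul_div_cancel₀ _ b]
  have e2 : (vandermonde y).det * ((∏ l : Fin q, y (Fin.natAdd p l) ^ N) *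
      ∏ i : Fin p, ∏ l : Fin q, (1 - y (Fin.castAdd q i) / y (Fin.natAdd p l))⁻¹)
    = (vandermonde fun i => y (Fin.castAdd q i)).det * ((vandermonde fun i => y (Fin.natAdd p i)).det *
       ∏ l : Fin q, y (Fin.natAdd p l) ^ (p + N)) := by
    simp only [pow_add, Finset.prod_mul_distrib]
    rw [← e, vdm_split]; ring
  rw [e2, vdm_sum, vdm_sum, ← mul_assoc, Finset.sum_mul_sum, Finset.sum_mul]
  simp only [Finset.sum_mul]
  refine Finset.sum_congr rfl fun σ _ => Finset.sum_congr rfl fun τ _ => ?_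
  rw [rho_sign, Fin.prod_univ_add]
  simp only [rho_left, rho_right]
  have a1 : ∀ i : Fin p, mu N p q (Fin.castAdd q (σ i)) = σ i := by intro i; simp [mu]
  have a2 : ∀ i : Fin q, mu N p q (Fin.natAdd p (τ i)) = τ i + (p + N) := by intro i; simp [mu]; ring
  simp only [a1, a2, pow_add _ _ (p + N), Finset.prod_mul_distrib]
  push_cast
  ring

lemma rhs_eq (N : ℕ) (x : Fin (p + q) → ℂ) (hx : Function.Injective x) (h0 : ∀ k, x k ≠ 0) :
    (vandermonde x).det * ∑ w : Equiv.Perm (Fin (p + q)), ((∏ l : Fin q, x (w (Fin.natAdd p l)) ^ N) *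
      ∏ i : Fin p, ∏ l : Fin q, (1 - x (w (Fin.castAdd q i)) / x (w (Fin.natAdd p l)))⁻¹)
    = p.factorial * q.factorial *
      ∑ w : Equiv.Perm (Fin (p + q)), ((Equiv.Perm.sign w : ℤ) : ℂ) * ∏ k, x k ^ mu N p q (w k) := by
  rw [Finset.mul_sum]
  have : ∀ w : Equiv.Perm (Fin (p + q)), (vandermonde x).det * ((∏ l : Fin q, x (w (Fin.natAdd p l)) ^ N) *
      ∏ i : Fin p, ∏ l : Fin q, (1 - x (w (Fin.castAdd q i)) / x (w (Fin.natAdd p l)))⁻¹)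
      = ∑ σ : Equiv.Perm (Fin p), ∑ τ : Equiv.Perm (Fin q), ((Equiv.Perm.sign (rho σ τ * w⁻¹) : ℤ) : ℂ)
        * ∏ k, x k ^ mu N p q ((rho σ τ * w⁻¹) k) := by
    intro w
    rw [vdm_perm x w, mul_assoc]
    have := term_eq N (x ∘ w) (hx.comp w.injective) (fun k => h0 _)
    simp only [Function.comp_apply] at this
    rw [this, Finset.mul_sum]
    refine Finset.sum_congr rfl fun σ _ => ?_
    rw [Finset.mul_sum]
    refine Finset.sum_congr rfl fun τ _ => ?_
    rw [← mul_assoc]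
    congr 1
    · rw [Equiv.Perm.sign_mul, Equiv.Perm.sign_inv]; push_cast; ring
    · rw [← Equiv.prod_comp w (fun k => x k ^ mu N p q ((rho σ τ * w⁻¹) k))]
      simp
  simp only [this]
  rw [Finset.sum_comm]
  rw [Finset.sum_congr rfl fun σ _ => Finset.sum_comm]
  have h2 : ∀ ρ : Equiv.Perm (Fin (p + q)), ∑ w : Equiv.Perm (Fin (p + q)), ((Equiv.Perm.sign (ρ * w⁻¹) : ℤ) : ℂ)
        * ∏ k, x k ^ mu N p q ((ρ * w⁻¹) k) = ∑ w : Equiv.Perm (Fin (p + q)), ((Equiv.Perm.sign w : ℤ) : ℂ) * ∏ k, x k ^ mu N p q (w k) := by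
    intro ρ
    exact Equiv.sum_comp ((Equiv.inv _).trans (Equiv.mulLeft ρ)) (fun w : Equiv.Perm (Fin (p + q)) => ((Equiv.Perm.sign w : ℤ) : ℂ) * ∏ k, x k ^ mu N p q (w k))
  simp only [h2, Finset.sum_const, Finset.card_univ, Fintype.card_perm, Fintype.card_fin, nsmul_eq_mul, mul_assoc]

end sec7
end ACP

namespace ACP
section sec8
variable {N : ℕ}

lemma compactU (N : ℕ) : CompactSpace (unitaryGroup (Fin N) ℂ) := by
  have hc : IsClosed ((unitaryGroup (Fin N) ℂ : Set (Matrix (Fin N) (Fin N) ℂ))) := by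
    have : ((unitaryGroup (Fin N) ℂ : Set (Matrix (Fin N) (Fin N) ℂ))) = {M | M * star M = 1} := by
      ext M; exact mem_unitaryGroup_iff
    rw [this]
    exact isClosed_eq (by fun_prop) (by fun_prop)
  have hk : IsCompact (Set.pi Set.univ (fun _ : Fin N => Set.pi Set.univ (fun _ : Fin N => Metric.closedBall (0 : ℂ) 1))) :=
    isCompact_univ_pi fun _ => isCompact_univ_pi fun _ => isCompact_closedBall _ _
  have : IsCompact ((unitaryGroup (Fin N) ℂ : Set (Matrix (Fin N) (Fin N) ℂ))) := by
    refine IsCompact.of_isClosed_subset (X := Fin N → Fin N → ℂ) hk hc ?_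
    intro M hM i _ j _
    simpa using entry_norm_bound_of_unitary hM i j
  exact isCompact_iff_compactSpace.1 this

/-- generic unitary matrix -/
def uu (N : ℕ) : Matrix (Fin N) (Fin N) C(unitaryGroup (Fin N) ℂ, ℂ) :=
  fun i j => ⟨fun v => (v : Matrix (Fin N) (Fin N) ℂ) i j,
    (continuous_apply_apply i j).comp continuous_subtype_val⟩

/-- the twist -/
noncomputable def chi (N q : ℕ) (v : unitaryGroup (Fin N) ℂ) : ℂ :=
  ((-1) ^ N * star (v : Matrix (Fin N) (Fin N) ℂ).det) ^ q

lemma chi_cont (N q : ℕ) : Continuous (chi N q) := by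
  unfold chi
  have : Continuous fun v : unitaryGroup (Fin N) ℂ => (v : Matrix (Fin N) (Fin N) ℂ).det :=
    Continuous.matrix_det continuous_subtype_val
  fun_prop

lemma integ (μ : Measure (unitaryGroup (Fin N) ℂ)) [IsFiniteMeasureOnCompacts μ] (f : unitaryGroup (Fin N) ℂ → ℂ)
    (hf : Continuous f) : Integrable f μ := by
  have := compactU N
  exact hf.integrable_of_hasCompactSupport (HasCompactSupport.of_compactSpace f)

/-- the functional -/
noncomputable def LL (q : ℕ) (μ : Measure (unitaryGroup (Fin N) ℂ)) [IsFiniteMeasureOnCompacts μ] :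
    C(unitaryGroup (Fin N) ℂ, ℂ) →ₗ[ℂ] ℂ where
  toFun f := ∫ v, f v * chi N q v ∂μ
  map_add' f g := by
    have := integral_add (f := fun v => f v * chi N q v) (g := fun v => g v * chi N q v)
      (integ μ _ (f.continuous.mul (chi_cont N q))) (integ μ _ (g.continuous.mul (chi_cont N q)))
    simpa [add_mul] using this
  map_smul' c f := by
    simp only [ContinuousMap.smul_apply, smul_eq_mul, mul_assoc, integral_const_mul, RingHom.id_apply]

lemma LL_apply (q : ℕ) (μ : Measure (unitaryGroup (Fin N) ℂ)) [IsFiniteMeasureOnCompacts μ]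
    (f : C(unitaryGroup (Fin N) ℂ, ℂ)) : LL q μ f = ∫ v, f v * chi N q v ∂μ := rfl

lemma det_star (h : Matrix (Fin N) (Fin N) ℂ) (hh : h ∈ unitaryGroup (Fin N) ℂ) : h.det * star h.det = 1 :=
  Unitary.mul_star_self_of_mem (det_of_mem_unitary hh)

lemma chi_mul (q : ℕ) (h v : unitaryGroup (Fin N) ℂ) :
    chi N q v = (h : Matrix (Fin N) (Fin N) ℂ).det ^ q * chi N q (h * v) := by
  simp only [chi, ← mul_pow]
  congr 1
  have := det_star _ h.2
  simp only [UnitaryGroup.mul_val, det_mul, star_mul']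
  linear_combination (- (-1) ^ N * star (v : Matrix (Fin N) (Fin N) ℂ).det) * this

lemma cov (q : ℕ) (μ : Measure (unitaryGroup (Fin N) ℂ)) [μ.IsHaarMeasure] : Cov (uu N) (LL q μ) q := by
  intro h hh
  let c : C(unitaryGroup (Fin N) ℂ, unitaryGroup (Fin N) ℂ) := ⟨fun v => ⟨h, hh⟩ * v, continuous_const.mul continuous_id⟩
  refine ⟨ContinuousMap.compRightAlgHom ℂ ℂ c, ?_, ?_⟩
  · ext i j v
    simp [uu, mul_apply, c, ContinuousMap.sum_apply]
  · intro a
    rw [LL_apply, LL_apply, ← integral_const_mul,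
      ← integral_mul_left_eq_self (fun v => h.det ^ q * (a v * chi N q v)) ⟨h, hh⟩]
    congr 1
    ext v
    rw [chi_mul q ⟨h, hh⟩ v]
    simp [c]
    ring

lemma eval_fk_gen {σ A : Type*} [Fintype σ] [DecidableEq σ] [CommRing A] [Algebra ℂ A] (u : Matrix (Fin N) (Fin N) A) (a : σ → A) (k : σ) :
    MvPolynomial.eval a (fk u k) = (1 - a k • u).det := by
  rw [fk, RingHom.map_det]
  congr 1
  ext i j
  by_cases h : i = j <;> simp [Mm, Matrix.one_apply, h]

lemma eval_fk {σ : Type*} [Fintype σ] [DecidableEq σ] (x : σ → ℂ) (v : unitaryGroup (Fin N) ℂ) :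
    (MvPolynomial.eval (fun k => algebraMap ℂ C(unitaryGroup (Fin N) ℂ, ℂ) (x k)) (∏ k, fk (uu N) k)) v
      = ∏ k, (1 - x k • (v : Matrix (Fin N) (Fin N) ℂ)).det := by
  have : ∀ f : C(unitaryGroup (Fin N) ℂ, ℂ), f v = ContinuousMap.evalAlgHom ℂ ℂ v f := fun f => rfl
  rw [this, map_prod, map_prod]
  refine Finset.prod_congr rfl fun k _ => ?_
  refine (congrArg _ (eval_fk_gen _ _ k)).trans ?_
  rw [AlgHom.map_det]
  congr 1
  ext i j
  by_cases h : i = j <;> simp [Matrix.one_apply, h, uu]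

lemma det_conj (v : unitaryGroup (Fin N) ℂ) (x : ℂ) :
    (x • (1 : Matrix (Fin N) (Fin N) ℂ) - (v : Matrix (Fin N) (Fin N) ℂ).map (starRingEnd ℂ)).det
      = (1 - x • (v : Matrix (Fin N) (Fin N) ℂ)).det * ((-1) ^ N * star (v : Matrix (Fin N) (Fin N) ℂ).det) := by
  have hv : star (v : Matrix (Fin N) (Fin N) ℂ) * v = 1 := mem_unitaryGroup_iff'.1 v.2
  have h1 : (x • (1 : Matrix (Fin N) (Fin N) ℂ) - (v : Matrix (Fin N) (Fin N) ℂ).map (starRingEnd ℂ))ᵀ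
     = star (v : Matrix (Fin N) (Fin N) ℂ) * -(1 - x • (v : Matrix (Fin N) (Fin N) ℂ)) := by
    rw [mul_neg, mul_sub, mul_one, mul_smul_comm, hv, neg_sub, transpose_sub, transpose_smul, transpose_one]
    rfl
  rw [← det_transpose, h1, det_mul, det_neg, star_eq_conjTranspose, det_conjTranspose]
  simp
  ring

lemma mainint (p q : ℕ) (x : Fin (p + q) → ℂ) (μ : Measure (unitaryGroup (Fin N) ℂ)) [μ.IsHaarMeasure]
    [IsProbabilityMeasure μ] :
    (vandermonde x).det * ∫ v : unitaryGroup (Fin N) ℂ, (∏ k, (1 - x k • (v : Matrix (Fin N) (Fin N) ℂ)).det) * chi N q v ∂μ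
     = ∑ w : Equiv.Perm (Fin (p + q)), ((Equiv.Perm.sign w : ℤ) : ℂ) * ∏ k, x k ^ mu N p q (w k) := by
  set P := lft (LL q μ) (∏ k : Fin (p + q), fk (uu N) k) with hP
  have e : MvPolynomial.eval x P = ∫ v : unitaryGroup (Fin N) ℂ, (∏ k, (1 - x k • (v : Matrix (Fin N) (Fin N) ℂ)).det) * chi N q v ∂μ := by
    rw [hP, lft_eval, LL_apply]
    simp only [eval_fk]
  rw [← e]
  apply eval6
  have c1 := cas1 (σ := Fin (p + q)) (uu N) (LL q μ) q (cov q μ)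
  have c2 := cas2 (σ := Fin (p + q)) (uu N) (LL q μ) q (cov q μ)
  have hcoeff : ∀ m, MvPolynomial.coeff m P = LL q μ (∏ k, (uu N).charpolyRev.coeff (m k)) := by
    intro m; rw [hP, coeff_lft, coeff_f]
  apply main6
  · intro f v
    rw [hcoeff, hcoeff]
    congr 1
    exact Equiv.prod_comp v (fun k => (uu N).charpolyRev.coeff (f k))
  · intro m k hk
    rw [hcoeff, Finset.prod_eq_zero (Finset.mem_univ k), map_zero]
    exact Polynomial.coeff_eq_zero_of_natDegree_lt ((charpolyRev_natDegree _).trans_lt hk)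
  · rw [hcoeff, Fin.prod_univ_add]
    simp only [ex_apply, Fin.val_castAdd, Fin.is_lt, if_true, charpolyRev_coeff_zero, Fin.val_natAdd]
    simp only [Nat.not_lt.2 (Nat.le_add_right _ _), if_false, charpolyRev_coeff_top, Finset.prod_const_one, one_mul,
      Finset.prod_const, Finset.card_univ, Fintype.card_fin]
    rw [LL_apply]
    have : ∀ v : unitaryGroup (Fin N) ℂ, (((-1) ^ N * (uu N).det) ^ q : C(unitaryGroup (Fin N) ℂ, ℂ)) v * chi N q v = 1 := by
      intro v
      have h1 : (uu N).det v = (v : Matrix (Fin N) (Fin N) ℂ).det := by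
        have : ∀ f : C(unitaryGroup (Fin N) ℂ, ℂ), f v = ContinuousMap.evalAlgHom ℂ ℂ v f := fun f => rfl
        rw [this, AlgHom.map_det]; rfl
      have h2 := det_star _ v.2
      rw [ContinuousMap.pow_apply, ContinuousMap.mul_apply, chi, ← mul_pow, h1]
      have h3 : (((-1) ^ N : C(unitaryGroup (Fin N) ℂ, ℂ)) v) = (-1) ^ N := by simp
      have h4 : ((-1 : ℂ) ^ N) * (-1) ^ N = 1 := by rw [← mul_pow]; simp
      rw [h3, show ∀ a b c : ℂ, a * b * (a * c) = (a * a) * (b * c) by intros; ring, h4, h2]; simp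
    simp only [this]
    simp
  · exact conj1 _ _ c1
  · exact conj2 _ (Zz (uu N) (LL q μ)) _ _ c1 c2 (fun k l h => Zz_eq _ _ h)

end sec8
end ACP

/-- **Compact sector** (Eq. 1.9): the Haar-average over `U(N)` of a product of `p`
characteristic polynomials and `q` conjugate characteristic polynomials is given by
the Weyl character formula for `U(p+q)`. -/
theorem autocorrelation_products_charpoly_unitary
    (N p q : ℕ) (hN : 1 ≤ N) (hp : 1 ≤ p) (hq : 1 ≤ q)
    (ψ : Fin (p + q) → ℂ)
    (hdist : Function.Injective fun k : Fin (p + q) => Complex.exp (Complex.I * ψ k))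
    (μ : Measure (Matrix.unitaryGroup (Fin N) ℂ))
    [μ.IsHaarMeasure] [IsProbabilityMeasure μ] :
    (∫ u : Matrix.unitaryGroup (Fin N) ℂ,
      (∏ j ∈ Finset.univ.filter (fun j : Fin (p + q) => (j : ℕ) < p),
          Matrix.det (1 - Complex.exp (Complex.I * ψ j) • (u : Matrix (Fin N) (Fin N) ℂ))) *
        (∏ l ∈ Finset.univ.filter (fun l : Fin (p + q) => p ≤ (l : ℕ)),
          Matrix.det (Complex.exp (Complex.I * ψ l) • (1 : Matrix (Fin N) (Fin N) ℂ) -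
            (u : Matrix (Fin N) (Fin N) ℂ).map (starRingEnd ℂ))) ∂μ)
    = (1 / ((p.factorial : ℂ) * (q.factorial : ℂ))) *
        ∑ w : Equiv.Perm (Fin (p + q)),
          (∏ l ∈ Finset.univ.filter (fun l : Fin (p + q) => p ≤ (l : ℕ)),
              Complex.exp ((N : ℂ) * Complex.I * ψ (w l))) *
            ∏ j ∈ Finset.univ.filter (fun j : Fin (p + q) => (j : ℕ) < p),
              ∏ l ∈ Finset.univ.filter (fun l : Fin (p + q) => p ≤ (l : ℕ)),
                (1 - Complex.exp (Complex.I * ψ (w j) - Complex.I * ψ (w l)))⁻¹ := by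
  set x : Fin (p + q) → ℂ := fun k => Complex.exp (Complex.I * ψ k) with hx
  have e1 : ∀ k, Complex.exp ((N : ℂ) * Complex.I * ψ k) = x k ^ N := by
    intro k; rw [hx, mul_assoc, Complex.exp_nat_mul]
  have e2 : ∀ k l, Complex.exp (Complex.I * ψ k - Complex.I * ψ l) = x k / x l := by
    intro k l; rw [Complex.exp_sub]
  have h0 : ∀ k, x k ≠ 0 := fun k => Complex.exp_ne_zero _
  have hV : (vandermonde x).det ≠ 0 := det_vandermonde_ne_zero_iff.2 hdist
  have hi : ∀ u : Matrix.unitaryGroup (Fin N) ℂ,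
      (∏ j ∈ Finset.univ.filter (fun j : Fin (p + q) => (j : ℕ) < p),
          Matrix.det (1 - x j • (u : Matrix (Fin N) (Fin N) ℂ))) *
        (∏ l ∈ Finset.univ.filter (fun l : Fin (p + q) => p ≤ (l : ℕ)),
          Matrix.det (x l • (1 : Matrix (Fin N) (Fin N) ℂ) -
            (u : Matrix (Fin N) (Fin N) ℂ).map (starRingEnd ℂ)))
      = (∏ k, (1 - x k • (u : Matrix (Fin N) (Fin N) ℂ)).det) * ACP.chi N q u := by
    intro u
    rw [ACP.filt1, ACP.filt2, Fin.prod_univ_add]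
    simp only [ACP.det_conj, Finset.prod_mul_distrib, Finset.prod_const, Finset.card_univ, Fintype.card_fin, ACP.chi]
    rw [mul_pow]
    ring
  change (∫ u : Matrix.unitaryGroup (Fin N) ℂ,
      (∏ j ∈ Finset.univ.filter (fun j : Fin (p + q) => (j : ℕ) < p),
          Matrix.det (1 - x j • (u : Matrix (Fin N) (Fin N) ℂ))) *
        (∏ l ∈ Finset.univ.filter (fun l : Fin (p + q) => p ≤ (l : ℕ)),
          Matrix.det (x l • (1 : Matrix (Fin N) (Fin N) ℂ) -
            (u : Matrix (Fin N) (Fin N) ℂ).map (starRingEnd ℂ))) ∂μ) = _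
  simp only [hi, e1, e2]
  simp only [ACP.filt1, ACP.filt2]
  apply mul_left_cancel₀ hV
  rw [ACP.mainint, mul_left_comm, ACP.rhs_eq N x hdist h0]
  have f1 : (p.factorial : ℂ) ≠ 0 := by exact_mod_cast p.factorial_ne_zero
  have f2 : (q.factorial : ℂ) ≠ 0 := by exact_mod_cast q.factorial_ne_zero
  field_simp
end
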